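/- Let d ≥ 3 and 1 < α < d/2, and let c > 𝔼[z(0)] (which is finite since α > 1). Then ℙ-almost surely, as t → ∞, P₀(A(t) ≥ ct) = t^{−α+1+o(1)} and P₀(A(t) ≥ ct, S_t = 0) = t^{−α+1−d/2+o(1)} (in the sense of logarithmic equivalence: log P₀(A(t) ≥ ct)/log t → −α+1 and log P₀(A(t) ≥ ct, S_t = 0)/log t → −α+1−d/2). -/

import Mathlib

open MeasureTheory ProbabilityTheory Filter Set

noncomputable section

/-- `n`-step transition probabilities of the discrete-time simple random walk on `ℤ^m`. -/
def srwKernel (m : ℕ) : ℕ → (Fin m → ℤ) → (Fin m → ℤ) → ℝ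
  | 0, x, y => if x = y then 1 else 0
  | n + 1, x, y =>
      (∑ i : Fin m, (srwKernel m n (Function.update x i (x i + 1)) y
        + srwKernel m n (Function.update x i (x i - 1)) y)) / (2 * m)

/-- Transition kernel of the continuous-time simple random walk on `ℤ^m` which jumps to
each of its `2m` nearest neighbours at rate `1` (total jump rate `2m`). -/
def heatKernel (m : ℕ) (t : ℝ) (x y : Fin m → ℤ) : ℝ :=
  ∑' n : ℕ, Real.exp (-(2 * m) * t) * ((2 * m) * t) ^ n / n.factorial * srwKernel m n x y

/-- `(P, S)` is (a realization of) the continuous-time simple random walk on `ℤ^m`: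
under `P x` the process `S` starts at `x`, has right-continuous (piecewise constant)
paths, and its finite-dimensional distributions are given by the heat kernel. -/
structure IsCTSRW (m : ℕ) {Ω : Type*} [MeasurableSpace Ω]
    (P : (Fin m → ℤ) → Measure Ω) (S : ℝ → Ω → (Fin m → ℤ)) : Prop where
  prob : ∀ x, IsProbabilityMeasure (P x)
  meas : Measurable fun p : ℝ × Ω => S p.1 p.2
  start : ∀ x, ∀ᵐ ω ∂ P x, S 0 ω = x
  rightCont : ∀ x, ∀ᵐ ω ∂ P x, ∀ t : ℝ, 0 ≤ t →
    ∃ ε > (0 : ℝ), ∀ u, t ≤ u → u < t + ε → S u ω = S t ω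
  fdd : ∀ x (n : ℕ) (t : Fin (n + 1) → ℝ), 0 ≤ t 0 →
    (∀ i : Fin n, t i.castSucc ≤ t i.succ) →
    ∀ y : Fin (n + 1) → (Fin m → ℤ),
      (P x {ω | ∀ i, S (t i) ω = y i}).toReal
        = heatKernel m (t 0) x (y 0)
          * ∏ i : Fin n, heatKernel m (t i.succ - t i.castSucc) (y i.castSucc) (y i.succ)

/-- `z` is an i.i.d. nonnegative random scenery on `ℤ^d` whose common upper tail decays
like `r^{-α+o(1)}`. -/
structure IsScenery (d : ℕ) (α : ℝ) {Ω : Type*} [MeasurableSpace Ω]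
    (μ : Measure Ω) (z : (Fin d → ℤ) → Ω → ℝ) : Prop where
  prob : IsProbabilityMeasure μ
  meas : ∀ x, Measurable (z x)
  nonneg : ∀ x ω, 0 ≤ z x ω
  indep : iIndepFun z μ
  ident : ∀ x, IdentDistrib (z x) (z 0) μ μ
  tail : Tendsto (fun r : ℝ => Real.log (μ {ω | r < z 0 ω}).toReal / Real.log r)
    atTop (nhds (-α))

/-- The random walk in random scenery `A(t) = ∫₀ᵗ z(S_u) du`. -/
def rwrs {Ωz Ωw : Type*} (d : ℕ) (z : (Fin d → ℤ) → Ωz → ℝ)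
    (S : ℝ → Ωw → (Fin d → ℤ)) (t : ℝ) (ζ : Ωz) (ω : Ωw) : ℝ :=
  ∫ u in Set.Ioc (0 : ℝ) t, z (S u ω) ζ

end

open MeasureTheory ProbabilityTheory Filter Set

/-!
Split the scenery at the level `t ^ (1 - δ)`. Since `d ≥ 3`, moments of the number of visits are
controlled by the Green function, so the local times of the walk up to time `t` are `t ^ o(1)`
outside an event of super-polynomially small probability; a Chernoff bound over the scenery then
shows that the values below the level keep `A(t) / t` close to their mean, also with
super-polynomially small failure probability. The values above the level contribute at most
`t ^ (2 - α + o(1))` to `A(t)` on average, and Markov's inequality gives the upper bound; the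
condition `S_t = 0` costs a factor `t ^ (-d / 2)`, by splitting the path at `t / 2` and reversing
the second half. Along dyadic times the Borel–Cantelli lemma turns averages over the scenery into
almost sure bounds.

For the lower bound, take `N` of order `t` and let `H` be the set of sites `y` with `z y > C₀ * N`
in the box of side `√N`, so that `#H = N ^ (d / 2 - α + o(1))`. If the walk stays for a time of
order one at some site of `H` during `[N, 2 * N]`, then `A(t) ≥ c * t`. By the second-moment method
this has probability of order `N ^ (1 - d / 2) * (#H) ^ 2 / E(H)`, where the Green energy
`E(H) = ∑ y ∈ H, ∑ y' ∈ H, G(y, y')` is comparable to `#H` because `H` is sparse. The bridge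
version is the same computation with the further factor `N ^ (-d / 2)`.
-/
/-! ### Fourier representation of the heat kernel -/

section Fourier

/-- The uniform probability measure on the circle, represented on `(-π, π]`. -/
noncomputable def uniformAngle : Measure ℝ := volume[|Ioc (-Real.pi) Real.pi]

instance : IsProbabilityMeasure uniformAngle := by
  refine cond_isProbabilityMeasure_of_finite ?_ ?_ <;> simp [Real.volume_Ioc, Real.pi_pos]

lemma uniformAngle_eq_smul :
    uniformAngle = ENNReal.ofReal (2 * Real.pi)⁻¹ • volume.restrict (Ioc (-Real.pi) Real.pi) := by
  rw [uniformAngle, ProbabilityTheory.cond, Real.volume_Ioc, sub_neg_eq_add, ← two_mul,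
    ENNReal.ofReal_inv_of_pos (by positivity)]

lemma integral_uniformAngle (f : ℝ → ℝ) :
    ∫ θ, f θ ∂uniformAngle = (2 * Real.pi)⁻¹ * ∫ θ in Ioc (-Real.pi) Real.pi, f θ := by
  rw [uniformAngle_eq_smul, integral_smul_measure, ENNReal.toReal_ofReal (by positivity),
    smul_eq_mul]

lemma ae_uniformAngle_abs_le_pi : ∀ᵐ θ ∂uniformAngle, |θ| ≤ Real.pi := by
  rw [uniformAngle_eq_smul]
  refine Measure.ae_smul_measure ?_ _
  filter_upwards [ae_restrict_mem measurableSet_Ioc] with θ hθ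
  exact abs_le.2 ⟨hθ.1.le, hθ.2⟩

lemma integral_uniformAngle_le {f : ℝ → ℝ} (hf : Integrable f) (h0 : 0 ≤ f) :
    ∫ θ, f θ ∂uniformAngle ≤ (2 * Real.pi)⁻¹ * ∫ θ, f θ := by
  rw [integral_uniformAngle]
  exact mul_le_mul_of_nonneg_left (setIntegral_le_integral hf (Eventually.of_forall h0))
    (by positivity)

lemma integral_cos_int_mul_uniformAngle (n : ℤ) :
    ∫ θ, Real.cos (n * θ) ∂uniformAngle = if n = 0 then 1 else 0 := by
  rw [integral_uniformAngle, ← intervalIntegral.integral_of_le (by linarith [Real.pi_pos])]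
  split_ifs with h
  · have := Real.pi_pos
    simp only [h, Int.cast_zero, zero_mul, Real.cos_zero, intervalIntegral.integral_const,
      smul_eq_mul]
    field_simp
    ring
  · rw [intervalIntegral.integral_comp_mul_left _ (Int.cast_ne_zero.2 h), integral_cos, mul_neg,
      Real.sin_neg, Real.sin_int_mul_pi]
    simp

variable (m : ℕ)

/-- The product `∏ᵢ cos (wᵢ θᵢ)`: the part of the character `θ ↦ exp (i w·θ)` that is even in every
coordinate, the only part seen by a walk invariant under the reflections of `ℤ^m`. -/
noncomputable def cosProd (w : Fin m → ℤ) (θ : Fin m → ℝ) : ℝ := ∏ i, Real.cos (w i * θ i)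

/-- The characteristic function of one step of the simple random walk on `ℤ^m`. -/
noncomputable def stepCharFun (θ : Fin m → ℝ) : ℝ := (∑ i, 2 * Real.cos (θ i)) / (2 * m)

variable {m}

lemma abs_cosProd_le_one (w : Fin m → ℤ) (θ : Fin m → ℝ) : |cosProd m w θ| ≤ 1 := by
  rw [cosProd, Finset.abs_prod]
  exact Finset.prod_le_one (fun _ _ => abs_nonneg _) fun _ _ => Real.abs_cos_le_one _

lemma abs_stepCharFun_le_one (θ : Fin m → ℝ) : |stepCharFun m θ| ≤ 1 := by
  rw [stepCharFun, abs_div, abs_of_nonneg (by positivity : (0 : ℝ) ≤ 2 * m)]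
  refine div_le_one_of_le₀ ((Finset.abs_sum_le_sum_abs _ _).trans ?_) (by positivity)
  calc ∑ i, |2 * Real.cos (θ i)| ≤ ∑ _i : Fin m, (2 : ℝ) := by
        refine Finset.sum_le_sum fun i _ => ?_
        rw [abs_mul, abs_two]
        linarith [Real.abs_cos_le_one (θ i)]
    _ = 2 * m := by simp [mul_comm]

lemma cosProd_update_add_cosProd_update (x y : Fin m → ℤ) (i : Fin m) (θ : Fin m → ℝ) :
    cosProd m (Function.update x i (x i + 1) - y) θ
        + cosProd m (Function.update x i (x i - 1) - y) θ
      = 2 * Real.cos (θ i) * cosProd m (x - y) θ := by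
  have erase_update (a : ℤ) :
      ∏ j ∈ Finset.univ.erase i, Real.cos (((Function.update x i a - y) j : ℤ) * θ j)
        = ∏ j ∈ Finset.univ.erase i, Real.cos (((x - y) j : ℤ) * θ j) :=
    Finset.prod_congr rfl fun j hj => by simp [Function.update_of_ne (Finset.ne_of_mem_erase hj)]
  simp only [cosProd, ← Finset.mul_prod_erase _ _ (Finset.mem_univ i), erase_update]
  rw [← add_mul, ← mul_assoc]
  simp only [Pi.sub_apply, Function.update_self]
  congr 1
  have add_one : ((x i + 1 - y i : ℤ) : ℝ) * θ i = ((x i - y i : ℤ) : ℝ) * θ i + θ i := by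
    push_cast; ring
  have sub_one : ((x i - 1 - y i : ℤ) : ℝ) * θ i = ((x i - y i : ℤ) : ℝ) * θ i - θ i := by
    push_cast; ring
  rw [add_one, sub_one, Real.cos_add, Real.cos_sub]
  ring

lemma abs_stepCharFun_pow_mul_cosProd_le_one (n : ℕ) (w : Fin m → ℤ) (θ : Fin m → ℝ) :
    |stepCharFun m θ ^ n * cosProd m w θ| ≤ 1 := by
  rw [abs_mul, abs_pow]
  exact mul_le_one₀ (pow_le_one₀ (abs_nonneg _) (abs_stepCharFun_le_one θ)) (abs_nonneg _)
    (abs_cosProd_le_one w θ)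

lemma integrable_stepCharFun_pow_mul_cosProd (n : ℕ) (w : Fin m → ℤ) :
    Integrable (fun θ => stepCharFun m θ ^ n * cosProd m w θ)
      (Measure.pi fun _ : Fin m => uniformAngle) :=
  .of_bound (by unfold stepCharFun cosProd; fun_prop) 1
    (Eventually.of_forall (abs_stepCharFun_pow_mul_cosProd_le_one n w))

theorem srwKernel_eq_integral (n : ℕ) (x y : Fin m → ℤ) :
    srwKernel m n x y = ∫ θ, stepCharFun m θ ^ n * cosProd m (x - y) θ
      ∂(Measure.pi fun _ : Fin m => uniformAngle) := by
  induction n generalizing x with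
  | zero =>
    simp only [srwKernel, pow_zero, one_mul, cosProd]
    rw [integral_fintype_prod_eq_prod (μ := fun _ : Fin m => uniformAngle)
      (fun i (u : ℝ) => Real.cos (((x - y) i : ℤ) * u))]
    simp only [integral_cos_int_mul_uniformAngle]
    split_ifs with h
    · simp [h]
    · obtain ⟨i, hi⟩ := Function.ne_iff.1 h
      refine (Finset.prod_eq_zero (Finset.mem_univ i) (if_neg ?_)).symm
      simpa [sub_eq_zero] using hi
  | succ n ih =>
    have h_int (w : Fin m → ℤ) := integrable_stepCharFun_pow_mul_cosProd n w
    simp only [srwKernel, ih, ← integral_add (h_int _) (h_int _)]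
    rw [← integral_finsetSum _ fun i _ => (h_int _).fun_add (h_int _), ← integral_div]
    congr 1 with θ
    simp_rw [← mul_add, cosProd_update_add_cosProd_update]
    rw [← Finset.mul_sum, ← Finset.sum_mul, pow_succ, stepCharFun]
    ring

lemma srwKernel_nonneg (n : ℕ) (x y : Fin m → ℤ) : 0 ≤ srwKernel m n x y := by
  induction n generalizing x with
  | zero => simp only [srwKernel]; positivity
  | succ n ih =>
    exact div_nonneg (Finset.sum_nonneg fun i _ => add_nonneg (ih _) (ih _)) (by positivity)

lemma srwKernel_le_one (n : ℕ) (x y : Fin m → ℤ) : srwKernel m n x y ≤ 1 := by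
  have h := norm_integral_le_of_norm_le_const (μ := Measure.pi fun _ : Fin m => uniformAngle)
    (f := fun θ => stepCharFun m θ ^ n * cosProd m (x - y) θ)
    (Eventually.of_forall (abs_stepCharFun_pow_mul_cosProd_le_one n (x - y)))
  rw [← srwKernel_eq_integral, probReal_univ, mul_one] at h
  exact (le_abs_self _).trans h

/-- The characteristic function at time `t` of the continuous-time walk on `ℤ` that jumps to each of
its two neighbours at rate `1`. -/
noncomputable def walkCharFun (t θ : ℝ) : ℝ := Real.exp (2 * t * (Real.cos θ - 1))

/-- The heat kernel of the continuous-time simple random walk on `ℤ`, as a Fourier integral. -/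
noncomputable def heatKernelOne (t : ℝ) (n : ℤ) : ℝ :=
  ∫ θ, walkCharFun t θ * Real.cos (n * θ) ∂uniformAngle

lemma heatKernelOne_neg (t : ℝ) (n : ℤ) : heatKernelOne t (-n) = heatKernelOne t n := by
  simp [heatKernelOne]

lemma hasSum_poisson_mul_stepCharFun (t : ℝ) (w : Fin m → ℤ) (θ : Fin m → ℝ) :
    HasSum (fun n : ℕ => Real.exp (-(2 * m) * t) * (2 * m * t) ^ n / n.factorial
        * (stepCharFun m θ ^ n * cosProd m w θ))
      (∏ i, walkCharFun t (θ i) * Real.cos (w i * θ i)) := by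
  have hexp : HasSum (fun n : ℕ => (2 * m * t * stepCharFun m θ) ^ n / n.factorial)
      (Real.exp (2 * m * t * stepCharFun m θ)) := by
    rw [Real.exp_eq_exp_ℝ]
    exact NormedSpace.expSeries_div_hasSum_exp _
  have hval : Real.exp (-(2 * m) * t) * cosProd m w θ * Real.exp (2 * m * t * stepCharFun m θ)
      = ∏ i, walkCharFun t (θ i) * Real.cos (w i * θ i) := by
    have hexponent : -(2 * m) * t + 2 * m * t * stepCharFun m θ
        = ∑ i, 2 * t * (Real.cos (θ i) - 1) := by
      rcases m.eq_zero_or_pos with rfl | hm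
      · simp
      · rw [stepCharFun, ← Finset.mul_sum, ← Finset.mul_sum, Finset.sum_sub_distrib]
        simp only [Finset.sum_const, Finset.card_univ, Fintype.card_fin, nsmul_eq_mul, mul_one]
        field_simp
        ring
    simp only [walkCharFun, Finset.prod_mul_distrib]
    rw [← Real.exp_sum, ← hexponent, Real.exp_add, cosProd]
    ring
  rw [← hval]
  refine (hexp.mul_left _).congr_fun fun n => ?_
  rw [mul_pow (2 * m * t)]
  ring

theorem heatKernel_eq_prod (t : ℝ) (x y : Fin m → ℤ) :
    heatKernel m t x y = ∏ i, heatKernelOne t (x i - y i) := by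
  set π := Measure.pi fun _ : Fin m => uniformAngle
  set w := x - y
  set a : ℕ → ℝ := fun n => Real.exp (-(2 * m) * t) * (2 * m * t) ^ n / n.factorial
  have norm_le (n : ℕ) (θ : Fin m → ℝ) : ‖a n * (stepCharFun m θ ^ n * cosProd m w θ)‖ ≤ ‖a n‖ := by
    rw [norm_mul]
    exact mul_le_of_le_one_right (norm_nonneg _) (abs_stepCharFun_pow_mul_cosProd_le_one n w θ)
  have summable_norm : Summable fun n => ‖a n‖ := by
    simp only [a, mul_div_assoc]
    exact ((Real.summable_pow_div_factorial _).mul_left _).norm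
  have hasSum_integral := hasSum_integral_of_summable_integral_norm (μ := π)
    (F := fun n θ => a n * (stepCharFun m θ ^ n * cosProd m w θ))
    (fun n => (integrable_stepCharFun_pow_mul_cosProd n w).const_mul _)
    (.of_nonneg_of_le (fun n => integral_nonneg fun _ => norm_nonneg _)
      (fun n => (integral_mono_of_nonneg (Eventually.of_forall fun _ => norm_nonneg _)
        (integrable_const _) (Eventually.of_forall (norm_le n))).trans_eq (by simp))
      summable_norm)
  calc heatKernel m t x y
      = ∑' n, ∫ θ, a n * (stepCharFun m θ ^ n * cosProd m w θ) ∂π := by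
        simp only [heatKernel, srwKernel_eq_integral, integral_const_mul, a, π, w]
    _ = ∫ θ, ∏ i, walkCharFun t (θ i) * Real.cos (w i * θ i) ∂π := by
        rw [hasSum_integral.tsum_eq]
        congr 1 with θ
        exact (hasSum_poisson_mul_stepCharFun t w θ).tsum_eq
    _ = ∏ i, heatKernelOne t (x i - y i) :=
        integral_fintype_prod_eq_prod (μ := fun _ : Fin m => uniformAngle)
          (fun i (u : ℝ) => walkCharFun t u * Real.cos (w i * u))

theorem heatKernel_symm (t : ℝ) (x y : Fin m → ℤ) : heatKernel m t x y = heatKernel m t y x := by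
  rw [heatKernel_eq_prod, heatKernel_eq_prod]
  refine Finset.prod_congr rfl fun i _ => ?_
  rw [← heatKernelOne_neg, neg_sub]

lemma heatKernel_nonneg {t : ℝ} (ht : 0 ≤ t) (x y : Fin m → ℤ) : 0 ≤ heatKernel m t x y :=
  tsum_nonneg fun n => mul_nonneg (by positivity) (srwKernel_nonneg n x y)

lemma exp_neg_le_heatKernel_self {t : ℝ} (ht : 0 ≤ t) (x : Fin m → ℤ) :
    Real.exp (-(2 * m) * t) ≤ heatKernel m t x x := by
  have nonneg (n : ℕ) :
      0 ≤ Real.exp (-(2 * m) * t) * (2 * m * t) ^ n / n.factorial * srwKernel m n x x :=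
    mul_nonneg (by positivity) (srwKernel_nonneg n x x)
  have summable : Summable fun n : ℕ =>
      Real.exp (-(2 * m) * t) * (2 * m * t) ^ n / n.factorial * srwKernel m n x x := by
    refine .of_nonneg_of_le nonneg (fun n => ?_)
      ((Real.summable_pow_div_factorial (2 * m * t)).mul_left (Real.exp (-(2 * m) * t)))
    rw [← mul_div_assoc]
    exact mul_le_of_le_one_right (by positivity) (srwKernel_le_one n x x)
  calc Real.exp (-(2 * m) * t)
      = Real.exp (-(2 * m) * t) * (2 * m * t) ^ 0 / (0).factorial * srwKernel m 0 x x := by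
        simp [srwKernel]
    _ ≤ heatKernel m t x x := summable.le_tsum 0 fun n _ => nonneg n

end Fourier

/-! ### Gaussian bounds for the heat kernel -/

section GaussianBounds

@[fun_prop]
lemma continuous_walkCharFun (t : ℝ) : Continuous (walkCharFun t) := by
  unfold walkCharFun
  fun_prop

lemma walkCharFun_pos (t θ : ℝ) : 0 < walkCharFun t θ := Real.exp_pos _

lemma walkCharFun_le_one {t : ℝ} (ht : 0 ≤ t) (θ : ℝ) : walkCharFun t θ ≤ 1 :=
  Real.exp_le_one_iff.2 (mul_nonpos_of_nonneg_of_nonpos (by positivity)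
    (sub_nonpos.2 (Real.cos_le_one θ)))

lemma walkCharFun_le_exp_neg_mul_sq {t θ : ℝ} (ht : 0 ≤ t) (hθ : |θ| ≤ Real.pi) :
    walkCharFun t θ ≤ Real.exp (-(4 / Real.pi ^ 2 * t) * θ ^ 2) := by
  refine Real.exp_le_exp.2 ?_
  calc 2 * t * (Real.cos θ - 1) ≤ 2 * t * -(2 / Real.pi ^ 2 * θ ^ 2) := by
        gcongr
        linarith [Real.cos_le_one_sub_mul_cos_sq hθ]
    _ = -(4 / Real.pi ^ 2 * t) * θ ^ 2 := by ring

lemma integrable_walkCharFun_mul {t : ℝ} (ht : 0 ≤ t) {g : ℝ → ℝ} (hg : Continuous g) {C : ℝ}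
    (hC : ∀ θ, |θ| ≤ Real.pi → |g θ| ≤ C) :
    Integrable (fun θ => walkCharFun t θ * g θ) uniformAngle := by
  refine .of_bound (by fun_prop) C ?_
  filter_upwards [ae_uniformAngle_abs_le_pi] with θ hθ
  rw [Real.norm_eq_abs, abs_mul, abs_of_pos (walkCharFun_pos t θ)]
  exact (mul_le_of_le_one_left (abs_nonneg _) (walkCharFun_le_one ht θ)).trans (hC θ hθ)

lemma integral_exp_neg_mul_sq_uniformAngle_le {b : ℝ} (hb : 0 < b) :
    ∫ θ, Real.exp (-b * θ ^ 2) ∂uniformAngle ≤ (2 * Real.pi)⁻¹ * √(Real.pi / b) := by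
  rw [← integral_gaussian]
  exact integral_uniformAngle_le (integrable_exp_neg_mul_sq hb) fun _ => by positivity

lemma integrable_exp_neg_mul_sq_uniformAngle {b : ℝ} (hb : 0 ≤ b) :
    Integrable (fun θ => Real.exp (-b * θ ^ 2)) uniformAngle := by
  refine .of_bound (by fun_prop) 1 (Eventually.of_forall fun θ => ?_)
  rw [Real.norm_eq_abs, Real.abs_exp, Real.exp_le_one_iff]
  nlinarith [sq_nonneg θ]

lemma exists_abs_heatKernelOne_le :
    ∃ C > 0, ∀ t : ℝ, 0 < t → ∀ n : ℤ, |heatKernelOne t n| ≤ C / √t := by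
  refine ⟨(2 * Real.pi)⁻¹ * √(Real.pi / (4 / Real.pi ^ 2)), by positivity, fun t ht n => ?_⟩
  calc |heatKernelOne t n|
      ≤ ∫ θ, Real.exp (-(4 / Real.pi ^ 2 * t) * θ ^ 2) ∂uniformAngle := by
        rw [heatKernelOne, ← Real.norm_eq_abs]
        refine norm_integral_le_of_norm_le
          (integrable_exp_neg_mul_sq_uniformAngle (by positivity)) ?_
        filter_upwards [ae_uniformAngle_abs_le_pi] with θ hθ
        rw [norm_mul, Real.norm_of_nonneg (walkCharFun_pos t θ).le]
        exact (mul_le_of_le_one_right (walkCharFun_pos t θ).le (Real.abs_cos_le_one _)).trans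
          (walkCharFun_le_exp_neg_mul_sq ht.le hθ)
    _ ≤ (2 * Real.pi)⁻¹ * √(Real.pi / (4 / Real.pi ^ 2 * t)) :=
        integral_exp_neg_mul_sq_uniformAngle_le (by positivity)
    _ = (2 * Real.pi)⁻¹ * √(Real.pi / (4 / Real.pi ^ 2)) / √t := by
        rw [← div_div, Real.sqrt_div (by positivity), mul_div_assoc]

lemma exp_neg_one_le_walkCharFun {t θ : ℝ} (ht : 0 < t) (hθ : θ ∈ Ioc 0 (1 / √t)) :
    Real.exp (-1) ≤ walkCharFun t θ := by
  have hsq : t * θ ^ 2 ≤ 1 := by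
    calc t * θ ^ 2 ≤ t * (1 / √t) ^ 2 := by
          have := hθ.1
          have := hθ.2
          gcongr
      _ = 1 := by rw [div_pow, Real.sq_sqrt ht.le]; field_simp
  refine Real.exp_le_exp.2 ?_
  nlinarith [Real.one_sub_sq_div_two_le_cos (x := θ)]

lemma exists_le_integral_walkCharFun :
    ∃ C > 0, ∀ t : ℝ, 1 ≤ t → C / √t ≤ ∫ θ, walkCharFun t θ ∂uniformAngle := by
  have hπ := Real.pi_pos
  refine ⟨(2 * Real.pi)⁻¹ * Real.exp (-1), by positivity, fun t ht => ?_⟩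
  have ht0 : 0 < t := by linarith
  have hsub : Ioc 0 (1 / √t) ⊆ Ioc (-Real.pi) Real.pi := by
    have : 1 / √t ≤ 1 := div_le_one_of_le₀ (Real.one_le_sqrt.2 ht) (Real.sqrt_nonneg t)
    exact Ioc_subset_Ioc (by linarith) (by linarith [Real.pi_gt_three])
  have h_int : IntegrableOn (walkCharFun t) (Ioc (-Real.pi) Real.pi) :=
    (continuous_walkCharFun t).integrableOn_Ioc
  rw [integral_uniformAngle, mul_div_assoc]
  gcongr
  calc Real.exp (-1) / √t = ∫ θ in Ioc 0 (1 / √t), Real.exp (-1) := by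
        simp [div_eq_inv_mul]
    _ ≤ ∫ θ in Ioc 0 (1 / √t), walkCharFun t θ :=
        setIntegral_mono_on (by simp) (h_int.mono_set hsub) measurableSet_Ioc
          fun θ hθ => exp_neg_one_le_walkCharFun ht0 hθ
    _ ≤ ∫ θ in Ioc (-Real.pi) Real.pi, walkCharFun t θ :=
        setIntegral_mono_set h_int (Eventually.of_forall fun θ => (walkCharFun_pos t θ).le)
          hsub.eventuallyLE

-- Half of the Gaussian exponent is spent on absorbing the factor `θ²`.
lemma walkCharFun_mul_sq_le {t θ : ℝ} (ht : 0 < t) (hθ : |θ| ≤ Real.pi) :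
    walkCharFun t θ * θ ^ 2
      ≤ (2 / Real.pi ^ 2 * t)⁻¹ * Real.exp (-(2 / Real.pi ^ 2 * t) * θ ^ 2) := by
  set b := 2 / Real.pi ^ 2 * t
  have hb : 0 < b := by positivity
  have sq_le : θ ^ 2 ≤ b⁻¹ * Real.exp (b * θ ^ 2) := by
    rw [inv_mul_eq_div, le_div_iff₀ hb]
    linarith [Real.add_one_le_exp (b * θ ^ 2)]
  calc walkCharFun t θ * θ ^ 2
      ≤ Real.exp (-(4 / Real.pi ^ 2 * t) * θ ^ 2) * (b⁻¹ * Real.exp (b * θ ^ 2)) := by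
        gcongr
        exact walkCharFun_le_exp_neg_mul_sq ht.le hθ
    _ = b⁻¹ * Real.exp (-b * θ ^ 2) := by
        rw [mul_left_comm, ← Real.exp_add]
        congr 2
        ring

lemma exists_integral_walkCharFun_mul_sq_le :
    ∃ C > 0, ∀ t : ℝ, 0 < t → ∫ θ, walkCharFun t θ * θ ^ 2 ∂uniformAngle ≤ C / √t / t := by
  set b := 2 / Real.pi ^ 2
  have hb : 0 < b := by positivity
  refine ⟨(2 * Real.pi)⁻¹ * √(Real.pi / b) / b, by positivity, fun t ht => ?_⟩
  calc ∫ θ, walkCharFun t θ * θ ^ 2 ∂uniformAngle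
      ≤ ∫ θ, (b * t)⁻¹ * Real.exp (-(b * t) * θ ^ 2) ∂uniformAngle := by
        refine integral_mono_ae ?_ ?_ ?_
        · exact integrable_walkCharFun_mul ht.le (continuous_pow 2) (C := Real.pi ^ 2)
            fun θ hθ => by rw [abs_pow]; gcongr
        · exact (integrable_exp_neg_mul_sq_uniformAngle (by positivity)).const_mul _
        · filter_upwards [ae_uniformAngle_abs_le_pi] with θ hθ
          exact walkCharFun_mul_sq_le ht hθ
    _ ≤ (b * t)⁻¹ * ((2 * Real.pi)⁻¹ * √(Real.pi / (b * t))) := by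
        rw [integral_const_mul]
        gcongr
        exact integral_exp_neg_mul_sq_uniformAngle_le (by positivity)
    _ = (2 * Real.pi)⁻¹ * √(Real.pi / b) / b / √t / t := by
        rw [← div_div, Real.sqrt_div (by positivity)]
        field_simp

lemma integral_walkCharFun_sub_le_heatKernelOne {t : ℝ} (ht : 0 ≤ t) (n : ℤ) :
    ∫ θ, walkCharFun t θ ∂uniformAngle
        - (n : ℝ) ^ 2 / 2 * ∫ θ, walkCharFun t θ * θ ^ 2 ∂uniformAngle
      ≤ heatKernelOne t n := by
  have h_int : Integrable (walkCharFun t) uniformAngle := by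
    simpa using integrable_walkCharFun_mul ht (continuous_const (y := (1 : ℝ))) (C := 1) (by simp)
  have h_int_sq : Integrable (fun θ => walkCharFun t θ * θ ^ 2) uniformAngle :=
    integrable_walkCharFun_mul ht (continuous_pow 2) (C := Real.pi ^ 2) fun θ hθ => by
      rw [abs_pow]; gcongr
  have h_int_cos : Integrable (fun θ => walkCharFun t θ * Real.cos (n * θ)) uniformAngle :=
    integrable_walkCharFun_mul ht (by fun_prop) fun θ _ => Real.abs_cos_le_one (n * θ)
  rw [← integral_const_mul, ← integral_sub h_int (h_int_sq.const_mul _)]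
  refine integral_mono (h_int.sub (h_int_sq.const_mul _)) h_int_cos fun θ => ?_
  calc walkCharFun t θ - (n : ℝ) ^ 2 / 2 * (walkCharFun t θ * θ ^ 2)
      = walkCharFun t θ * (1 - (n * θ) ^ 2 / 2) := by ring
    _ ≤ walkCharFun t θ * Real.cos (n * θ) :=
        mul_le_mul_of_nonneg_left Real.one_sub_sq_div_two_le_cos (walkCharFun_pos t θ).le

lemma exists_le_heatKernelOne :
    ∃ c > 0, ∃ ρ > 0, ∀ t : ℝ, 1 ≤ t → ∀ n : ℤ, |(n : ℝ)| ≤ ρ * √t →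
      c / √t ≤ heatKernelOne t n := by
  obtain ⟨C₁, hC₁, lower⟩ := exists_le_integral_walkCharFun
  obtain ⟨C₂, hC₂, upper_sq⟩ := exists_integral_walkCharFun_mul_sq_le
  refine ⟨C₁ / 2, by positivity, √(C₁ / C₂), by positivity, fun t ht n hn => ?_⟩
  have ht0 : 0 < t := by linarith
  have hn_sq : (n : ℝ) ^ 2 ≤ C₁ / C₂ * t := by
    calc (n : ℝ) ^ 2 = |(n : ℝ)| ^ 2 := (sq_abs _).symm
      _ ≤ (√(C₁ / C₂) * √t) ^ 2 := by gcongr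
      _ = C₁ / C₂ * t := by rw [mul_pow, Real.sq_sqrt (by positivity), Real.sq_sqrt ht0.le]
  calc C₁ / 2 / √t = C₁ / √t - C₁ / C₂ * t / 2 * (C₂ / √t / t) := by field_simp; ring
    _ ≤ ∫ θ, walkCharFun t θ ∂uniformAngle
          - (n : ℝ) ^ 2 / 2 * ∫ θ, walkCharFun t θ * θ ^ 2 ∂uniformAngle := by
        gcongr
        · exact lower t ht
        · exact integral_nonneg fun θ => mul_nonneg (walkCharFun_pos t θ).le (sq_nonneg θ)
        · exact upper_sq t ht0
    _ ≤ heatKernelOne t n := integral_walkCharFun_sub_le_heatKernelOne ht0.le n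

lemma abs_heatKernelOne_le_one {t : ℝ} (ht : 0 ≤ t) (n : ℤ) : |heatKernelOne t n| ≤ 1 := by
  have h := norm_integral_le_of_norm_le_const (μ := uniformAngle)
    (f := fun θ => walkCharFun t θ * Real.cos (n * θ)) (C := 1) (Eventually.of_forall fun θ => by
      rw [norm_mul, Real.norm_of_nonneg (walkCharFun_pos t θ).le]
      exact mul_le_one₀ (walkCharFun_le_one ht θ) (norm_nonneg _) (Real.abs_cos_le_one _))
  simpa [heatKernelOne] using h

lemma heatKernel_le_one {m : ℕ} {t : ℝ} (ht : 0 ≤ t) (x y : Fin m → ℤ) :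
    heatKernel m t x y ≤ 1 := by
  rw [heatKernel_eq_prod]
  refine (le_abs_self _).trans ?_
  rw [Finset.abs_prod]
  exact Finset.prod_le_one (fun _ _ => abs_nonneg _) fun i _ => abs_heatKernelOne_le_one ht _

variable (m : ℕ)

lemma div_sqrt_pow_eq {t : ℝ} (ht : 0 ≤ t) (C : ℝ) :
    (C / √t) ^ m = C ^ m * t ^ (-((m : ℝ) / 2)) := by
  rw [div_pow, Real.sqrt_eq_rpow, ← Real.rpow_natCast (t ^ (1 / 2 : ℝ)), ← Real.rpow_mul ht,
    Real.rpow_neg ht, div_eq_mul_inv, one_div_mul_eq_div]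

theorem exists_heatKernel_le :
    ∃ C > 0, ∀ t : ℝ, 0 < t → ∀ x y, heatKernel m t x y ≤ C * t ^ (-((m : ℝ) / 2)) := by
  obtain ⟨C, hC, upper⟩ := exists_abs_heatKernelOne_le
  refine ⟨C ^ m, by positivity, fun t ht x y => ?_⟩
  calc heatKernel m t x y ≤ ∏ i, |heatKernelOne t (x i - y i)| := by
        rw [heatKernel_eq_prod, ← Finset.abs_prod]
        exact le_abs_self _
    _ ≤ ∏ _i : Fin m, C / √t :=
        Finset.prod_le_prod (fun _ _ => abs_nonneg _) fun i _ => upper t ht _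
    _ = C ^ m * t ^ (-((m : ℝ) / 2)) := by
        rw [Finset.prod_const, Finset.card_univ, Fintype.card_fin, div_sqrt_pow_eq m ht.le]

theorem exists_le_heatKernel :
    ∃ c > 0, ∃ ρ > 0, ∀ t : ℝ, 1 ≤ t → ∀ x y : Fin m → ℤ,
      (∀ i, |((x i - y i : ℤ) : ℝ)| ≤ ρ * √t) → c * t ^ (-((m : ℝ) / 2)) ≤ heatKernel m t x y := by
  obtain ⟨c, hc, ρ, hρ, lower⟩ := exists_le_heatKernelOne
  refine ⟨c ^ m, by positivity, ρ, hρ, fun t ht x y hxy => ?_⟩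
  calc c ^ m * t ^ (-((m : ℝ) / 2)) = ∏ _i : Fin m, c / √t := by
        rw [Finset.prod_const, Finset.card_univ, Fintype.card_fin,
          div_sqrt_pow_eq m (by linarith)]
    _ ≤ heatKernel m t x y := by
        rw [heatKernel_eq_prod]
        exact Finset.prod_le_prod (fun _ _ => by positivity) fun i _ => lower t ht _ (hxy i)

/-- `G` bounds the expected number of visits at integer times of the walk on `ℤ^m` to any site,
from any starting point. -/
structure IsGreenBound (m : ℕ) (G : ℝ) : Prop where
  one_le : 1 ≤ G
  sum_le : ∀ (n : ℕ) (x y : Fin m → ℤ), ∑ i ∈ Finset.range n, heatKernel m i x y ≤ G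

theorem exists_isGreenBound {m : ℕ} (hm : 3 ≤ m) : ∃ G, IsGreenBound m G := by
  obtain ⟨C, hC, upper⟩ := exists_heatKernel_le m
  have nonneg (i : ℕ) : 0 ≤ C * (i : ℝ) ^ (-((m : ℝ) / 2)) := by positivity
  have summable : Summable fun i : ℕ => C * (i : ℝ) ^ (-((m : ℝ) / 2)) := by
    have : (3 : ℝ) ≤ m := by exact_mod_cast hm
    exact (Real.summable_nat_rpow.2 (by linarith)).mul_left _
  refine ⟨1 + ∑' i : ℕ, C * (i : ℝ) ^ (-((m : ℝ) / 2)), le_add_of_nonneg_right (tsum_nonneg nonneg),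
    fun n x y => ?_⟩
  have term_le (i : ℕ) :
      heatKernel m i x y ≤ (if i = 0 then 1 else 0) + C * (i : ℝ) ^ (-((m : ℝ) / 2)) := by
    split_ifs with hi
    · linarith [nonneg i, heatKernel_le_one i.cast_nonneg x y]
    · rw [zero_add]
      exact upper i (by exact_mod_cast Nat.pos_of_ne_zero hi) x y
  calc ∑ i ∈ Finset.range n, heatKernel m i x y
      ≤ ∑ i ∈ Finset.range n, (if i = 0 then 1 else 0)
          + ∑ i ∈ Finset.range n, C * (i : ℝ) ^ (-((m : ℝ) / 2)) := by
        rw [← Finset.sum_add_distrib]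
        exact Finset.sum_le_sum fun i _ => term_le i
    _ ≤ 1 + ∑' i : ℕ, C * (i : ℝ) ^ (-((m : ℝ) / 2)) := by
        gcongr
        · rw [Finset.sum_ite_eq']
          split_ifs <;> norm_num
        · exact summable.sum_le_tsum _ fun i _ => nonneg i

end GaussianBounds

/-! ### Finite-dimensional laws of the walk -/

lemma lintegral_comp_eq_tsum {Ω ι : Type*} [MeasurableSpace Ω] [MeasurableSpace ι] [Countable ι]
    [MeasurableSingletonClass ι] {ν : Measure Ω} {X : Ω → ι} (hX : Measurable X)
    (f : ι → ENNReal) : ∫⁻ ω, f (X ω) ∂ν = ∑' y, f y * ν {ω | X ω = y} := by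
  rw [← lintegral_map (measurable_of_countable f) hX, lintegral_countable']
  refine tsum_congr fun y => ?_
  rw [Measure.map_apply hX (measurableSet_singleton y)]
  rfl

section

variable {d : ℕ} {Ω : Type*} {S : ℝ → Ω → (Fin d → ℤ)}

/-- The event `F` prescribes the positions of the process `S` at finitely many ordered nonnegative
times, the last of which is `s`, where the position is `y`. These are the events at which the
Markov property can be applied. -/
def IsCylinder (S : ℝ → Ω → (Fin d → ℤ)) (F : Set Ω) (s : ℝ) (y : Fin d → ℤ) : Prop :=
  ∃ (n : ℕ) (t : Fin (n + 1) → ℝ) (w : Fin (n + 1) → (Fin d → ℤ)), 0 ≤ t 0 ∧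
    (∀ i : Fin n, t i.castSucc ≤ t i.succ) ∧ t (Fin.last n) = s ∧ w (Fin.last n) = y ∧
    F = {ω | ∀ i, S (t i) ω = w i}

lemma isCylinder_setOf_eq {u : ℝ} (hu : 0 ≤ u) (y : Fin d → ℤ) :
    IsCylinder S {ω | S u ω = y} u y :=
  ⟨0, fun _ => u, fun _ => y, hu, fun i => i.elim0, rfl, rfl, by simp⟩

lemma setOf_forall_snoc {n : ℕ} (t : Fin n → ℝ) (w : Fin n → (Fin d → ℤ)) (u : ℝ)
    (v : Fin d → ℤ) :
    {ω | ∀ i : Fin (n + 1), S ((Fin.snoc t u : Fin (n + 1) → ℝ) i) ω =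
        (Fin.snoc w v : Fin (n + 1) → (Fin d → ℤ)) i}
      = {ω | ∀ i, S (t i) ω = w i} ∩ {ω | S u ω = v} := by
  ext ω
  simp [Fin.forall_fin_succ']

lemma snoc_castSucc_le_snoc_succ {n : ℕ} {t : Fin (n + 1) → ℝ} {u : ℝ}
    (mono : ∀ i : Fin n, t i.castSucc ≤ t i.succ) (hu : t (Fin.last n) ≤ u) (i : Fin (n + 1)) :
    (Fin.snoc t u : Fin (n + 2) → ℝ) i.castSucc ≤ (Fin.snoc t u : Fin (n + 2) → ℝ) i.succ := by
  refine Fin.lastCases ?_ (fun j => ?_) i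
  · rwa [Fin.snoc_castSucc, Fin.succ_last, Fin.snoc_last]
  · rw [Fin.snoc_castSucc, Fin.succ_castSucc, Fin.snoc_castSucc]
    exact mono j

lemma snoc_zero {α : Type*} {n : ℕ} (t : Fin (n + 1) → α) (u : α) :
    (Fin.snoc t u : Fin (n + 2) → α) 0 = t 0 :=
  Fin.snoc_castSucc (α := fun _ => α) u t 0

lemma IsCylinder.inter {F : Set Ω} {s u : ℝ} {y : Fin d → ℤ} (hF : IsCylinder S F s y)
    (hu : s ≤ u) (v : Fin d → ℤ) : IsCylinder S (F ∩ {ω | S u ω = v}) u v := by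
  obtain ⟨n, t, w, ht₀, mono, rfl, rfl, rfl⟩ := hF
  exact ⟨n + 1, Fin.snoc t u, Fin.snoc w v, by rwa [snoc_zero],
    snoc_castSucc_le_snoc_succ mono hu, Fin.snoc_last .., Fin.snoc_last ..,
    (setOf_forall_snoc t w u v).symm⟩

namespace IsCTSRW

variable [MeasurableSpace Ω] {P : (Fin d → ℤ) → Measure Ω}

lemma measurable (hS : IsCTSRW d P S) (u : ℝ) : Measurable (S u) :=
  hS.meas.comp measurable_prodMk_left

lemma measurableSet_eq (hS : IsCTSRW d P S) (u : ℝ) (y : Fin d → ℤ) :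
    MeasurableSet {ω | S u ω = y} :=
  hS.measurable u (measurableSet_singleton y)

lemma measure_forall_eq (hS : IsCTSRW d P S) (x : Fin d → ℤ) {n : ℕ} {t : Fin (n + 1) → ℝ}
    (ht₀ : 0 ≤ t 0) (mono : ∀ i : Fin n, t i.castSucc ≤ t i.succ)
    (w : Fin (n + 1) → (Fin d → ℤ)) :
    P x {ω | ∀ i, S (t i) ω = w i} = ENNReal.ofReal (heatKernel d (t 0) x (w 0)
      * ∏ i : Fin n, heatKernel d (t i.succ - t i.castSucc) (w i.castSucc) (w i.succ)) := by
  have := hS.prob x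
  rw [← hS.fdd x n t ht₀ mono w, ENNReal.ofReal_toReal (measure_ne_top _ _)]

theorem measure_inter_eq (hS : IsCTSRW d P S) (x : Fin d → ℤ) {F : Set Ω} {s u : ℝ}
    {y : Fin d → ℤ} (hF : IsCylinder S F s y) (hu : s ≤ u) (v : Fin d → ℤ) :
    P x (F ∩ {ω | S u ω = v}) = P x F * ENNReal.ofReal (heatKernel d (u - s) y v) := by
  obtain ⟨n, t, w, ht₀, mono, rfl, rfl, rfl⟩ := hF
  rw [← setOf_forall_snoc, hS.measure_forall_eq x (by rwa [snoc_zero])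
    (snoc_castSucc_le_snoc_succ mono hu), hS.measure_forall_eq x ht₀ mono, snoc_zero, snoc_zero,
    Fin.prod_univ_castSucc]
  simp only [Fin.succ_castSucc, Fin.succ_last, Fin.snoc_castSucc, Fin.snoc_last]
  rw [← mul_assoc, ENNReal.ofReal_mul]
  exact mul_nonneg (heatKernel_nonneg ht₀ _ _) (Finset.prod_nonneg fun i _ =>
    heatKernel_nonneg (sub_nonneg.2 (mono i)) _ _)

lemma measure_eq (hS : IsCTSRW d P S) (x y : Fin d → ℤ) {u : ℝ} (hu : 0 ≤ u) :
    P x {ω | S u ω = y} = ENNReal.ofReal (heatKernel d u x y) := by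
  simpa using hS.measure_forall_eq x (n := 0) (t := fun _ => u) hu (fun i => i.elim0) fun _ => y

lemma measure_eq_inter_eq (hS : IsCTSRW d P S) (x y w : Fin d → ℤ) {s u : ℝ} (hs : 0 ≤ s)
    (hu : s ≤ u) :
    P x ({ω | S s ω = y} ∩ {ω | S u ω = w}) =
      ENNReal.ofReal (heatKernel d s x y) * ENNReal.ofReal (heatKernel d (u - s) y w) := by
  rw [hS.measure_inter_eq x (isCylinder_setOf_eq hs y) hu, hS.measure_eq x y hs]

lemma lintegral_comp (hS : IsCTSRW d P S) (x : Fin d → ℤ) {u : ℝ} (hu : 0 ≤ u)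
    (f : (Fin d → ℤ) → ENNReal) :
    ∫⁻ ω, f (S u ω) ∂(P x) = ∑' y, f y * ENNReal.ofReal (heatKernel d u x y) := by
  rw [lintegral_comp_eq_tsum (hS.measurable u)]
  exact tsum_congr fun y => by rw [hS.measure_eq x y hu]

lemma setLIntegral_comp (hS : IsCTSRW d P S) (x w : Fin d → ℤ) {u t : ℝ} (hu : 0 ≤ u)
    (ht : u ≤ t) (f : (Fin d → ℤ) → ENNReal) :
    ∫⁻ ω in {ω | S t ω = w}, f (S u ω) ∂(P x) = ∑' y, f y *
      (ENNReal.ofReal (heatKernel d u x y) * ENNReal.ofReal (heatKernel d (t - u) y w)) := by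
  rw [lintegral_comp_eq_tsum (hS.measurable u)]
  refine tsum_congr fun y => ?_
  rw [Measure.restrict_apply (hS.measurableSet_eq u y), ← hS.measure_eq_inter_eq x y w hu ht]

lemma tsum_heatKernel (hS : IsCTSRW d P S) (x : Fin d → ℤ) {u : ℝ} (hu : 0 ≤ u) :
    ∑' y, ENNReal.ofReal (heatKernel d u x y) = 1 := by
  have := hS.prob x
  simpa using (hS.lintegral_comp x hu 1).symm
-- One of the two legs of the bridge lasts at least `t / 2`, and its kernel is `O(t ^ (-d / 2))`.
theorem exists_setLIntegral_bridge_le (hS : IsCTSRW d P S) :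
    ∃ C > 0, ∀ (x w : Fin d → ℤ) (u t : ℝ), 0 < t → 0 ≤ u → u ≤ t →
      ∀ f : (Fin d → ℤ) → ENNReal,
        ∫⁻ ω in {ω | S t ω = w}, f (S u ω) ∂(P x) ≤ ENNReal.ofReal (C * t ^ (-((d : ℝ) / 2))) *
          (∫⁻ ω, f (S u ω) ∂(P x) + ∫⁻ ω, f (S (t - u) ω) ∂(P w)) := by
  obtain ⟨C, hC, upper⟩ := exists_heatKernel_le d
  refine ⟨C * (1 / 2) ^ (-((d : ℝ) / 2)), by positivity, fun x w u t ht hu hut f => ?_⟩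
  set K := ENNReal.ofReal (C * (1 / 2) ^ (-((d : ℝ) / 2)) * t ^ (-((d : ℝ) / 2)))
  have long_leg {v : ℝ} (hv : t / 2 ≤ v) (a b : Fin d → ℤ) :
      ENNReal.ofReal (heatKernel d v a b) ≤ K := by
    refine ENNReal.ofReal_le_ofReal ((upper v (by linarith) a b).trans ?_)
    rw [mul_assoc, ← Real.mul_rpow (by norm_num) ht.le]
    gcongr ?_ * ?_
    exact Real.rpow_le_rpow_of_nonpos (by linarith) (by linarith) (neg_nonpos.2 (by positivity))
  rw [hS.setLIntegral_comp x w hu hut f, hS.lintegral_comp x hu, hS.lintegral_comp w (by linarith),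
    ← ENNReal.tsum_add, ← ENNReal.tsum_mul_left]
  refine ENNReal.tsum_le_tsum fun y => ?_
  rcases le_total u (t / 2) with h | h
  · calc _ ≤ f y * (ENNReal.ofReal (heatKernel d u x y) * K) := by
          gcongr
          exact long_leg (by linarith) _ _
      _ = K * (f y * ENNReal.ofReal (heatKernel d u x y)) := by ring
      _ ≤ _ := by gcongr; exact le_self_add
  · calc _ ≤ f y * (K * ENNReal.ofReal (heatKernel d (t - u) y w)) := by
          gcongr
          exact long_leg (by linarith) _ _
      _ = K * (f y * ENNReal.ofReal (heatKernel d (t - u) w y)) := by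
          rw [heatKernel_symm (t - u) y w]
          ring
      _ ≤ _ := by gcongr; exact le_add_self

end IsCTSRW

end

/-! ### Local times on the integer skeleton -/

lemma add_pow_succ_le (a b k : ℕ) :
    (a + b) ^ (k + 1) ≤ b ^ (k + 1) + (k + 1) * (a * (a + b) ^ k) := by
  induction k with
  | zero => simp [add_comm]
  | succ k ih =>
    calc (a + b) ^ (k + 1 + 1) = a * (a + b) ^ (k + 1) + b * (a + b) ^ (k + 1) := by ring
      _ ≤ a * (a + b) ^ (k + 1) + b * (b ^ (k + 1) + (k + 1) * (a * (a + b) ^ k)) := by gcongr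
      _ = a * (a + b) ^ (k + 1) + b ^ (k + 2) + (k + 1) * (a * (b * (a + b) ^ k)) := by ring
      _ ≤ a * (a + b) ^ (k + 1) + b ^ (k + 2)
            + (k + 1) * (a * ((a + b) * (a + b) ^ k)) := by
        gcongr
        exact Nat.le_add_left b a
      _ = b ^ (k + 1 + 1) + (k + 1 + 1) * (a * (a + b) ^ (k + 1)) := by ring

lemma sum_Ico_pow_succ_le (f : ℕ → ℕ) (n k : ℕ) {j : ℕ} (hj : j ≤ n) :
    (∑ i ∈ Finset.Ico j n, f i) ^ (k + 1) ≤
      (k + 1) * ∑ i ∈ Finset.Ico j n, f i * (∑ l ∈ Finset.Ico i n, f l) ^ k := by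
  induction hj using Nat.decreasingInduction with
  | self => simp
  | of_succ j hj ih =>
    rw [Finset.sum_eq_sum_Ico_succ_bot hj, Finset.sum_eq_sum_Ico_succ_bot hj, mul_add,
      Finset.sum_eq_sum_Ico_succ_bot hj, add_comm (((k : ℕ) + 1) * _)]
    exact (add_pow_succ_le _ _ _).trans (by gcongr)

section

variable {d : ℕ} {Ω : Type*} {S : ℝ → Ω → (Fin d → ℤ)}

/-- The number of visits of the process `S` to `y` at the times `v + i`, `j ≤ i < n`. -/
def visits (S : ℝ → Ω → (Fin d → ℤ)) (v : ℝ) (n : ℕ) (y : Fin d → ℤ) (j : ℕ) (ω : Ω) : ℕ :=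
  ∑ i ∈ Finset.Ico j n, if S (v + i) ω = y then 1 else 0

lemma visits_pow_succ_le (v : ℝ) {n j : ℕ} (k : ℕ) (hj : j ≤ n) (y : Fin d → ℤ) (ω : Ω) :
    (visits S v n y j ω : ENNReal) ^ (k + 1) ≤ (k + 1) * ∑ i ∈ Finset.Ico j n,
      {ω | S (v + i) ω = y}.indicator (fun ω => (visits S v n y i ω : ENNReal) ^ k) ω := by
  have h : visits S v n y j ω ^ (k + 1) ≤ (k + 1) * ∑ i ∈ Finset.Ico j n,
      (if S (v + i) ω = y then 1 else 0) * visits S v n y i ω ^ k :=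
    sum_Ico_pow_succ_le _ n k hj
  calc (visits S v n y j ω : ENNReal) ^ (k + 1)
      ≤ (((k + 1) * ∑ i ∈ Finset.Ico j n,
          (if S (v + i) ω = y then 1 else 0) * visits S v n y i ω ^ k : ℕ) : ENNReal) := by
        exact_mod_cast h
    _ = _ := by
        push_cast
        congr 1
        refine Finset.sum_congr rfl fun i _ => ?_
        by_cases hi : S (v + i) ω = y <;> simp [hi, indicator]

lemma exists_visits_zero_eq {v : ℝ} {n : ℕ} {y : Fin d → ℤ} {ω : Ω}
    (h : visits S v n y 0 ω ≠ 0) :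
    ∃ j < n, S (v + j) ω = y ∧ visits S v n y 0 ω = visits S v n y j ω := by
  classical
  have hit : ∃ j, j < n ∧ S (v + j) ω = y := by
    contrapose! h
    exact Finset.sum_eq_zero fun i hi => if_neg (h i (Finset.mem_Ico.1 hi).2)
  have first_lt := (Nat.find_spec hit).1
  refine ⟨Nat.find hit, first_lt, (Nat.find_spec hit).2, ?_⟩
  rw [visits, ← Finset.sum_Ico_consecutive _ (Nat.zero_le _) first_lt.le, Finset.sum_eq_zero,
    zero_add, visits]
  intro i hi
  have hi := (Finset.mem_Ico.1 hi).2
  exact if_neg fun h => Nat.find_min hit hi ⟨hi.trans first_lt, h⟩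

variable [MeasurableSpace Ω] {P : (Fin d → ℤ) → Measure Ω}

lemma IsCTSRW.measurable_visits_pow (hS : IsCTSRW d P S) (v : ℝ) (n : ℕ) (y : Fin d → ℤ)
    (j k : ℕ) : Measurable fun ω => (visits S v n y j ω : ENNReal) ^ k := by
  have : Measurable (visits S v n y j) := Finset.measurable_fun_sum _ fun i _ =>
    .ite (hS.measurableSet_eq _ y) measurable_const measurable_const
  exact ((measurable_of_countable (fun n : ℕ => (n : ENNReal))).comp this).pow_const k

lemma IsCTSRW.sum_measure_inter_eq_le (hS : IsCTSRW d P S) {G : ℝ} (hG : IsGreenBound d G)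
    (x y : Fin d → ℤ) {v : ℝ} {n j : ℕ} {F : Set Ω} (hF : IsCylinder S F (v + j) y) :
    ∑ i ∈ Finset.Ico j n, P x (F ∩ {ω | S (v + i) ω = y}) ≤ P x F * ENNReal.ofReal G := by
  calc ∑ i ∈ Finset.Ico j n, P x (F ∩ {ω | S (v + i) ω = y})
      = ∑ i ∈ Finset.range (n - j), P x F * ENNReal.ofReal (heatKernel d i y y) := by
        rw [Finset.sum_Ico_eq_sum_range]
        refine Finset.sum_congr rfl fun i _ => ?_
        rw [hS.measure_inter_eq x hF (by push_cast; linarith [i.cast_nonneg (α := ℝ)])]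
        congr 3
        push_cast
        ring
    _ = P x F * ENNReal.ofReal (∑ i ∈ Finset.range (n - j), heatKernel d i y y) := by
        rw [ENNReal.ofReal_sum_of_nonneg fun i _ => heatKernel_nonneg i.cast_nonneg _ _,
          Finset.mul_sum]
    _ ≤ P x F * ENNReal.ofReal G := by
        gcongr
        exact hG.sum_le _ _ _

theorem IsCTSRW.setLIntegral_visits_pow_le (hS : IsCTSRW d P S) {G : ℝ} (hG : IsGreenBound d G)
    (x y : Fin d → ℤ) (v : ℝ) {n : ℕ} (k : ℕ) {j : ℕ} (hj : j ≤ n) {F : Set Ω}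
    (hF : IsCylinder S F (v + j) y) :
    ∫⁻ ω in F, (visits S v n y j ω : ENNReal) ^ k ∂(P x) ≤
      k.factorial * ENNReal.ofReal G ^ k * P x F := by
  induction k generalizing j F with
  | zero => simp
  | succ k ih =>
    have measurable_indicator (i : ℕ) : Measurable
        ({ω | S (v + i) ω = y}.indicator fun ω => (visits S v n y i ω : ENNReal) ^ k) :=
      (hS.measurable_visits_pow v n y i k).indicator (hS.measurableSet_eq _ y)
    calc ∫⁻ ω in F, (visits S v n y j ω : ENNReal) ^ (k + 1) ∂(P x)
        ≤ ∫⁻ ω in F, (k + 1 : ENNReal) * ∑ i ∈ Finset.Ico j n, {ω | S (v + i) ω = y}.indicator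
            (fun ω => (visits S v n y i ω : ENNReal) ^ k) ω ∂(P x) :=
          lintegral_mono fun ω => visits_pow_succ_le v k hj y ω
      _ = (k + 1) * ∑ i ∈ Finset.Ico j n, ∫⁻ ω in F ∩ {ω | S (v + i) ω = y},
            (visits S v n y i ω : ENNReal) ^ k ∂(P x) := by
          rw [lintegral_const_mul _ (Finset.measurable_fun_sum _ fun i _ => measurable_indicator i),
            lintegral_finsetSum _ fun i _ => measurable_indicator i]
          congr 1
          refine Finset.sum_congr rfl fun i _ => ?_
          rw [setLIntegral_indicator (hS.measurableSet_eq _ y), inter_comm]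
      _ ≤ (k + 1) * ∑ i ∈ Finset.Ico j n,
            k.factorial * ENNReal.ofReal G ^ k * P x (F ∩ {ω | S (v + i) ω = y}) := by
          gcongr with i hi
          obtain ⟨hji, hin⟩ := Finset.mem_Ico.1 hi
          exact ih hin.le (hF.inter (by gcongr) y)
      _ ≤ (k + 1) * (k.factorial * ENNReal.ofReal G ^ k * (P x F * ENNReal.ofReal G)) := by
          rw [← Finset.mul_sum]
          gcongr
          exact hS.sum_measure_inter_eq_le hG x y hF
      _ = (k + 1).factorial * ENNReal.ofReal G ^ (k + 1) * P x F := by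
          rw [Nat.factorial_succ]
          push_cast
          ring

lemma IsCTSRW.measure_eq_inter_le_visits_le (hS : IsCTSRW d P S) {G : ℝ} (hG : IsGreenBound d G)
    (x y : Fin d → ℤ) {v : ℝ} (hv : 0 ≤ v) {n j : ℕ} (hj : j ≤ n) (k : ℕ) {M : ℝ} (hM : 0 < M) :
    P x ({ω | S (v + j) ω = y} ∩ {ω | M ≤ visits S v n y j ω}) ≤
      ENNReal.ofReal (k.factorial * G ^ k / M ^ k) * ENNReal.ofReal (heatKernel d (v + j) x y) := by
  have hvj : 0 ≤ v + j := by positivity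
  set ν := (P x).restrict {ω | S (v + j) ω = y}
  have subset : {ω | M ≤ visits S v n y j ω} ⊆
      {ω | ENNReal.ofReal M ^ k ≤ (visits S v n y j ω : ENNReal) ^ k} := fun ω hω => by
    rw [mem_ofPred_eq, ← ENNReal.ofReal_natCast]
    exact pow_le_pow_left' (ENNReal.ofReal_le_ofReal hω) k
  calc P x ({ω | S (v + j) ω = y} ∩ {ω | M ≤ visits S v n y j ω})
      ≤ ν {ω | ENNReal.ofReal M ^ k ≤ (visits S v n y j ω : ENNReal) ^ k} := by
        rw [Measure.restrict_apply' (hS.measurableSet_eq _ y), inter_comm]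
        gcongr
    _ ≤ (∫⁻ ω, (visits S v n y j ω : ENNReal) ^ k ∂ν) / ENNReal.ofReal M ^ k :=
        meas_ge_le_lintegral_div (hS.measurable_visits_pow v n y j k).aemeasurable
          (pow_ne_zero _ (ENNReal.ofReal_pos.2 hM).ne') (ENNReal.pow_ne_top ENNReal.ofReal_ne_top)
    _ ≤ k.factorial * ENNReal.ofReal G ^ k * ENNReal.ofReal (heatKernel d (v + j) x y)
          / ENNReal.ofReal M ^ k := by
        gcongr
        rw [← hS.measure_eq x y hvj]
        exact hS.setLIntegral_visits_pow_le hG x y v k hj (isCylinder_setOf_eq hvj y)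
    _ = _ := by
        have hG₀ : 0 ≤ G := zero_le_one.trans hG.one_le
        rw [ENNReal.ofReal_div_of_pos (by positivity), ENNReal.ofReal_mul (by positivity),
          ENNReal.ofReal_pow hG₀, ENNReal.ofReal_pow hM.le, ENNReal.ofReal_natCast,
          ENNReal.mul_div_right_comm]

theorem IsCTSRW.measure_exists_le_visits_le (hS : IsCTSRW d P S) {G : ℝ} (hG : IsGreenBound d G)
    (x : Fin d → ℤ) {v : ℝ} (hv : 0 ≤ v) (n k : ℕ) {M : ℝ} (hM : 0 < M) :
    P x {ω | ∃ y, M ≤ visits S v n y 0 ω} ≤ ENNReal.ofReal (n * (k.factorial * G ^ k / M ^ k)) := by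
  have first_visit : {ω | ∃ y, M ≤ visits S v n y 0 ω} ⊆ ⋃ j ∈ Finset.range n,
      ⋃ y : Fin d → ℤ, {ω | S (v + j) ω = y} ∩ {ω | M ≤ visits S v n y j ω} := by
    rintro ω ⟨y, hy⟩
    obtain ⟨j, hj, hjy, heq⟩ := exists_visits_zero_eq (S := S) (v := v) (n := n) (y := y) (ω := ω)
      (by rintro h; rw [h, Nat.cast_zero] at hy; exact hM.not_ge hy)
    simp only [mem_iUnion, Finset.mem_range]
    exact ⟨j, hj, y, hjy, by rwa [heq] at hy⟩
  calc P x {ω | ∃ y, M ≤ visits S v n y 0 ω}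
      ≤ ∑ j ∈ Finset.range n, ∑' y, P x ({ω | S (v + j) ω = y} ∩ {ω | M ≤ visits S v n y j ω}) :=
        ((measure_mono first_visit).trans (measure_biUnion_finset_le _ _)).trans
          (Finset.sum_le_sum fun j _ => measure_iUnion_le _)
    _ ≤ ∑ j ∈ Finset.range n, ∑' y, ENNReal.ofReal (k.factorial * G ^ k / M ^ k)
          * ENNReal.ofReal (heatKernel d (v + j) x y) := by
        gcongr with _ hj y
        exact hS.measure_eq_inter_le_visits_le hG x y hv (Finset.mem_range.1 hj).le k hM
    _ = ∑ _ ∈ Finset.range n, ENNReal.ofReal (k.factorial * G ^ k / M ^ k) := by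
        refine Finset.sum_congr rfl fun _ _ => ?_
        rw [ENNReal.tsum_mul_left, hS.tsum_heatKernel x (by positivity), mul_one]
    _ = _ := by
        rw [Finset.sum_const, Finset.card_range, nsmul_eq_mul, ENNReal.ofReal_mul n.cast_nonneg,
          ENNReal.ofReal_natCast]

end

/-! ### Tail and truncations of the scenery -/

/-- The value `r` if it exceeds the level `T`, and `0` otherwise. -/
noncomputable def highPart (T r : ℝ) : ENNReal := if T < r then ENNReal.ofReal r else 0

/-- The value `r` if it is at most the level `T`, and `0` otherwise. -/
noncomputable def lowPart (T r : ℝ) : ℝ := if r ≤ T then r else 0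

lemma measurable_highPart (T : ℝ) : Measurable (highPart T) :=
  .ite measurableSet_Ioi ENNReal.measurable_ofReal measurable_const

lemma measurable_lowPart (T : ℝ) : Measurable (lowPart T) :=
  .ite measurableSet_Iic measurable_id measurable_const

lemma lowPart_nonneg (T : ℝ) {r : ℝ} (hr : 0 ≤ r) : 0 ≤ lowPart T r := by
  unfold lowPart; split_ifs <;> linarith

lemma lowPart_le {T : ℝ} (hT : 0 ≤ T) (r : ℝ) : lowPart T r ≤ T := by
  unfold lowPart; split_ifs <;> linarith

lemma lowPart_le_self (T : ℝ) {r : ℝ} (hr : 0 ≤ r) : lowPart T r ≤ r := by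
  unfold lowPart; split_ifs <;> linarith

lemma lowPart_mono {T T' : ℝ} (hT : T ≤ T') {r : ℝ} (hr : 0 ≤ r) :
    lowPart T r ≤ lowPart T' r := by
  unfold lowPart; split_ifs <;> linarith

lemma highPart_anti {T T' : ℝ} (hT : T ≤ T') (r : ℝ) : highPart T' r ≤ highPart T r := by
  unfold highPart
  split_ifs with h' h
  · exact le_rfl
  · exact absurd (hT.trans_lt h') h
  · exact zero_le
  · exact le_rfl

lemma ofReal_le_lowPart_add_highPart (T r : ℝ) :
    ENNReal.ofReal r ≤ ENNReal.ofReal (lowPart T r) + highPart T r := by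
  unfold lowPart highPart
  split_ifs with h h' h'
  · exact le_self_add
  · exact le_self_add
  · exact le_add_self
  · exact absurd (not_le.1 h) h'

lemma highPart_le_mul_rpow {T : ℝ} (hT : 0 < T) {p : ℝ} (hp : 1 ≤ p) (r : ℝ) :
    highPart T r ≤ ENNReal.ofReal (T ^ (1 - p)) * ENNReal.ofReal (r ^ p) := by
  unfold highPart
  split_ifs with h
  · have hr : 0 < r := hT.trans h
    rw [← ENNReal.ofReal_mul (by positivity)]
    refine ENNReal.ofReal_le_ofReal ?_
    calc r = r ^ (1 - p) * r ^ p := by rw [← Real.rpow_add hr, sub_add_cancel, Real.rpow_one]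
      _ ≤ T ^ (1 - p) * r ^ p := by
        gcongr ?_ * _
        exact Real.rpow_le_rpow_of_nonpos hT h.le (by linarith)
  · exact zero_le

lemma exp_le_one_add_mul {x b : ℝ} (hx : 0 ≤ x) (hxb : x ≤ b) (hb : b ≤ 1) :
    Real.exp x ≤ 1 + (1 + b) * x := by
  have := (abs_le.1 (Real.abs_exp_sub_one_sub_id_le (by rw [abs_of_nonneg hx]; linarith))).2
  nlinarith

namespace IsScenery

variable {d : ℕ} {α : ℝ} {Ω : Type*} [MeasurableSpace Ω] {μ : Measure Ω}
  {z : (Fin d → ℤ) → Ω → ℝ}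

lemma eventually_tail_bounds (hz : IsScenery d α μ z) (hα : 0 < α) {ε : ℝ} (hε : 0 < ε) :
    ∀ᶠ r : ℝ in atTop, r ^ (-α - ε) ≤ (μ {ω | r < z 0 ω}).toReal ∧
      (μ {ω | r < z 0 ω}).toReal ≤ r ^ (-α + ε) := by
  have tail_near := hz.tail.eventually
    (Ioo_mem_nhds (show -α - ε < -α by linarith) (show -α < -α + ε by linarith))
  have tail_neg := hz.tail.eventually (Iio_mem_nhds (show -α < 0 by linarith))
  filter_upwards [tail_near, tail_neg, eventually_gt_atTop 1] with r ⟨h_lower, h_upper⟩ h_neg hr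
  set p := (μ {ω | r < z 0 ω}).toReal
  have hlog : 0 < Real.log r := Real.log_pos hr
  -- `log 0 = 0` in Lean, so a vanishing tail is excluded by the negative limit.
  have hp : 0 < p := by
    refine ENNReal.toReal_nonneg.lt_of_ne' fun hp => ?_
    rw [show p = 0 from hp, Real.log_zero, zero_div] at h_neg
    exact lt_irrefl _ h_neg
  rw [Real.rpow_def_of_pos (by linarith), Real.rpow_def_of_pos (by linarith),
    ← Real.le_log_iff_exp_le hp, ← Real.log_le_iff_le_exp hp]
  constructor
  · linarith [(lt_div_iff₀ hlog).1 h_lower]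
  · linarith [(div_lt_iff₀ hlog).1 h_upper]

lemma lintegral_comp (hz : IsScenery d α μ z) (x : Fin d → ℤ) {f : ℝ → ENNReal}
    (hf : Measurable f) : ∫⁻ ω, f (z x ω) ∂μ = ∫⁻ ω, f (z 0 ω) ∂μ :=
  ((hz.ident x).comp hf).lintegral_eq

theorem lintegral_rpow_lt_top (hz : IsScenery d α μ z) {p : ℝ} (hp : 1 ≤ p) (hpα : p < α) :
    ∫⁻ ω, ENNReal.ofReal (z 0 ω ^ p) ∂μ < ⊤ := by
  have := hz.prob
  obtain ⟨q, hpq, hqα⟩ := exists_between hpα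
  have tail := hz.eventually_tail_bounds (by linarith) (sub_pos.2 hqα)
  obtain ⟨R, hR⟩ := (tail.and (eventually_gt_atTop 1)).exists_forall_of_atTop
  have hR₁ : 1 < R := (hR R le_rfl).2
  rw [lintegral_rpow_eq_lintegral_meas_lt_mul μ (Eventually.of_forall (hz.nonneg 0))
    (hz.meas 0).aemeasurable (by linarith), ← Ioc_union_Ioi_eq_Ioi (zero_le_one.trans hR₁.le)]
  refine ENNReal.mul_lt_top ENNReal.ofReal_lt_top ((lintegral_union_le _ _ _).trans_lt
    (ENNReal.add_lt_top.2 ⟨?_, ?_⟩))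
  · calc ∫⁻ t in Ioc 0 R, μ {ω | t < z 0 ω} * ENNReal.ofReal (t ^ (p - 1))
        ≤ ∫⁻ _ in Ioc 0 R, 1 * ENNReal.ofReal (R ^ (p - 1)) :=
          setLIntegral_mono' measurableSet_Ioc fun t ht => mul_le_mul' prob_le_one
            (ENNReal.ofReal_le_ofReal (Real.rpow_le_rpow ht.1.le ht.2 (by linarith)))
      _ < ⊤ := by
          rw [setLIntegral_const, Real.volume_Ioc, one_mul]
          exact ENNReal.mul_lt_top ENNReal.ofReal_lt_top ENNReal.ofReal_lt_top
  · calc ∫⁻ t in Ioi R, μ {ω | t < z 0 ω} * ENNReal.ofReal (t ^ (p - 1))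
        ≤ ∫⁻ t in Ioi R, ENNReal.ofReal (t ^ (p - 1 - q)) := by
          refine setLIntegral_mono' measurableSet_Ioi fun t (ht : R < t) => ?_
          have ht₀ : 0 < t := by linarith
          have ht_tail : μ {ω | t < z 0 ω} ≤ ENNReal.ofReal (t ^ (-q)) := by
            rw [← ENNReal.ofReal_toReal (measure_ne_top μ _)]
            refine ENNReal.ofReal_le_ofReal ((hR t ht.le).1.2.trans_eq ?_)
            ring_nf
          calc μ {ω | t < z 0 ω} * ENNReal.ofReal (t ^ (p - 1))
              ≤ ENNReal.ofReal (t ^ (-q)) * ENNReal.ofReal (t ^ (p - 1)) := by gcongr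
            _ = ENNReal.ofReal (t ^ (p - 1 - q)) := by
              rw [← ENNReal.ofReal_mul (by positivity), ← Real.rpow_add ht₀]
              ring_nf
      _ < ⊤ := (integrableOn_Ioi_rpow_of_lt (by linarith) (by linarith)).setLIntegral_lt_top

lemma integrable (hz : IsScenery d α μ z) (hα : 1 < α) (x : Fin d → ℤ) : Integrable (z x) μ := by
  rw [(hz.ident x).integrable_iff]
  refine ⟨(hz.meas 0).aestronglyMeasurable, ?_⟩
  rw [hasFiniteIntegral_iff_ofReal (Eventually.of_forall (hz.nonneg 0))]
  simpa using hz.lintegral_rpow_lt_top le_rfl hα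

theorem exists_lintegral_highPart_le (hz : IsScenery d α μ z) {p : ℝ} (hp : 1 ≤ p)
    (hpα : p < α) : ∃ K > 0, ∀ T : ℝ, 0 < T → ∀ x,
      ∫⁻ ω, highPart T (z x ω) ∂μ ≤ ENNReal.ofReal (K * T ^ (1 - p)) := by
  set I := ∫⁻ ω, ENNReal.ofReal (z 0 ω ^ p) ∂μ
  have hI : I ≠ ⊤ := (hz.lintegral_rpow_lt_top hp hpα).ne
  refine ⟨I.toReal + 1, by positivity, fun T hT x => ?_⟩
  calc ∫⁻ ω, highPart T (z x ω) ∂μ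
      = ∫⁻ ω, highPart T (z 0 ω) ∂μ := hz.lintegral_comp x (measurable_highPart T)
    _ ≤ ∫⁻ ω, ENNReal.ofReal (T ^ (1 - p)) * ENNReal.ofReal (z 0 ω ^ p) ∂μ :=
        lintegral_mono fun ω => highPart_le_mul_rpow hT hp _
    _ = ENNReal.ofReal (I.toReal * T ^ (1 - p)) := by
        rw [lintegral_const_mul' _ _ ENNReal.ofReal_ne_top, ENNReal.ofReal_mul (by positivity),
          ENNReal.ofReal_toReal hI, mul_comm]
    _ ≤ ENNReal.ofReal ((I.toReal + 1) * T ^ (1 - p)) := by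
        gcongr
        linarith

lemma mgf_mul_lowPart_le (hz : IsScenery d α μ z) (hα : 1 < α) {T l M N : ℝ} (hT : 0 ≤ T)
    (hl : 0 ≤ l) (hlM : l * M * T ≤ 1) (hN : 0 ≤ N) (hNM : N ≤ M) (y : Fin d → ℤ) :
    mgf (fun ω => N * lowPart T (z y ω)) μ l ≤
      Real.exp (l * N * ((1 + l * M * T) * ∫ ω, z 0 ω ∂μ)) := by
  have := hz.prob
  have hM : 0 ≤ M := hN.trans hNM
  have integrable := (hz.integrable hα y).const_mul (l * N * (1 + l * M * T))
  have pointwise (ω : Ω) : Real.exp (l * (N * lowPart T (z y ω))) ≤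
      1 + l * N * (1 + l * M * T) * z y ω := by
    have hz₀ := hz.nonneg y ω
    have low_nonneg := lowPart_nonneg T hz₀
    have exponent_le : l * (N * lowPart T (z y ω)) ≤ l * M * T := by
      rw [mul_assoc l M T]
      gcongr
      exact lowPart_le hT _
    calc Real.exp (l * (N * lowPart T (z y ω)))
        ≤ 1 + (1 + l * M * T) * (l * (N * lowPart T (z y ω))) :=
          exp_le_one_add_mul (by positivity) exponent_le hlM
      _ ≤ 1 + (1 + l * M * T) * (l * (N * z y ω)) := by
          gcongr
          exact lowPart_le_self T hz₀
      _ = _ := by ring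
  calc mgf (fun ω => N * lowPart T (z y ω)) μ l
      ≤ ∫ ω, 1 + l * N * (1 + l * M * T) * z y ω ∂μ :=
        integral_mono_of_nonneg (Eventually.of_forall fun _ => (Real.exp_pos _).le)
          ((integrable_const _).add integrable) (Eventually.of_forall pointwise)
    _ = l * N * ((1 + l * M * T) * ∫ ω, z 0 ω ∂μ) + 1 := by
        rw [integral_add (integrable_const _) integrable, integral_const_mul,
          (hz.ident y).integral_eq, integral_const, probReal_univ, one_smul]
        ring
    _ ≤ _ := Real.add_one_le_exp _

theorem measure_le_sum_lowPart_le (hz : IsScenery d α μ z) (hα : 1 < α) {T l M : ℝ}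
    (hT : 0 ≤ T) (hl : 0 ≤ l) (hlM : l * M * T ≤ 1) (s : ℕ → (Fin d → ℤ)) (n : ℕ)
    (visits_le : ∀ y, (((Finset.range n).filter fun i => s i = y).card : ℝ) ≤ M) (c : ℝ) :
    μ {ω | c ≤ ∑ j ∈ Finset.range n, lowPart T (z (s j) ω)} ≤ ENNReal.ofReal
      (Real.exp (-l * c) * Real.exp (l * n * ((1 + l * M * T) * ∫ ω, z 0 ω ∂μ))) := by
  have := hz.prob
  set N : (Fin d → ℤ) → ℕ := fun y => ((Finset.range n).filter fun i => s i = y).card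
  set range := (Finset.range n).image s
  set X : (Fin d → ℤ) → Ω → ℝ := fun y ω => N y * lowPart T (z y ω)
  have measurable_X (y) : Measurable (X y) := ((measurable_lowPart T).comp (hz.meas y)).const_mul _
  have indep_X : iIndepFun X μ :=
    hz.indep.comp (fun y r => (N y : ℝ) * lowPart T r) fun y => (measurable_lowPart T).const_mul _
  have sum_X (ω) : ∑ j ∈ Finset.range n, lowPart T (z (s j) ω) = (∑ y ∈ range, X y) ω := by
    rw [Finset.sum_comp (fun y => lowPart T (z y ω)) s, Finset.sum_apply]
    exact Finset.sum_congr rfl fun y _ => nsmul_eq_mul _ _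
  have sum_N : ∑ y ∈ range, (N y : ℝ) = n := by
    have := Finset.card_eq_sum_card_image s (Finset.range n)
    rw [Finset.card_range] at this
    exact_mod_cast this.symm
  have integrable_exp : Integrable (fun ω => Real.exp (l * (∑ y ∈ range, X y) ω)) μ := by
    have measurable_sum : Measurable (∑ y ∈ range, X y) :=
      Finset.sum_induction X Measurable (fun _ _ => .add) measurable_zero fun y _ => measurable_X y
    refine .of_bound (measurable_sum.const_mul l).exp.aestronglyMeasurable
       (Real.exp (l * (n * T))) (Eventually.of_forall fun ω => ?_)
    rw [Real.norm_eq_abs, Real.abs_exp, ← sum_X]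
    gcongr
    refine (Finset.sum_le_sum fun j _ => lowPart_le hT _).trans_eq ?_
    rw [Finset.sum_const, Finset.card_range, nsmul_eq_mul]
  simp_rw [sum_X]
  rw [← ENNReal.ofReal_toReal (measure_ne_top μ _)]
  refine ENNReal.ofReal_le_ofReal ((measure_ge_le_exp_mul_mgf c hl integrable_exp).trans ?_)
  gcongr
  calc mgf (∑ y ∈ range, X y) μ l
      = ∏ y ∈ range, mgf (X y) μ l := indep_X.mgf_sum measurable_X _
    _ ≤ ∏ y ∈ range, Real.exp (l * N y * ((1 + l * M * T) * ∫ ω, z 0 ω ∂μ)) :=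
        Finset.prod_le_prod (fun _ _ => mgf_nonneg) fun y _ =>
          hz.mgf_mul_lowPart_le hα hT hl hlM (N y).cast_nonneg (visits_le y) y
    _ = _ := by rw [← Real.exp_sum, ← Finset.sum_mul, ← Finset.mul_sum, sum_N]

end IsScenery

/-! ### The integral of the truncated scenery -/

theorem ae_eventually_le_of_lintegral_le {Ω : Type*} [MeasurableSpace Ω] {μ : Measure Ω}
    {f : ℕ → Ω → ENNReal} (hf : ∀ n, AEMeasurable (f n) μ) {a b : ℕ → ℝ}
    (ha : ∀ᶠ n in atTop, 0 < a n) (hb : Summable b)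
    (h : ∀ᶠ n in atTop, ∫⁻ ω, f n ω ∂μ ≤ ENNReal.ofReal (a n * b n)) :
    ∀ᵐ ω ∂μ, ∀ᶠ n in atTop, f n ω ≤ ENNReal.ofReal (a n) := by
  obtain ⟨N, hN⟩ := (ha.and h).exists_forall_of_atTop
  have markov (n : ℕ) :
      μ {ω | ENNReal.ofReal (a (n + N)) ≤ f (n + N) ω} ≤ ENNReal.ofReal (b (n + N)) := by
    obtain ⟨ha, h⟩ := hN (n + N) le_add_self
    calc μ {ω | ENNReal.ofReal (a (n + N)) ≤ f (n + N) ω}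
        ≤ (∫⁻ ω, f (n + N) ω ∂μ) / ENNReal.ofReal (a (n + N)) :=
          meas_ge_le_lintegral_div (hf _) (ENNReal.ofReal_pos.2 ha).ne' ENNReal.ofReal_ne_top
      _ ≤ ENNReal.ofReal (a (n + N) * b (n + N)) / ENNReal.ofReal (a (n + N)) := by gcongr
      _ = ENNReal.ofReal (b (n + N)) := by
        rw [← ENNReal.ofReal_div_of_pos ha, mul_div_cancel_left₀ _ ha.ne']
  have summable : ∑' n, μ {ω | ENNReal.ofReal (a (n + N)) ≤ f (n + N) ω} ≠ ⊤ :=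
    ne_top_of_le_ne_top ((summable_nat_add_iff N).2 hb).tsum_ofReal_ne_top
      (ENNReal.tsum_le_tsum markov)
  filter_upwards [ae_eventually_notMem summable] with ω hω
  rw [← map_add_atTop_eq_nat N, eventually_map]
  exact hω.mono fun n hn => (not_le.1 hn).le

lemma lintegral_Ioc_natCast {f : ℝ → ENNReal} (hf : Measurable f) (n : ℕ) :
    ∫⁻ u in Ioc (0 : ℝ) n, f u = ∫⁻ v in Ioc (0 : ℝ) 1, ∑ j ∈ Finset.range n, f (v + j) := by
  induction n with
  | zero => simp
  | succ n ih =>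
    have shift : ∫⁻ u in Ioc (n : ℝ) (n + 1), f u = ∫⁻ v in Ioc (0 : ℝ) 1, f (v + n) := by
      rw [← (measurePreserving_add_right volume (n : ℝ)).setLIntegral_comp_preimage
        measurableSet_Ioc hf]
      simp
    rw [Nat.cast_succ, ← Ioc_union_Ioc_eq_Ioc n.cast_nonneg (by linarith : (n : ℝ) ≤ n + 1),
      lintegral_union measurableSet_Ioc (Ioc_disjoint_Ioc_of_le le_rfl), ih, shift]
    simp_rw [Finset.sum_range_succ]
    exact (lintegral_add_right _ (hf.comp (measurable_add_const (n : ℝ)))).symm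

lemma lintegral_Ioc_natCast_le {f : ℝ → ENNReal} (hf : Measurable f) {T : ENNReal}
    (f_le : ∀ u, f u ≤ T) (n : ℕ) (a : ENNReal) :
    ∫⁻ u in Ioc (0 : ℝ) n, f u ≤
      a + n * T * volume.restrict (Ioc 0 1) {v | a ≤ ∑ j ∈ Finset.range n, f (v + j)} := by
  set W : Set ℝ := {v | a ≤ ∑ j ∈ Finset.range n, f (v + j)}
  have hW : MeasurableSet W := measurableSet_le measurable_const <|
    Finset.measurable_fun_sum _ fun j _ => hf.comp (measurable_add_const (j : ℝ))
  have sum_le (v : ℝ) : ∑ j ∈ Finset.range n, f (v + j) ≤ a + n * T * W.indicator 1 v := by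
    by_cases h : v ∈ W
    · rw [indicator_of_mem h, Pi.one_apply, mul_one]
      refine le_add_left ((Finset.sum_le_sum fun j _ => f_le _).trans_eq ?_)
      rw [Finset.sum_const, Finset.card_range, nsmul_eq_mul]
    · exact le_add_right (not_le.1 h).le
  rw [lintegral_Ioc_natCast hf]
  refine (lintegral_mono sum_le).trans_eq ?_
  rw [lintegral_add_left measurable_const, lintegral_const_mul _ (measurable_one.indicator hW),
    lintegral_indicator_one hW, setLIntegral_const, Real.volume_Ioc, sub_zero,
    ENNReal.ofReal_one, mul_one]

/-- Discretization: the integral of `f` is the average over `v ∈ (0, 1]` of its sums along the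
times `v + j`, so it is large only if many of these sums are. -/
theorem measure_le_lintegral_Ioc_le {E : Type*} [MeasurableSpace E] {Q : Measure E} [SFinite Q]
    {f : E → ℝ → ENNReal} (hf : Measurable (Function.uncurry f)) {T c c' : ℝ}
    (f_le : ∀ p u, f p u ≤ ENNReal.ofReal T) (hc : 0 ≤ c) (hcc' : c < c') {n : ℕ} (hn : n ≠ 0)
    {β : ENNReal} (hβ : ∀ v, 0 ≤ v →
      Q {p | ENNReal.ofReal (c * n) ≤ ∑ j ∈ Finset.range n, f p (v + j)} ≤ β) :
    Q {p | ENNReal.ofReal (c' * n) ≤ ∫⁻ u in Ioc (0 : ℝ) n, f p u} ≤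
      ENNReal.ofReal (T / (c' - c)) * β := by
  have hn₀ : (0 : ℝ) < n := by positivity
  have hcc₀ : 0 < c' - c := sub_pos.2 hcc'
  set W : Set (E × ℝ) := {q | ENNReal.ofReal (c * n) ≤ ∑ j ∈ Finset.range n, f q.1 (q.2 + j)}
  have hW : MeasurableSet W := measurableSet_le measurable_const <|
    Finset.measurable_fun_sum _ fun j _ => hf.comp
      (measurable_fst.prodMk (measurable_snd.add_const _))
  set L : E → ENNReal := fun p => volume.restrict (Ioc 0 1) (Prod.mk p ⁻¹' W)
  have measurable_L : Measurable L := measurable_measure_prodMk_left hW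
  have integral_le (p : E) : ∫⁻ u in Ioc (0 : ℝ) n, f p u ≤
      ENNReal.ofReal (c * n) + n * ENNReal.ofReal T * L p :=
    lintegral_Ioc_natCast_le (hf.comp measurable_prodMk_left) (f_le p) n _
  have lintegral_L_le : ∫⁻ p, L p ∂Q ≤ β := by
    rw [← Measure.prod_apply hW, Measure.prod_apply_symm hW]
    calc ∫⁻ v in Ioc (0 : ℝ) 1, Q ((fun p => (p, v)) ⁻¹' W)
        ≤ ∫⁻ _ in Ioc (0 : ℝ) 1, β :=
          setLIntegral_mono' measurableSet_Ioc fun v hv => hβ v hv.1.le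
      _ = β := by simp
  calc Q {p | ENNReal.ofReal (c' * n) ≤ ∫⁻ u in Ioc (0 : ℝ) n, f p u}
      ≤ Q {p | ENNReal.ofReal ((c' - c) * n) ≤ n * ENNReal.ofReal T * L p} := by
        refine measure_mono fun p hp => ?_
        rw [mem_ofPred_eq] at hp
        rw [mem_ofPred_eq, sub_mul, ENNReal.ofReal_sub _ (by positivity)]
        exact tsub_le_iff_left.2 (hp.trans (integral_le p))
    _ ≤ (∫⁻ p, n * ENNReal.ofReal T * L p ∂Q) / ENNReal.ofReal ((c' - c) * n) :=
        meas_ge_le_lintegral_div (measurable_L.const_mul _).aemeasurable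
          (ENNReal.ofReal_pos.2 (mul_pos hcc₀ hn₀)).ne' ENNReal.ofReal_ne_top
    _ = ENNReal.ofReal (T / (c' - c)) * ∫⁻ p, L p ∂Q := by
        rw [lintegral_const_mul _ measurable_L, ENNReal.mul_div_right_comm,
          ← ENNReal.ofReal_natCast n, ← ENNReal.ofReal_mul hn₀.le,
          ← ENNReal.ofReal_div_of_pos (mul_pos hcc₀ hn₀), mul_comm (n : ℝ) T,
          mul_div_mul_right _ _ hn₀.ne']
    _ ≤ _ := by gcongr

lemma eventually_mul_rpow_le_rpow (C : ℝ) {a b : ℝ} (hab : a < b) :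
    ∀ᶠ x : ℝ in atTop, C * x ^ a ≤ x ^ b := by
  filter_upwards [(tendsto_rpow_atTop (sub_pos.2 hab)).eventually_ge_atTop C,
    eventually_gt_atTop 0] with x hC hx
  calc C * x ^ a ≤ x ^ (b - a) * x ^ a := by gcongr
    _ = x ^ b := by rw [← Real.rpow_add hx, sub_add_cancel]

lemma eventually_mul_rpow_mul_exp_neg_le_rpow {C g s : ℝ} (hC : 0 ≤ C) (hg : 0 < g) (hs : 0 < s)
    (a b : ℝ) : ∀ᶠ x : ℝ in atTop, C * x ^ a * Real.exp (-g * x ^ s) ≤ x ^ b := by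
  have decay := ((isLittleO_exp_neg_mul_rpow_atTop hg ((b - a - 1) / s)).comp_tendsto
    (tendsto_rpow_atTop hs)).bound one_pos
  filter_upwards [decay, eventually_mul_rpow_le_rpow C (sub_one_lt b), eventually_gt_atTop 0]
    with x hexp hpow hx
  simp only [Function.comp, Real.norm_eq_abs, Real.abs_exp, one_mul] at hexp
  rw [← Real.rpow_mul hx.le, mul_div_cancel₀ _ hs.ne', abs_of_pos (by positivity)] at hexp
  calc C * x ^ a * Real.exp (-g * x ^ s) ≤ C * x ^ a * x ^ (b - a - 1) := by gcongr
    _ = C * x ^ (b - 1) := by rw [mul_assoc, ← Real.rpow_add hx]; ring_nf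
    _ ≤ x ^ b := hpow

/-- In the application `x ^ (-1 + δ / 2)` is the Chernoff parameter `l`, `x ^ (δ / 4)` bounds the
local times and `x ^ (1 - δ)` is the truncation level, so that `l n → ∞` for `n = x` while the
product of all three tends to `0`. -/
lemma eventually_chernoff_bound_le_rpow {A C m c δ K : ℝ} (hC : 0 ≤ C) (hmc : m < c)
    (hδ : 0 < δ) {k : ℕ} (hk : 2 - δ - δ / 4 * k < -K) :
    ∀ᶠ x : ℝ in atTop, C * x ^ (1 - δ) * (x * (A / (x ^ (δ / 4)) ^ k) +
      Real.exp (-x ^ (-1 + δ / 2) * (c * x)) *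
        Real.exp (x ^ (-1 + δ / 2) * x * ((1 + x ^ (-(δ / 4))) * m))) ≤ x ^ (-K) := by
  set g := (c - m) / 2 with hg
  have hg₀ : 0 < g := by linarith
  have mean_le : ∀ᶠ x : ℝ in atTop, x ^ (-(δ / 4)) * m ≤ g :=
    ((tendsto_rpow_neg_atTop (show 0 < δ / 4 by positivity)).mul_const m).eventually_le_const
      (by simpa using hg₀)
  filter_upwards [mean_le, eventually_mul_rpow_le_rpow (2 * (C * A)) hk,
    eventually_mul_rpow_mul_exp_neg_le_rpow (C := 2 * C) (by positivity) hg₀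
      (show 0 < δ / 2 by positivity) (1 - δ) (-K), eventually_gt_atTop 0]
    with x mean_le poly_le exp_le hx
  have visits_term : C * x ^ (1 - δ) * (x * (A / (x ^ (δ / 4)) ^ k)) =
      C * A * x ^ (2 - δ - δ / 4 * k) := by
    rw [Real.rpow_sub hx (2 - δ), show 2 - δ = 1 - δ + 1 by ring, Real.rpow_add_one hx.ne',
      Real.rpow_mul hx.le, Real.rpow_natCast]
    ring
  have exponent_le : -x ^ (-1 + δ / 2) * (c * x) +
      x ^ (-1 + δ / 2) * x * ((1 + x ^ (-(δ / 4))) * m) ≤ -g * x ^ (δ / 2) := by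
    have hln : x ^ (-1 + δ / 2) * x = x ^ (δ / 2) := by
      rw [← Real.rpow_add_one hx.ne']
      ring_nf
    calc _ = x ^ (δ / 2) * (m - c + x ^ (-(δ / 4)) * m) := by rw [← hln]; ring
      _ ≤ x ^ (δ / 2) * (m - c + g) := by gcongr
      _ = -g * x ^ (δ / 2) := by rw [hg]; ring
  rw [← Real.exp_add, mul_add, visits_term]
  have : C * x ^ (1 - δ) * Real.exp (-x ^ (-1 + δ / 2) * (c * x) +
      x ^ (-1 + δ / 2) * x * ((1 + x ^ (-(δ / 4))) * m)) ≤
      C * x ^ (1 - δ) * Real.exp (-g * x ^ (δ / 2)) := by gcongr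
  linarith

/-- The integral `∫₀ᵗ f(z(S_u)) du` of a function of the scenery along the walk. -/
noncomputable def sceneryIntegral {d : ℕ} {Ωz Ωw : Type*} (f : ℝ → ENNReal)
    (z : (Fin d → ℤ) → Ωz → ℝ) (S : ℝ → Ωw → (Fin d → ℤ)) (t : ℝ) (ζ : Ωz) (ω : Ωw) : ENNReal :=
  ∫⁻ u in Ioc (0 : ℝ) t, f (z (S u ω) ζ)

lemma sceneryIntegral_mono {d : ℕ} {Ωz Ωw : Type*} {z : (Fin d → ℤ) → Ωz → ℝ}
    (nonneg : ∀ x ζ, 0 ≤ z x ζ) {f g : ℝ → ENNReal} (hfg : ∀ r, 0 ≤ r → f r ≤ g r) {s t : ℝ}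
    (hst : s ≤ t) (S : ℝ → Ωw → (Fin d → ℤ)) (ζ : Ωz) (ω : Ωw) :
    sceneryIntegral f z S s ζ ω ≤ sceneryIntegral g z S t ζ ω :=
  lintegral_mono' (Measure.restrict_mono (Ioc_subset_Ioc_right hst) le_rfl)
    fun _ => hfg _ (nonneg _ _)

section

variable {d : ℕ} {α : ℝ} {Ωz Ωw : Type*} [MeasurableSpace Ωz] [MeasurableSpace Ωw]
  {μ : Measure Ωz} {z : (Fin d → ℤ) → Ωz → ℝ} {P : (Fin d → ℤ) → Measure Ωw}
  {S : ℝ → Ωw → (Fin d → ℤ)}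

lemma IsScenery.measurable_uncurry (hz : IsScenery d α μ z) :
    Measurable fun p : Ωz × (Fin d → ℤ) => z p.2 p.1 :=
  measurable_from_prod_countable_left hz.meas

lemma IsScenery.measurable_comp_walk (hz : IsScenery d α μ z) (hS : IsCTSRW d P S) :
    Measurable fun p : (Ωz × Ωw) × ℝ => z (S p.2 p.1.2) p.1.1 :=
  hz.measurable_uncurry.comp ((measurable_fst.comp measurable_fst).prodMk
    (hS.meas.comp (measurable_snd.prodMk (measurable_snd.comp measurable_fst))))

lemma measurable_sceneryIntegral (hz : IsScenery d α μ z) (hS : IsCTSRW d P S)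
    {f : ℝ → ENNReal} (hf : Measurable f) (t : ℝ) :
    Measurable fun p : Ωz × Ωw => sceneryIntegral f z S t p.1 p.2 :=
  (hf.comp (hz.measurable_comp_walk hS)).lintegral_prod_right'

theorem prod_measure_le_sum_lowPart_le (hz : IsScenery d α μ z) (hS : IsCTSRW d P S)
    (hα : 1 < α) {G : ℝ} (hG : IsGreenBound d G) {T l M : ℝ} (hT : 0 ≤ T) (hl : 0 ≤ l)
    (hM : 0 < M) (hlM : l * M * T ≤ 1) (c : ℝ) (n k : ℕ) {v : ℝ} (hv : 0 ≤ v) :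
    (μ.prod (P 0)) {p | c ≤ ∑ j ∈ Finset.range n, lowPart T (z (S (v + j) p.2) p.1)} ≤
      ENNReal.ofReal (n * (k.factorial * G ^ k / M ^ k)) + ENNReal.ofReal
        (Real.exp (-l * c) * Real.exp (l * n * ((1 + l * M * T) * ∫ ζ, z 0 ζ ∂μ))) := by
  have := hz.prob
  have := hS.prob 0
  set bad : Set Ωw := {ω | ∃ y, M ≤ visits S v n y 0 ω}
  set E := ENNReal.ofReal
    (Real.exp (-l * c) * Real.exp (l * n * ((1 + l * M * T) * ∫ ζ, z 0 ζ ∂μ)))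
  have quenched (ω : Ωw) :
      μ {ζ | c ≤ ∑ j ∈ Finset.range n, lowPart T (z (S (v + j) ω) ζ)} ≤ bad.indicator 1 ω + E := by
    by_cases h : ω ∈ bad
    · rw [indicator_of_mem h]
      exact prob_le_one.trans le_self_add
    · rw [indicator_of_notMem h, zero_add]
      refine hz.measure_le_sum_lowPart_le hα hT hl hlM (fun i => S (v + i) ω) n (fun y => ?_) c
      simp only [bad, mem_ofPred_eq, not_exists, not_le] at h
      have visits_eq : visits S v n y 0 ω =
          ((Finset.range n).filter fun i : ℕ => S (v + i) ω = y).card := by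
        rw [visits, Finset.card_filter, Finset.range_eq_Ico]
      exact visits_eq ▸ (h y).le
  have measurableSet : MeasurableSet
      {p : Ωz × Ωw | c ≤ ∑ j ∈ Finset.range n, lowPart T (z (S (v + j) p.2) p.1)} :=
    measurableSet_le measurable_const <| Finset.measurable_fun_sum _ fun j _ =>
      (measurable_lowPart T).comp
        ((hz.measurable_comp_walk hS).comp (measurable_id.prodMk measurable_const))
  rw [Measure.prod_apply_symm measurableSet]
  calc ∫⁻ ω, μ {ζ | c ≤ ∑ j ∈ Finset.range n, lowPart T (z (S (v + j) ω) ζ)} ∂(P 0)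
      ≤ ∫⁻ ω, bad.indicator 1 ω + E ∂(P 0) := lintegral_mono quenched
    _ = ∫⁻ ω, bad.indicator 1 ω ∂(P 0) + E := by
        rw [lintegral_add_right _ measurable_const, lintegral_const, measure_univ, mul_one]
    _ ≤ _ := by
        gcongr
        exact (lintegral_indicator_one_le _).trans (hS.measure_exists_le_visits_le hG 0 hv n k hM)

theorem prod_measure_le_sceneryIntegral_lowPart_le (hz : IsScenery d α μ z)
    (hS : IsCTSRW d P S) (hα : 1 < α) {G : ℝ} (hG : IsGreenBound d G) {T l M c c' : ℝ}
    (hT : 0 ≤ T) (hl : 0 ≤ l) (hM : 0 < M) (hlM : l * M * T ≤ 1) (hc : 0 ≤ c) (hcc' : c < c')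
    {n : ℕ} (hn : n ≠ 0) (k : ℕ) :
    (μ.prod (P 0)) {p | ENNReal.ofReal (c' * n) ≤
        sceneryIntegral (fun r => .ofReal (lowPart T r)) z S n p.1 p.2} ≤
      ENNReal.ofReal (T / (c' - c)) * (ENNReal.ofReal (n * (k.factorial * G ^ k / M ^ k)) +
        ENNReal.ofReal (Real.exp (-l * (c * n)) *
          Real.exp (l * n * ((1 + l * M * T) * ∫ ζ, z 0 ζ ∂μ)))) := by
  have := hz.prob
  have := hS.prob 0
  refine measure_le_lintegral_Ioc_le (E := Ωz × Ωw)
    (f := fun p u => .ofReal (lowPart T (z (S u p.2) p.1)))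
    (ENNReal.measurable_ofReal.comp ((measurable_lowPart T).comp (hz.measurable_comp_walk hS)))
    (fun p u => ENNReal.ofReal_le_ofReal (lowPart_le hT _)) hc hcc' hn fun v hv => ?_
  convert prod_measure_le_sum_lowPart_le hz hS hα hG hT hl hM hlM (c * n) n k hv using 4 with p
  have low_nonneg (j : ℕ) : 0 ≤ lowPart T (z (S (v + j) p.2) p.1) :=
    lowPart_nonneg T (hz.nonneg _ _)
  rw [← ENNReal.ofReal_sum_of_nonneg fun j _ => low_nonneg j,
    ENNReal.ofReal_le_ofReal_iff (Finset.sum_nonneg fun j _ => low_nonneg j)]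

theorem eventually_prod_measure_le_sceneryIntegral_lowPart_le (hz : IsScenery d α μ z)
    (hS : IsCTSRW d P S) (hd : 3 ≤ d) (hα : 1 < α) {δ : ℝ} (hδ : 0 < δ) {c : ℝ}
    (hc : ∫ ζ, z 0 ζ ∂μ < c) (K : ℝ) :
    ∀ᶠ n : ℕ in atTop, (μ.prod (P 0)) {p | ENNReal.ofReal (c * n) ≤
        sceneryIntegral (fun r => .ofReal (lowPart ((n : ℝ) ^ (1 - δ)) r)) z S n p.1 p.2} ≤
      ENNReal.ofReal ((n : ℝ) ^ (-K)) := by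
  obtain ⟨G, hG⟩ := exists_isGreenBound hd
  have hG₀ : 0 ≤ G := zero_le_one.trans hG.one_le
  have mean_nonneg : 0 ≤ ∫ ζ, z 0 ζ ∂μ := integral_nonneg fun ζ => hz.nonneg 0 ζ
  obtain ⟨c₁, hc₁, hc₁c⟩ := exists_between hc
  have hcc₁ : 0 < c - c₁ := sub_pos.2 hc₁c
  obtain ⟨k, hk⟩ := exists_nat_gt ((K + 2) / (δ / 4))
  have hk' : 2 - δ - δ / 4 * k < -K := by
    rw [div_lt_iff₀ (by positivity)] at hk
    linarith
  filter_upwards [tendsto_natCast_atTop_atTop.eventually (eventually_chernoff_bound_le_rpow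
    (A := k.factorial * G ^ k) (inv_nonneg.2 hcc₁.le) hc₁ hδ hk'), eventually_ge_atTop 1]
    with n chernoff_le hn
  have hn₁ : (1 : ℝ) ≤ n := Nat.one_le_cast.2 hn
  have hn₀ : (0 : ℝ) < n := by linarith
  have hlMT : (n : ℝ) ^ (-1 + δ / 2) * (n : ℝ) ^ (δ / 4) * (n : ℝ) ^ (1 - δ) =
      (n : ℝ) ^ (-(δ / 4)) := by
    rw [← Real.rpow_add hn₀, ← Real.rpow_add hn₀]
    ring_nf
  refine (prod_measure_le_sceneryIntegral_lowPart_le hz hS hα hG (T := (n : ℝ) ^ (1 - δ))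
    (l := (n : ℝ) ^ (-1 + δ / 2)) (M := (n : ℝ) ^ (δ / 4)) (by positivity) (by positivity)
    (by positivity) (hlMT ▸ Real.rpow_le_one_of_one_le_of_nonpos hn₁ (by linarith))
    (mean_nonneg.trans hc₁.le) hc₁c (by lia) k).trans ?_
  rw [← ENNReal.ofReal_add (by positivity) (by positivity), ← ENNReal.ofReal_mul (by positivity),
    hlMT, div_eq_inv_mul]
  exact ENNReal.ofReal_le_ofReal chernoff_le

lemma ae_eventually_measure_le_sceneryIntegral_lowPart_natCast_le (hz : IsScenery d α μ z)
    (hS : IsCTSRW d P S) (hd : 3 ≤ d) (hα : 1 < α) {δ : ℝ} (hδ : 0 < δ) {c : ℝ}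
    (hc : ∫ ζ, z 0 ζ ∂μ < c) (K : ℝ) :
    ∀ᵐ ζ ∂μ, ∀ᶠ n : ℕ in atTop, P 0 {ω | ENNReal.ofReal (c * n) ≤
        sceneryIntegral (fun r => .ofReal (lowPart ((n : ℝ) ^ (1 - δ)) r)) z S n ζ ω} ≤
      ENNReal.ofReal ((n : ℝ) ^ (-K)) := by
  have := hS.prob 0
  have measurableSet (n : ℕ) : MeasurableSet {p : Ωz × Ωw | ENNReal.ofReal (c * n) ≤
      sceneryIntegral (fun r => .ofReal (lowPart ((n : ℝ) ^ (1 - δ)) r)) z S n p.1 p.2} :=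
    measurableSet_le measurable_const
      (measurable_sceneryIntegral hz hS (measurable_lowPart _).ennreal_ofReal n)
  refine ae_eventually_le_of_lintegral_le (b := fun n : ℕ => (n : ℝ) ^ (-2 : ℝ))
    (fun n => (measurable_measure_prodMk_left (measurableSet n)).aemeasurable) ?_
    (Real.summable_nat_rpow.2 (by norm_num)) ?_
  · filter_upwards [eventually_gt_atTop 0] with n hn
    positivity
  · filter_upwards [eventually_prod_measure_le_sceneryIntegral_lowPart_le hz hS hd hα hδ hc
      (K + 2), eventually_gt_atTop 0] with n hn hn₀
    rw [← Real.rpow_add (Nat.cast_pos.2 hn₀), ← neg_add]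
    exact (Measure.prod_apply (measurableSet n)).symm.trans_le hn

theorem ae_eventually_measure_le_sceneryIntegral_lowPart_le (hz : IsScenery d α μ z)
    (hS : IsCTSRW d P S) (hd : 3 ≤ d) (hα : 1 < α) {δ : ℝ} (hδ : 0 < δ) (hδ₁ : δ ≤ 1) {c : ℝ}
    (hc : ∫ ζ, z 0 ζ ∂μ < c) {K : ℝ} (hK : 0 ≤ K) :
    ∀ᵐ ζ ∂μ, ∀ᶠ t : ℝ in atTop, P 0 {ω | ENNReal.ofReal (c * t) ≤
        sceneryIntegral (fun r => .ofReal (lowPart (t ^ (1 - δ)) r)) z S t ζ ω} ≤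
      ENNReal.ofReal (t ^ (-K)) := by
  obtain ⟨c', hc', hcc'⟩ := exists_between hc
  have hc'₀ : 0 ≤ c' := (integral_nonneg fun ζ => hz.nonneg 0 ζ).trans hc'.le
  filter_upwards [ae_eventually_measure_le_sceneryIntegral_lowPart_natCast_le hz hS hd hα hδ hc'
    K] with ζ hζ
  filter_upwards [tendsto_nat_ceil_atTop.eventually hζ, eventually_gt_atTop 0,
    eventually_ge_atTop (c' / (c - c'))] with t ht ht₀ ht_large
  have le_ceil := Nat.le_ceil t
  have ceil_le : c' * ⌈t⌉₊ ≤ c * t := by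
    rw [div_le_iff₀ (sub_pos.2 hcc')] at ht_large
    nlinarith [Nat.ceil_lt_add_one ht₀.le]
  refine ((measure_mono fun ω hω => ?_).trans ht).trans
    (ENNReal.ofReal_le_ofReal (Real.rpow_le_rpow_of_nonpos ht₀ le_ceil (by linarith)))
  refine ((ENNReal.ofReal_le_ofReal ceil_le).trans hω).trans
    (sceneryIntegral_mono hz.nonneg (fun r hr => ENNReal.ofReal_le_ofReal ?_) le_ceil S ζ ω)
  exact lowPart_mono (Real.rpow_le_rpow ht₀.le le_ceil (by linarith)) hr

end

/-! ### Upper bound -/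

lemma summable_two_pow_rpow {e : ℝ} (he : e < 0) : Summable fun k : ℕ => ((2 : ℝ) ^ k) ^ e := by
  refine (summable_geometric_of_lt_one (by positivity)
    (Real.rpow_lt_one_of_one_lt_of_neg one_lt_two he)).congr fun k => ?_
  simp_rw [← Real.rpow_natCast, ← Real.rpow_mul two_pos.le, mul_comm]

lemma eventually_exists_two_pow_near {p : ℕ → Prop} (hp : ∀ᶠ k in atTop, p k) :
    ∀ᶠ t : ℝ in atTop, ∃ k, p k ∧ (2 : ℝ) ^ k ≤ t ∧ t < 2 * 2 ^ k := by
  obtain ⟨N, hN⟩ := hp.exists_forall_of_atTop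
  filter_upwards [eventually_ge_atTop ((2 : ℝ) ^ N), eventually_ge_atTop 1] with t ht ht₁
  obtain ⟨k, hk, hk'⟩ := exists_nat_pow_near ht₁ one_lt_two
  have : N < k + 1 := (pow_lt_pow_iff_right₀ one_lt_two).1 (ht.trans_lt hk')
  exact ⟨k, hN k (by lia), hk, by rwa [← pow_succ']⟩

lemma rpow_le_two_rpow_abs_mul_rpow {a b : ℝ} (ha : 0 < a) (hb : 0 < b) (hab : a ≤ 2 * b)
    (hba : b ≤ 2 * a) (e : ℝ) : a ^ e ≤ 2 ^ |e| * b ^ e := by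
  rcases le_total 0 e with he | he
  · rw [abs_of_nonneg he, ← Real.mul_rpow two_pos.le hb.le]
    exact Real.rpow_le_rpow ha.le hab he
  · calc a ^ e = 2 ^ |e| * (2 * a) ^ e := by
          rw [Real.mul_rpow two_pos.le ha.le, ← mul_assoc, ← Real.rpow_add two_pos,
            abs_of_nonpos he, neg_add_cancel, Real.rpow_zero, one_mul]
      _ ≤ 2 ^ |e| * b ^ e := by
          gcongr ?_ * ?_
          exact Real.rpow_le_rpow_of_nonpos hb hba he

lemma setLIntegral_Ioc_comp_sub_left (f : ℝ → ENNReal) (t : ℝ) :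
    ∫⁻ u in Ioc 0 t, f (t - u) = ∫⁻ u in Ioc 0 t, f u := by
  have h := (Measure.measurePreserving_sub_left volume t).setLIntegral_comp_preimage_emb
    (MeasurableEquiv.subLeft t).measurableEmbedding f (Ico 0 t)
  rwa [preimage_const_sub_Ico, sub_zero, sub_self, restrict_Ico_eq_restrict_Ioc] at h

theorem IsCTSRW.exists_setLIntegral_lintegral_bridge_le {d : ℕ} {Ω : Type*} [MeasurableSpace Ω]
    {P : (Fin d → ℤ) → Measure Ω} {S : ℝ → Ω → (Fin d → ℤ)} (hS : IsCTSRW d P S) :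
    ∃ C > 0, ∀ x w t, 0 < t → ∀ f : (Fin d → ℤ) → ENNReal,
      ∫⁻ ω in {ω | S t ω = w}, (∫⁻ u in Ioc 0 t, f (S u ω)) ∂(P x) ≤
        ENNReal.ofReal (C * t ^ (-((d : ℝ) / 2))) *
          (∫⁻ ω, (∫⁻ u in Ioc 0 t, f (S u ω)) ∂(P x) +
            ∫⁻ ω, (∫⁻ u in Ioc 0 t, f (S u ω)) ∂(P w)) := by
  obtain ⟨C, hC, bridge⟩ := hS.exists_setLIntegral_bridge_le
  refine ⟨C, hC, fun x w t ht f => ?_⟩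
  have := hS.prob
  have measurable_f : Measurable fun q : ℝ × Ω => f (S q.1 q.2) :=
    (measurable_of_countable f).comp hS.meas
  have swap (ν : Measure Ω) [SFinite ν] : ∫⁻ ω, (∫⁻ u in Ioc 0 t, f (S u ω)) ∂ν =
      ∫⁻ u in Ioc 0 t, ∫⁻ ω, f (S u ω) ∂ν :=
    lintegral_lintegral_swap (measurable_f.comp measurable_swap).aemeasurable
  rw [swap, swap, swap, ← setLIntegral_Ioc_comp_sub_left (fun u => ∫⁻ ω, f (S u ω) ∂(P w)),
    ← lintegral_add_left measurable_f.lintegral_prod_right',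
    ← lintegral_const_mul' _ _ ENNReal.ofReal_ne_top]
  exact setLIntegral_mono' measurableSet_Ioc fun u hu => bridge x w u t ht hu.1.le hu.2 f

theorem IsCTSRW.exists_setLIntegral_sceneryIntegral_bridge_le (Ωz : Type*) {d : ℕ} {Ω : Type*}
    [MeasurableSpace Ω] {P : (Fin d → ℤ) → Measure Ω} {S : ℝ → Ω → (Fin d → ℤ)}
    (hS : IsCTSRW d P S) :
    ∃ C ≥ 0, ∀ t > 0, ∀ (f : ℝ → ENNReal) (z : (Fin d → ℤ) → Ωz → ℝ) (ζ : Ωz) (a : ℝ),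
      ∫⁻ ω, sceneryIntegral f z S t ζ ω ∂(P 0) ≤ ENNReal.ofReal (t ^ a) →
      ∫⁻ ω in {ω | S t ω = 0}, sceneryIntegral f z S t ζ ω ∂(P 0) ≤
        ENNReal.ofReal (C * t ^ (a - d / 2)) := by
  obtain ⟨C, hC, bridge⟩ := hS.exists_setLIntegral_lintegral_bridge_le
  refine ⟨2 * C, by positivity, fun t ht f z ζ a mean_le => ?_⟩
  calc ∫⁻ ω in {ω | S t ω = 0}, sceneryIntegral f z S t ζ ω ∂(P 0)
      ≤ ENNReal.ofReal (C * t ^ (-((d : ℝ) / 2))) *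
          (ENNReal.ofReal (t ^ a) + ENNReal.ofReal (t ^ a)) :=
        (bridge 0 0 t ht fun x => f (z x ζ)).trans
          (mul_le_mul_right (add_le_add mean_le mean_le) _)
    _ = ENNReal.ofReal (2 * C * t ^ (a - d / 2)) := by
        rw [← ENNReal.ofReal_add (by positivity) (by positivity),
          ← ENNReal.ofReal_mul (by positivity), sub_eq_add_neg _ ((d : ℝ) / 2),
          Real.rpow_add ht a]
        congr 1
        ring

section

variable {d : ℕ} {α : ℝ} {Ωz Ωw : Type*} [MeasurableSpace Ωz] [MeasurableSpace Ωw]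
  {μ : Measure Ωz} {z : (Fin d → ℤ) → Ωz → ℝ} {P : (Fin d → ℤ) → Measure Ωw}
  {S : ℝ → Ωw → (Fin d → ℤ)}

lemma lintegral_sceneryIntegral_le (hz : IsScenery d α μ z) (hS : IsCTSRW d P S)
    {f : ℝ → ENNReal} (hf : Measurable f) {b : ENNReal} (hb : ∀ x, ∫⁻ ζ, f (z x ζ) ∂μ ≤ b)
    (t : ℝ) : ∫⁻ ζ, ∫⁻ ω, sceneryIntegral f z S t ζ ω ∂(P 0) ∂μ ≤ ENNReal.ofReal t * b := by
  have := hz.prob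
  have := hS.prob 0
  have inner (ω : Ωw) : ∫⁻ ζ, sceneryIntegral f z S t ζ ω ∂μ ≤ ENNReal.ofReal t * b := by
    have measurable : Measurable fun q : Ωz × ℝ => f (z (S q.2 ω) q.1) :=
      hf.comp ((hz.measurable_comp_walk hS).comp
        ((measurable_fst.prodMk measurable_const).prodMk measurable_snd))
    calc ∫⁻ ζ, sceneryIntegral f z S t ζ ω ∂μ
        = ∫⁻ u in Ioc (0 : ℝ) t, ∫⁻ ζ, f (z (S u ω) ζ) ∂μ :=
          lintegral_lintegral_swap measurable.aemeasurable
      _ ≤ ∫⁻ _ in Ioc (0 : ℝ) t, b := lintegral_mono fun u => hb _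
      _ = ENNReal.ofReal t * b := by
          rw [setLIntegral_const, Real.volume_Ioc, sub_zero, mul_comm]
  rw [lintegral_lintegral_swap (measurable_sceneryIntegral hz hS hf t).aemeasurable]
  refine (lintegral_mono inner).trans_eq ?_
  rw [lintegral_const, measure_univ, mul_one]

lemma ae_eventually_lintegral_highPart_two_pow_le (hz : IsScenery d α μ z) (hS : IsCTSRW d P S)
    {p : ℝ} (hp : 1 ≤ p) (hpα : p < α) {δ e : ℝ} (he : 1 + (1 - δ) * (1 - p) < e) :
    ∀ᵐ ζ ∂μ, ∀ᶠ k : ℕ in atTop, ∫⁻ ω, sceneryIntegral (highPart (((2 : ℝ) ^ k) ^ (1 - δ)))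
      z S (2 * 2 ^ k) ζ ω ∂(P 0) ≤ ENNReal.ofReal (((2 : ℝ) ^ k) ^ e) := by
  have := hS.prob 0
  obtain ⟨K, -, mean_le⟩ := hz.exists_lintegral_highPart_le hp hpα
  refine ae_eventually_le_of_lintegral_le
    (b := fun k : ℕ => 2 * K * ((2 : ℝ) ^ k) ^ (1 + (1 - δ) * (1 - p) - e))
    (fun k => (measurable_sceneryIntegral hz hS (measurable_highPart _) _).lintegral_prod_right'
      |>.aemeasurable)
    (Eventually.of_forall fun k => by positivity)
    ((summable_two_pow_rpow (sub_neg.2 he)).mul_left _) (Eventually.of_forall fun k => ?_)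
  have hx : (0 : ℝ) < 2 ^ k := by positivity
  refine (lintegral_sceneryIntegral_le hz hS (measurable_highPart _)
    (mean_le _ (by positivity)) _).trans_eq ?_
  rw [← ENNReal.ofReal_mul (by positivity)]
  congr 1
  calc 2 * 2 ^ k * (K * (((2 : ℝ) ^ k) ^ (1 - δ)) ^ (1 - p))
      = 2 * K * ((2 : ℝ) ^ k) ^ (e + (1 + (1 - δ) * (1 - p) - e)) := by
        rw [add_sub_cancel, Real.rpow_add hx, Real.rpow_one, Real.rpow_mul hx.le]
        ring
    _ = _ := by rw [Real.rpow_add hx]; ring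

theorem ae_eventually_lintegral_highPart_le (hz : IsScenery d α μ z) (hS : IsCTSRW d P S)
    {p : ℝ} (hp : 1 ≤ p) (hpα : p < α) {δ e : ℝ} (hδ : δ ≤ 1)
    (he : 1 + (1 - δ) * (1 - p) < e) :
    ∀ᵐ ζ ∂μ, ∀ᶠ t : ℝ in atTop,
      ∫⁻ ω, sceneryIntegral (highPart (t ^ (1 - δ))) z S t ζ ω ∂(P 0) ≤
        ENNReal.ofReal (t ^ e) := by
  obtain ⟨e', he', hee'⟩ := exists_between he
  filter_upwards [ae_eventually_lintegral_highPart_two_pow_le hz hS hp hpα he'] with ζ hζ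
  filter_upwards [eventually_exists_two_pow_near hζ,
    eventually_mul_rpow_le_rpow (2 ^ |e'|) hee'] with t ⟨k, hk, hkt, htk⟩ ht
  have hx : (0 : ℝ) < 2 ^ k := by positivity
  have hk_rpow : ((2 : ℝ) ^ k) ^ e' ≤ 2 ^ |e'| * t ^ e' :=
    rpow_le_two_rpow_abs_mul_rpow hx (by linarith) (by linarith) htk.le e'
  refine (lintegral_mono fun ω => ?_).trans
    (hk.trans (ENNReal.ofReal_le_ofReal (hk_rpow.trans ht)))
  exact sceneryIntegral_mono hz.nonneg
    (fun r _ => highPart_anti (Real.rpow_le_rpow hx.le hkt (by linarith)) r) htk.le S ζ ω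

lemma ofReal_rwrs_le (hz : IsScenery d α μ z) (hS : IsCTSRW d P S) (T t : ℝ) (ζ : Ωz)
    (ω : Ωw) : ENNReal.ofReal (rwrs d z S t ζ ω) ≤
      sceneryIntegral (fun r => .ofReal (lowPart T r)) z S t ζ ω +
        sceneryIntegral (highPart T) z S t ζ ω := by
  have measurable : Measurable fun u => z (S u ω) ζ :=
    (hz.measurable_comp_walk hS).comp (measurable_prodMk_left (x := (ζ, ω)))
  rw [rwrs, integral_eq_lintegral_of_nonneg_ae (Eventually.of_forall fun u => hz.nonneg _ _)
    measurable.aestronglyMeasurable]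
  refine ENNReal.ofReal_toReal_le.trans ((lintegral_mono fun u =>
    ofReal_le_lowPart_add_highPart T _).trans_eq ?_)
  exact lintegral_add_right _ ((measurable_highPart T).comp measurable)

lemma measure_le_rwrs_inter_le (hz : IsScenery d α μ z) (hS : IsCTSRW d P S) (T : ℝ) (ζ : Ωz)
    {t c η : ℝ} (ht : 0 < t) (hc : 0 ≤ c) (hη : 0 < η) {B : Set Ωw} (hB : MeasurableSet B) :
    P 0 ({ω | (c + η) * t ≤ rwrs d z S t ζ ω} ∩ B) ≤
      P 0 {ω | ENNReal.ofReal (c * t) ≤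
        sceneryIntegral (fun r => .ofReal (lowPart T r)) z S t ζ ω} +
      (∫⁻ ω in B, sceneryIntegral (highPart T) z S t ζ ω ∂(P 0)) / ENNReal.ofReal (η * t) := by
  set low := sceneryIntegral (fun r => .ofReal (lowPart T r)) z S t ζ
  set high := sceneryIntegral (highPart T) z S t ζ
  have measurable_high : Measurable high :=
    (measurable_sceneryIntegral hz hS (measurable_highPart T) t).comp measurable_prodMk_left
  have subset : {ω | (c + η) * t ≤ rwrs d z S t ζ ω} ∩ B ⊆
      {ω | ENNReal.ofReal (c * t) ≤ low ω} ∪ ({ω | ENNReal.ofReal (η * t) ≤ high ω} ∩ B) := by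
    rintro ω ⟨hω, hωB⟩
    by_contra h
    simp only [mem_union, mem_inter_iff, mem_ofPred_eq, hωB, and_true, not_or, not_le] at h
    have sum_lt := ENNReal.add_lt_add h.1 h.2
    rw [← ENNReal.ofReal_add (by positivity) (by positivity), ← add_mul] at sum_lt
    exact ((ofReal_rwrs_le hz hS T t ζ ω).trans_lt sum_lt).not_ge (ENNReal.ofReal_le_ofReal hω)
  refine (measure_mono subset).trans ((measure_union_le _ _).trans ?_)
  gcongr
  rw [← Measure.restrict_apply' hB]
  exact meas_ge_le_lintegral_div measurable_high.aemeasurable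
    (ENNReal.ofReal_pos.2 (mul_pos hη ht)).ne' ENNReal.ofReal_ne_top

lemma eventually_ofReal_rpow_add_div_le {C η a b K : ℝ} (hC : 0 ≤ C) (hη : 0 < η)
    (hK : -K < b) (hab : a - 1 < b) : ∀ᶠ t : ℝ in atTop, ENNReal.ofReal (t ^ (-K)) +
      ENNReal.ofReal (C * t ^ a) / ENNReal.ofReal (η * t) ≤ ENNReal.ofReal (t ^ b) := by
  filter_upwards [eventually_mul_rpow_le_rpow 2 hK,
    eventually_mul_rpow_le_rpow (2 * (C / η)) hab, eventually_gt_atTop 0] with t h₁ h₂ ht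
  rw [← ENNReal.ofReal_div_of_pos (by positivity), mul_div_mul_comm,
    ← Real.rpow_sub_one ht.ne', ← ENNReal.ofReal_add (by positivity) (by positivity)]
  exact ENNReal.ofReal_le_ofReal (by linarith)

lemma exists_ae_eventually_lintegral_highPart_le (hz : IsScenery d α μ z) (hS : IsCTSRW d P S)
    (hα : 1 < α) {e : ℝ} (he : 2 - α < e) :
    ∃ δ ∈ Ioc (0 : ℝ) 1, ∀ᵐ ζ ∂μ, ∀ᶠ t : ℝ in atTop,
      ∫⁻ ω, sceneryIntegral (highPart (t ^ (1 - δ))) z S t ζ ω ∂(P 0) ≤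
        ENNReal.ofReal (t ^ e) := by
  obtain ⟨η, hη, rfl⟩ : ∃ η > 0, e = 2 - α + η := ⟨e - (2 - α), sub_pos.2 he, by ring⟩
  set p := max 1 (α - η / 3)
  have hp : 1 ≤ p := le_max_left _ _
  have hpα : p < α := max_lt hα (by linarith)
  set δ := min 1 (η / (3 * α))
  have hδ : 0 < δ := lt_min one_pos (by positivity)
  have hδ₁ : δ ≤ 1 := min_le_left _ _
  have hδα : δ * α ≤ η / 3 := by
    calc δ * α ≤ η / (3 * α) * α := by gcongr; exact min_le_right _ _
      _ = η / 3 := by field_simp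
  have exponent_lt : 1 + (1 - δ) * (1 - p) < 2 - α + η := by
    have : α - η / 3 ≤ p := le_max_right _ _
    nlinarith
  exact ⟨δ, ⟨hδ, hδ₁⟩, ae_eventually_lintegral_highPart_le hz hS hp hpα hδ₁ exponent_lt⟩

theorem ae_eventually_measure_le_rwrs_le (hz : IsScenery d α μ z) (hS : IsCTSRW d P S)
    (hd : 3 ≤ d) (hα : 1 < α) {c : ℝ} (hc : ∫ ζ, z 0 ζ ∂μ < c) {ε : ℝ} (hε : 0 < ε) :
    ∀ᵐ ζ ∂μ, ∀ᶠ t : ℝ in atTop,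
      P 0 {ω | c * t ≤ rwrs d z S t ζ ω} ≤ ENNReal.ofReal (t ^ (-α + 1 + ε)) ∧
      P 0 ({ω | c * t ≤ rwrs d z S t ζ ω} ∩ {ω | S t ω = 0}) ≤
        ENNReal.ofReal (t ^ (-α + 1 - d / 2 + ε)) := by
  obtain ⟨c', hc', hcc'⟩ := exists_between hc
  have hc'₀ : 0 ≤ c' := (integral_nonneg fun ζ => hz.nonneg 0 ζ).trans hc'.le
  obtain ⟨η, hη, rfl⟩ : ∃ η > 0, c = c' + η := ⟨c - c', sub_pos.2 hcc', by ring⟩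
  obtain ⟨a, ha, haε⟩ := exists_between (show 2 - α < 2 - α + ε by linarith)
  obtain ⟨δ, ⟨hδ, hδ₁⟩, high_le⟩ := exists_ae_eventually_lintegral_highPart_le hz hS hα ha
  obtain ⟨C, hC, bridge⟩ := hS.exists_setLIntegral_sceneryIntegral_bridge_le Ωz
  have : (0 : ℝ) ≤ d := d.cast_nonneg
  filter_upwards [high_le, ae_eventually_measure_le_sceneryIntegral_lowPart_le hz hS hd hα hδ
    hδ₁ hc' (show 0 ≤ α + d by positivity)] with ζ high_le low_le
  filter_upwards [low_le, high_le, eventually_gt_atTop 0,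
    eventually_ofReal_rpow_add_div_le (K := α + d) (a := a) zero_le_one hη
      (b := -α + 1 + ε) (by linarith) (by linarith),
    eventually_ofReal_rpow_add_div_le (K := α + d) (a := a - d / 2) hC hη
      (b := -α + 1 - d / 2 + ε) (by linarith) (by linarith)]
    with t low_le high_le ht sum_le bridge_sum_le
  have bound {B : Set Ωw} (hB : MeasurableSet B) :=
    measure_le_rwrs_inter_le hz hS (t ^ (1 - δ)) ζ ht hc'₀ hη hB
  constructor
  · rw [← inter_univ {ω | _ ≤ _}]
    refine (bound MeasurableSet.univ).trans (le_trans ?_ sum_le)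
    rw [Measure.restrict_univ, one_mul]
    gcongr
  · refine (bound (hS.measurableSet_eq t 0)).trans (le_trans ?_ bridge_sum_le)
    gcongr
    exact bridge t ht _ z ζ a high_le

end

/-! ### High sites of the scenery -/

/-- The lattice points of the cube `[-r, r] ^ d`, among which the walk looks for high sites. -/
noncomputable def latticeBox (d : ℕ) (r : ℝ) : Finset (Fin d → ℤ) :=
  Fintype.piFinset fun _ => Finset.Icc (-⌊r⌋) ⌊r⌋

lemma abs_le_of_mem_latticeBox {d : ℕ} {r : ℝ} {y : Fin d → ℤ} (hy : y ∈ latticeBox d r)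
    (i : Fin d) : |(y i : ℝ)| ≤ r := by
  have hi : |y i| ≤ ⌊r⌋ := abs_le.2 (Finset.mem_Icc.1 (Fintype.mem_piFinset.1 hy i))
  exact_mod_cast Int.le_floor.1 hi

lemma pow_le_card_latticeBox (d : ℕ) {r : ℝ} (hr : 0 ≤ r) :
    r ^ d ≤ (latticeBox d r).card := by
  have side : r ≤ (Finset.Icc (-⌊r⌋) ⌊r⌋).card := by
    have hfloor : (0 : ℤ) ≤ ⌊r⌋ := Int.floor_nonneg.2 hr
    have hcard : ((Finset.Icc (-⌊r⌋) ⌊r⌋).card : ℤ) = 2 * ⌊r⌋ + 1 := by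
      rw [Int.card_Icc_of_le] <;> lia
    calc r ≤ ((2 * ⌊r⌋ + 1 : ℤ) : ℝ) := by
          have : (0 : ℝ) ≤ ⌊r⌋ := by exact_mod_cast hfloor
          push_cast
          linarith [Int.lt_floor_add_one r]
      _ = _ := by rw [← hcard, Int.cast_natCast]
  rw [latticeBox, Fintype.card_piFinset, Finset.prod_const, Finset.card_univ, Fintype.card_fin]
  push_cast
  gcongr

open Classical in
/-- The sites of `Λ` at which the scenery exceeds the level `L`. -/
noncomputable def highSites {d : ℕ} {Ω : Type*} (z : (Fin d → ℤ) → Ω → ℝ)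
    (Λ : Finset (Fin d → ℤ)) (L : ℝ) (ζ : Ω) : Finset (Fin d → ℤ) :=
  Λ.filter fun y => L < z y ζ

/-- The energy of the finite set `H` for the Green kernel of the walk sampled at the integer times
before `n`; it controls the second moment of the number of visits to `H`. -/
noncomputable def greenEnergy (d n : ℕ) (H : Finset (Fin d → ℤ)) : ℝ :=
  ∑ y ∈ H, ∑ y' ∈ H, ∑ i ∈ Finset.range n, heatKernel d i y y'

section

variable {d : ℕ} {Ω : Type*} (z : (Fin d → ℤ) → Ω → ℝ) (Λ : Finset (Fin d → ℤ)) (L : ℝ) (ζ : Ω)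

lemma card_highSites_eq_sum :
    ((highSites z Λ L ζ).card : ℝ) = ∑ y ∈ Λ, {ζ | L < z y ζ}.indicator 1 ζ := by
  rw [highSites, Finset.natCast_card_filter]
  simp [indicator_apply]

lemma ofReal_greenEnergy_highSites_eq_sum (n : ℕ) :
    ENNReal.ofReal (greenEnergy d n (highSites z Λ L ζ)) =
      ∑ y ∈ Λ, ∑ y' ∈ Λ, ({ζ | L < z y ζ} ∩ {ζ | L < z y' ζ}).indicator
        (fun _ => ENNReal.ofReal (∑ i ∈ Finset.range n, heatKernel d i y y')) ζ := by
  have nonneg (y y') : 0 ≤ ∑ i ∈ Finset.range n, heatKernel d i y y' :=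
    Finset.sum_nonneg fun i _ => heatKernel_nonneg i.cast_nonneg y y'
  rw [greenEnergy, ENNReal.ofReal_sum_of_nonneg fun y _ => Finset.sum_nonneg fun _ _ => nonneg _ _,
    highSites, Finset.sum_filter]
  refine Finset.sum_congr rfl fun y _ => ?_
  rw [ENNReal.ofReal_sum_of_nonneg fun _ _ => nonneg _ _, Finset.sum_filter]
  by_cases hy : L < z y ζ <;> simp [indicator_apply, hy]

end

namespace IsScenery

variable {d : ℕ} {α : ℝ} {Ωz : Type*} [MeasurableSpace Ωz] {μ : Measure Ωz}
  {z : (Fin d → ℤ) → Ωz → ℝ}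

lemma measurableSet_lt (hz : IsScenery d α μ z) (L : ℝ) (y : Fin d → ℤ) :
    MeasurableSet {ζ | L < z y ζ} :=
  _root_.measurableSet_lt measurable_const (hz.meas y)

lemma measure_lt_eq (hz : IsScenery d α μ z) (L : ℝ) (y : Fin d → ℤ) :
    μ {ζ | L < z y ζ} = μ {ζ | L < z 0 ζ} :=
  (hz.ident y).measure_mem_eq measurableSet_Ioi

lemma measure_lt_inter_lt_eq (hz : IsScenery d α μ z) (L : ℝ) {y y' : Fin d → ℤ}
    (hy : y ≠ y') :
    μ ({ζ | L < z y ζ} ∩ {ζ | L < z y' ζ}) = μ {ζ | L < z 0 ζ} ^ 2 := by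
  rw [sq]
  nth_rw 1 [← hz.measure_lt_eq L y]
  rw [← hz.measure_lt_eq L y']
  exact (hz.indep.indepFun hy).measure_inter_preimage_eq_mul _ _ measurableSet_Ioi
    measurableSet_Ioi

lemma lintegral_indicator_lt_inter_lt (hz : IsScenery d α μ z) (L : ℝ) (y y' : Fin d → ℤ)
    {g : ℝ} (hg : 0 ≤ g) :
    ∫⁻ ζ, ({ζ | L < z y ζ} ∩ {ζ | L < z y' ζ}).indicator (fun _ => ENNReal.ofReal g) ζ ∂μ =
      ENNReal.ofReal ((if y = y' then μ.real {ζ | L < z 0 ζ} else μ.real {ζ | L < z 0 ζ} ^ 2) *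
        g) := by
  have := hz.prob
  rw [lintegral_indicator_const ((hz.measurableSet_lt L y).inter (hz.measurableSet_lt L y')),
    mul_comm, ENNReal.ofReal_mul' hg]
  congr 1
  split_ifs with h
  · rw [← h, inter_self, hz.measure_lt_eq, ofReal_measureReal]
  · rw [hz.measure_lt_inter_lt_eq L h, ENNReal.ofReal_pow measureReal_nonneg, ofReal_measureReal]

lemma measurable_card_highSites (hz : IsScenery d α μ z) (Λ : Finset (Fin d → ℤ)) (L : ℝ) :
    Measurable fun ζ => ((highSites z Λ L ζ).card : ℝ) := by
  simp_rw [card_highSites_eq_sum]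
  exact Finset.measurable_fun_sum _ fun y _ => measurable_one.indicator (hz.measurableSet_lt L y)

lemma integral_card_highSites (hz : IsScenery d α μ z) (Λ : Finset (Fin d → ℤ)) (L : ℝ) :
    ∫ ζ, ((highSites z Λ L ζ).card : ℝ) ∂μ = Λ.card * μ.real {ζ | L < z 0 ζ} := by
  have := hz.prob
  simp_rw [card_highSites_eq_sum]
  rw [integral_finsetSum _ fun y _ => (integrable_const 1).indicator (hz.measurableSet_lt L y)]
  simp [integral_indicator_one (hz.measurableSet_lt L _), measureReal_def, hz.measure_lt_eq]

lemma variance_card_highSites_le (hz : IsScenery d α μ z) (Λ : Finset (Fin d → ℤ)) (L : ℝ) :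
    Var[fun ζ => ((highSites z Λ L ζ).card : ℝ); μ] ≤ Λ.card * μ.real {ζ | L < z 0 ζ} := by
  have := hz.prob
  set X : (Fin d → ℤ) → Ωz → ℝ := fun y => {ζ | L < z y ζ}.indicator 1
  have measurable_X (y) : Measurable (X y) := measurable_one.indicator (hz.measurableSet_lt L y)
  have memLp_X (y) : MemLp (X y) 2 μ :=
    (memLp_const 1).indicator (hz.measurableSet_lt L y)
  have indep_X : (Λ : Set (Fin d → ℤ)).Pairwise fun y y' => IndepFun (X y) (X y') μ :=
    fun y _ y' _ hy => (hz.indep.indepFun hy).comp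
      (measurable_one.indicator measurableSet_Ioi) (measurable_one.indicator measurableSet_Ioi)
  have variance_X (y) : Var[X y; μ] ≤ μ.real {ζ | L < z 0 ζ} := by
    calc Var[X y; μ] ≤ ∫ ζ, (X y ^ 2) ζ ∂μ :=
          variance_le_expectation_sq (measurable_X y).aestronglyMeasurable
      _ = ∫ ζ, X y ζ ∂μ := by
          congr with ζ
          by_cases h : ζ ∈ {ζ | L < z y ζ} <;> simp [X, h]
      _ = μ.real {ζ | L < z 0 ζ} := by
          rw [integral_indicator_one (hz.measurableSet_lt L y), measureReal_def,
            hz.measure_lt_eq, measureReal_def]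
  have sum_eq : (fun ζ => ((highSites z Λ L ζ).card : ℝ)) = ∑ y ∈ Λ, X y := by
    ext ζ
    rw [card_highSites_eq_sum, Finset.sum_apply]
  rw [sum_eq, IndepFun.variance_sum (fun y _ => memLp_X y) indep_X, ← nsmul_eq_mul]
  exact Finset.sum_le_card_nsmul _ _ _ fun y _ => variance_X y

lemma measurable_greenEnergy_highSites (hz : IsScenery d α μ z) (Λ : Finset (Fin d → ℤ))
    (L : ℝ) (n : ℕ) :
    Measurable fun ζ => ENNReal.ofReal (greenEnergy d n (highSites z Λ L ζ)) := by
  simp_rw [ofReal_greenEnergy_highSites_eq_sum]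
  exact Finset.measurable_fun_sum _ fun y _ => Finset.measurable_fun_sum _ fun y' _ =>
    measurable_const.indicator ((hz.measurableSet_lt L y).inter (hz.measurableSet_lt L y'))

end IsScenery

namespace IsCTSRW

variable {d : ℕ} {Ω : Type*} [MeasurableSpace Ω] {P : (Fin d → ℤ) → Measure Ω}
  {S : ℝ → Ω → (Fin d → ℤ)}

lemma sum_heatKernel_le_one (hS : IsCTSRW d P S) {u : ℝ} (hu : 0 ≤ u)
    (Λ : Finset (Fin d → ℤ)) (x : Fin d → ℤ) : ∑ y ∈ Λ, heatKernel d u x y ≤ 1 := by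
  rw [← ENNReal.ofReal_le_one, ENNReal.ofReal_sum_of_nonneg fun y _ => heatKernel_nonneg hu x y,
    ← hS.tsum_heatKernel x hu]
  exact ENNReal.sum_le_tsum Λ

lemma sum_sum_heatKernel_le (hS : IsCTSRW d P S) (Λ : Finset (Fin d → ℤ)) (x : Fin d → ℤ)
    (n : ℕ) : ∑ y ∈ Λ, ∑ i ∈ Finset.range n, heatKernel d i x y ≤ n := by
  rw [Finset.sum_comm]
  simpa using Finset.sum_le_card_nsmul (Finset.range n) _ 1 fun i _ =>
    hS.sum_heatKernel_le_one i.cast_nonneg Λ x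

end IsCTSRW

section

variable {d : ℕ} {α : ℝ} {Ωz Ωw : Type*} [MeasurableSpace Ωz] [MeasurableSpace Ωw]
  {μ : Measure Ωz} {z : (Fin d → ℤ) → Ωz → ℝ} {P : (Fin d → ℤ) → Measure Ωw}
  {S : ℝ → Ωw → (Fin d → ℤ)}

lemma lintegral_greenEnergy_highSites_le (hz : IsScenery d α μ z) (hS : IsCTSRW d P S) {G : ℝ}
    (hG : IsGreenBound d G) (Λ : Finset (Fin d → ℤ)) (L : ℝ) (n : ℕ) :
    ∫⁻ ζ, ENNReal.ofReal (greenEnergy d n (highSites z Λ L ζ)) ∂μ ≤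
      ENNReal.ofReal (Λ.card * μ.real {ζ | L < z 0 ζ} * (G + μ.real {ζ | L < z 0 ζ} * n)) := by
  have := hz.prob
  set π := μ.real {ζ | L < z 0 ζ}
  set g : (Fin d → ℤ) → (Fin d → ℤ) → ℝ := fun y y' => ∑ i ∈ Finset.range n, heatKernel d i y y'
  have g_nonneg (y y') : 0 ≤ g y y' :=
    Finset.sum_nonneg fun i _ => heatKernel_nonneg i.cast_nonneg y y'
  have measurable_indicator (y y') :
      Measurable (({ζ | L < z y ζ} ∩ {ζ | L < z y' ζ}).indicator
        fun _ => ENNReal.ofReal (g y y')) :=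
    measurable_const.indicator ((hz.measurableSet_lt L y).inter (hz.measurableSet_lt L y'))
  have row_le (y) (hy : y ∈ Λ) :
      ∑ y' ∈ Λ, (if y = y' then π else π ^ 2) * g y y' ≤ π * (G + π * n) := by
    calc ∑ y' ∈ Λ, (if y = y' then π else π ^ 2) * g y y'
        ≤ ∑ y' ∈ Λ, ((if y = y' then π * G else 0) + π ^ 2 * g y y') := by
          refine Finset.sum_le_sum fun y' _ => ?_
          split_ifs with h
          · subst h
            exact (mul_le_mul_of_nonneg_left (hG.sum_le n y y) measureReal_nonneg).trans
              (le_add_of_nonneg_right (mul_nonneg (sq_nonneg π) (g_nonneg y y)))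
          · rw [zero_add]
      _ = π * G + π ^ 2 * ∑ y' ∈ Λ, g y y' := by
          rw [Finset.sum_add_distrib, Finset.sum_ite_eq, if_pos hy, Finset.mul_sum]
      _ ≤ π * (G + π * n) := by
          nlinarith [mul_le_mul_of_nonneg_left (hS.sum_sum_heatKernel_le Λ y n) (sq_nonneg π)]
  simp_rw [ofReal_greenEnergy_highSites_eq_sum]
  rw [lintegral_finsetSum' _ fun y _ => (Finset.measurable_fun_sum _ fun y' _ =>
    measurable_indicator y y').aemeasurable]
  simp_rw [lintegral_finsetSum' _ fun y' _ => (measurable_indicator _ y').aemeasurable]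
  calc _ = ∑ y ∈ Λ, ENNReal.ofReal (∑ y' ∈ Λ, (if y = y' then π else π ^ 2) * g y y') := by
        refine Finset.sum_congr rfl fun y _ => ?_
        rw [ENNReal.ofReal_sum_of_nonneg fun y' _ => mul_nonneg (by split_ifs <;> positivity)
          (g_nonneg y y')]
        exact Finset.sum_congr rfl fun y' _ =>
          hz.lintegral_indicator_lt_inter_lt L y y' (g_nonneg y y')
    _ ≤ ∑ _ ∈ Λ, ENNReal.ofReal (π * (G + π * n)) :=
        Finset.sum_le_sum fun y hy => ENNReal.ofReal_le_ofReal (row_le y hy)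
    _ = ENNReal.ofReal (Λ.card * π * (G + π * n)) := by
        rw [Finset.sum_const, nsmul_eq_mul, mul_assoc, ENNReal.ofReal_mul Λ.card.cast_nonneg,
          ENNReal.ofReal_natCast]

/-- The expected number of sites of the box of side `ρ * √N` whose scenery exceeds `C₀ * N`. -/
noncomputable def expectedHighSites (d : ℕ) (μ : Measure Ωz) (z : (Fin d → ℤ) → Ωz → ℝ)
    (C₀ ρ N : ℝ) : ℝ :=
  (latticeBox d (ρ * √N)).card * μ.real {ζ | C₀ * N < z 0 ζ}

lemma IsScenery.eventually_rpow_le_expectedHighSites (hz : IsScenery d α μ z) (hα : 0 < α)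
    {C₀ ρ e : ℝ} (hC₀ : 0 < C₀) (hρ : 0 < ρ) (he : e < d / 2 - α) :
    ∀ᶠ N : ℝ in atTop, N ^ e ≤ expectedHighSites d μ z C₀ ρ N := by
  obtain ⟨ε, hε, rfl⟩ : ∃ ε > 0, e = d / 2 - α - 2 * ε :=
    ⟨(d / 2 - α - e) / 2, by linarith, by ring⟩
  have tail := (tendsto_id.const_mul_atTop hC₀).eventually (hz.eventually_tail_bounds hα hε)
  filter_upwards [tail, eventually_mul_rpow_le_rpow (ρ ^ d * C₀ ^ (-α - ε))⁻¹
    (show (d / 2 - α - 2 * ε : ℝ) < d / 2 - α - ε by linarith), eventually_gt_atTop 0]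
    with N ⟨tail, _⟩ hN hN₀
  calc N ^ (d / 2 - α - 2 * ε) ≤ ρ ^ d * C₀ ^ (-α - ε) * N ^ (d / 2 - α - ε) := by
        rwa [← inv_mul_le_iff₀ (by positivity)]
    _ = (ρ * √N) ^ d * (C₀ * N) ^ (-α - ε) := by
        rw [show (d / 2 - α - ε : ℝ) = 1 / 2 * d + (-α - ε) by ring, Real.rpow_add hN₀,
          Real.rpow_mul_natCast hN₀.le, ← Real.sqrt_eq_rpow, Real.mul_rpow hC₀.le hN₀.le]
        ring
    _ ≤ expectedHighSites d μ z C₀ ρ N :=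
        mul_le_mul (pow_le_card_latticeBox d (by positivity)) tail (by positivity) (by positivity)

lemma IsScenery.lintegral_sq_card_highSites_sub_le (hz : IsScenery d α μ z) (C₀ ρ N : ℝ) :
    ∫⁻ ζ, ENNReal.ofReal (((highSites z (latticeBox d (ρ * √N)) (C₀ * N) ζ).card -
      expectedHighSites d μ z C₀ ρ N) ^ 2) ∂μ ≤
        ENNReal.ofReal (expectedHighSites d μ z C₀ ρ N) := by
  have := hz.prob
  set X : Ωz → ℝ := fun ζ => (highSites z (latticeBox d (ρ * √N)) (C₀ * N) ζ).card
  have memLp_X : MemLp X 2 μ := by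
    refine MemLp.of_bound (hz.measurable_card_highSites _ _).aestronglyMeasurable
      (latticeBox d (ρ * √N)).card (Eventually.of_forall fun ζ => ?_)
    rw [Real.norm_natCast]
    exact_mod_cast Finset.card_filter_le _ _
  calc _ = ENNReal.ofReal Var[X; μ] := by
        rw [memLp_X.ofReal_variance_eq, evariance_eq_lintegral_ofReal,
          hz.integral_card_highSites]
        rfl
    _ ≤ _ := ENNReal.ofReal_le_ofReal (hz.variance_card_highSites_le _ _)

lemma tendsto_two_pow_atTop : Tendsto (fun k : ℕ => (2 : ℝ) ^ k) atTop atTop :=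
  tendsto_pow_atTop_atTop_of_one_lt one_lt_two

lemma IsScenery.ae_eventually_half_le_card_highSites (hz : IsScenery d α μ z) (hα : 0 < α)
    (hαd : α < d / 2) {C₀ ρ : ℝ} (hC₀ : 0 < C₀) (hρ : 0 < ρ) :
    ∀ᵐ ζ ∂μ, ∀ᶠ k : ℕ in atTop, expectedHighSites d μ z C₀ ρ (2 ^ k) / 2 ≤
      (highSites z (latticeBox d (ρ * √(2 ^ k))) (C₀ * 2 ^ k) ζ).card := by
  obtain ⟨θ, hθ, hθd⟩ := exists_between (sub_pos.2 hαd)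
  set w : ℕ → ℝ := fun k => expectedHighSites d μ z C₀ ρ (2 ^ k)
  have growth : ∀ᶠ k : ℕ in atTop, ((2 : ℝ) ^ k) ^ θ ≤ w k := tendsto_two_pow_atTop.eventually
    (hz.eventually_rpow_le_expectedHighSites hα hC₀ hρ hθd)
  have pos : ∀ᶠ k : ℕ in atTop, 0 < w k := growth.mono fun k hk => hk.trans_lt' (by positivity)
  have deviation := ae_eventually_le_of_lintegral_le (μ := μ)
    (f := fun k ζ => ENNReal.ofReal
      (((highSites z (latticeBox d (ρ * √(2 ^ k))) (C₀ * 2 ^ k) ζ).card - w k) ^ 2))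
    (a := fun k => (w k / 2) ^ 2) (b := fun k => 4 * ((2 : ℝ) ^ k) ^ (-θ))
    (fun k => (((hz.measurable_card_highSites _ _).sub_const _).pow_const
      2).ennreal_ofReal.aemeasurable)
    (pos.mono fun k hk => by positivity)
    ((summable_two_pow_rpow (neg_neg_of_pos hθ)).mul_left 4) (growth.mono fun k hk => by
      refine (hz.lintegral_sq_card_highSites_sub_le C₀ ρ _).trans (ENNReal.ofReal_le_ofReal ?_)
      have hN : (0 : ℝ) < (2 ^ k) ^ θ := by positivity
      calc w k = w k * ((2 ^ k) ^ θ * (2 ^ k) ^ (-θ)) := by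
            rw [Real.rpow_neg (by positivity), mul_inv_cancel₀ hN.ne', mul_one]
        _ ≤ w k * (w k * (2 ^ k) ^ (-θ)) := by gcongr; exact hN.le.trans hk
        _ = (w k / 2) ^ 2 * (4 * (2 ^ k) ^ (-θ)) := by ring)
  filter_upwards [deviation] with ζ hζ
  filter_upwards [hζ, pos] with k hk hpos
  rw [ENNReal.ofReal_le_ofReal_iff (by positivity)] at hk
  linarith [(abs_le.1 (abs_le_of_sq_le_sq hk (by positivity))).1]

lemma IsScenery.measureReal_lt_mul_le (hz : IsScenery d α μ z) (hα : 1 < α) {C₀ N : ℝ}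
    (hC₀ : 0 < C₀) : μ.real {ζ | C₀ * N < z 0 ζ} * N ≤ (∫ ζ, z 0 ζ ∂μ) / C₀ := by
  have := hz.prob
  rcases le_or_gt N 0 with hN | hN
  · exact (mul_nonpos_of_nonneg_of_nonpos measureReal_nonneg hN).trans
      (div_nonneg (integral_nonneg (hz.nonneg 0)) hC₀.le)
  rw [le_div_iff₀ hC₀]
  calc μ.real {ζ | C₀ * N < z 0 ζ} * N * C₀ = C₀ * N * μ.real {ζ | C₀ * N < z 0 ζ} := by ring
    _ ≤ C₀ * N * μ.real {ζ | C₀ * N ≤ z 0 ζ} :=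
        mul_le_mul_of_nonneg_left (measureReal_mono fun _ => le_of_lt (α := ℝ)) (by positivity)
    _ ≤ ∫ ζ, z 0 ζ ∂μ := mul_meas_ge_le_integral_of_nonneg
        (Eventually.of_forall (hz.nonneg 0)) (hz.integrable hα 0) _

lemma ae_eventually_greenEnergy_highSites_le (hz : IsScenery d α μ z) (hS : IsCTSRW d P S)
    (hd : 3 ≤ d) (hα : 1 < α) {C₀ ρ δ : ℝ} (hC₀ : 0 < C₀) (hρ : 0 < ρ) (hδ : 0 < δ) :
    ∀ᵐ ζ ∂μ, ∀ᶠ k : ℕ in atTop,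
      greenEnergy d (2 ^ k) (highSites z (latticeBox d (ρ * √(2 ^ k))) (C₀ * 2 ^ k) ζ) ≤
        (2 ^ k) ^ δ * expectedHighSites d μ z C₀ ρ (2 ^ k) := by
  obtain ⟨G, hG⟩ := exists_isGreenBound hd
  set w : ℕ → ℝ := fun k => expectedHighSites d μ z C₀ ρ (2 ^ k)
  have pos : ∀ᶠ k : ℕ in atTop, 0 < w k :=
    (tendsto_two_pow_atTop.eventually (hz.eventually_rpow_le_expectedHighSites
      (zero_lt_one.trans hα) hC₀ hρ (sub_one_lt _))).mono fun k hk => hk.trans_lt' (by positivity)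
  have energy := ae_eventually_le_of_lintegral_le (μ := μ)
    (f := fun k ζ => ENNReal.ofReal
      (greenEnergy d (2 ^ k) (highSites z (latticeBox d (ρ * √(2 ^ k))) (C₀ * 2 ^ k) ζ)))
    (a := fun k => (2 ^ k) ^ δ * w k)
    (b := fun k => (G + (∫ ζ, z 0 ζ ∂μ) / C₀) * ((2 : ℝ) ^ k) ^ (-δ))
    (fun k => (hz.measurable_greenEnergy_highSites _ _ _).aemeasurable)
    (pos.mono fun k hk => by positivity)
    ((summable_two_pow_rpow (neg_neg_of_pos hδ)).mul_left _) (pos.mono fun k hk => by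
      refine (lintegral_greenEnergy_highSites_le hz hS hG _ _ _).trans
        (ENNReal.ofReal_le_ofReal ?_)
      calc _ ≤ w k * (G + (∫ ζ, z 0 ζ ∂μ) / C₀) := by
            push_cast
            exact mul_le_mul_of_nonneg_left
              (by gcongr; exact hz.measureReal_lt_mul_le hα hC₀) hk.le
        _ = _ := by
            rw [Real.rpow_neg (by positivity)]
            field_simp)
  filter_upwards [energy] with ζ hζ
  filter_upwards [hζ, pos] with k hk hpos
  rwa [ENNReal.ofReal_le_ofReal_iff (by positivity)] at hk

theorem ae_eventually_rpow_mul_greenEnergy_highSites_le (hz : IsScenery d α μ z)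
    (hS : IsCTSRW d P S) (hα : 1 < α) (hαd : α < d / 2) {C₀ ρ e : ℝ}
    (hC₀ : 0 < C₀) (hρ : 0 < ρ) (he : e < d / 2 - α) :
    ∀ᵐ ζ ∂μ, ∀ᶠ k : ℕ in atTop,
      (highSites z (latticeBox d (ρ * √(2 ^ k))) (C₀ * 2 ^ k) ζ).Nonempty ∧
        (2 ^ k) ^ e *
          greenEnergy d (2 ^ k) (highSites z (latticeBox d (ρ * √(2 ^ k))) (C₀ * 2 ^ k) ζ) ≤
            ((highSites z (latticeBox d (ρ * √(2 ^ k))) (C₀ * 2 ^ k) ζ).card : ℝ) ^ 2 := by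
  obtain ⟨δ, hδ, hδe⟩ : ∃ δ > 0, e + 2 * δ < d / 2 - α :=
    ⟨(d / 2 - α - e) / 4, by linarith, by linarith⟩
  have hα₀ : 0 < α := zero_lt_one.trans hα
  have hd : 2 < d := by
    have : (2 : ℝ) < d := by linarith
    exact_mod_cast this
  filter_upwards [hz.ae_eventually_half_le_card_highSites hα₀ hαd hC₀ hρ,
    ae_eventually_greenEnergy_highSites_le hz hS hd hα hC₀ hρ hδ] with ζ card energy
  filter_upwards [card, energy, tendsto_two_pow_atTop.eventually
      (hz.eventually_rpow_le_expectedHighSites hα₀ hC₀ hρ hδe),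
    tendsto_two_pow_atTop.eventually (eventually_mul_rpow_le_rpow 4 hδ)]
    with k card energy growth four_le
  set H := highSites z (latticeBox d (ρ * √(2 ^ k))) (C₀ * 2 ^ k) ζ
  set w := expectedHighSites d μ z C₀ ρ (2 ^ k)
  have hN : (0 : ℝ) < 2 ^ k := by positivity
  have w_pos : 0 < w := growth.trans_lt' (by positivity)
  refine ⟨Finset.card_pos.1 (by exact_mod_cast card.trans_lt' (half_pos w_pos)), ?_⟩
  rw [Real.rpow_zero, mul_one] at four_le
  calc (2 ^ k) ^ e * greenEnergy d (2 ^ k) H ≤ (2 ^ k) ^ e * ((2 ^ k) ^ δ * w) := by gcongr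
    _ ≤ (2 ^ k) ^ e * (((2 ^ k) ^ δ * ((2 ^ k) ^ δ / 4)) * w) := by
        gcongr
        exact le_mul_of_one_le_right (by positivity) (by linarith)
    _ = (2 ^ k) ^ (e + 2 * δ) * w / 4 := by
        rw [Real.rpow_add hN, two_mul δ, Real.rpow_add hN]
        ring
    _ ≤ (w / 2) ^ 2 := by nlinarith
    _ ≤ (H.card : ℝ) ^ 2 := by gcongr

end

/-! ### A second-moment bound for the walk to stay at a site of a given set -/

lemma sq_integral_le_integral_sq_mul_measureReal {Ω : Type*} [MeasurableSpace Ω] {μ : Measure Ω}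
    [IsFiniteMeasure μ] {X : Ω → ℝ} {U : Set Ω} (hU : MeasurableSet U) (hX : Integrable X μ)
    (hX₂ : Integrable (fun ω => X ω ^ 2) μ) (hXU : ∀ ω ∉ U, X ω = 0) :
    (∫ ω, X ω ∂μ) ^ 2 ≤ (∫ ω, X ω ^ 2 ∂μ) * μ.real U := by
  have integrable_mul (l : ℝ) : Integrable (fun ω => l * U.indicator 1 ω) μ :=
    ((integrable_const 1).indicator hU).const_mul l
  have quadratic_nonneg (l : ℝ) :
      0 ≤ μ.real U * (l * l) + -2 * (∫ ω, X ω ∂μ) * l + ∫ ω, X ω ^ 2 ∂μ := by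
    calc 0 ≤ ∫ ω, (X ω - l * U.indicator 1 ω) ^ 2 ∂μ := integral_nonneg fun ω => sq_nonneg _
      _ = ∫ ω, (l * l * U.indicator 1 ω + (-2 * l * X ω + X ω ^ 2)) ∂μ := by
          congr with ω
          by_cases hω : ω ∈ U
          · rw [indicator_of_mem hω, Pi.one_apply]
            ring
          · rw [indicator_of_notMem hω, hXU ω hω]
            ring
      _ = _ := by
          rw [integral_add (g := fun ω => -2 * l * X ω + X ω ^ 2) (integrable_mul _)
            ((hX.const_mul _).add hX₂), integral_add (hX.const_mul _) hX₂, integral_const_mul,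
            integral_const_mul, integral_indicator_one hU]
          ring
  have := discrim_le_zero quadratic_nonneg
  rw [discrim] at this
  linarith

lemma sq_sum_measureReal_le {Ω ι : Type*} [MeasurableSpace Ω] (μ : Measure Ω) [IsFiniteMeasure μ]
    (s : Finset ι) {E : ι → Set Ω} (hE : ∀ i, MeasurableSet (E i)) :
    (∑ i ∈ s, μ.real (E i)) ^ 2 ≤
      (∑ i ∈ s, ∑ j ∈ s, μ.real (E i ∩ E j)) * μ.real (⋃ i ∈ s, E i) := by
  have integrable_indicator {A : Set Ω} (hA : MeasurableSet A) :
      Integrable (A.indicator (1 : Ω → ℝ)) μ := (integrable_const 1).indicator hA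
  have hEE (i j) : MeasurableSet (E i ∩ E j) := (hE i).inter (hE j)
  have sq_sum (ω) : (∑ i ∈ s, (E i).indicator (1 : Ω → ℝ) ω) ^ 2 =
      ∑ i ∈ s, ∑ j ∈ s, (E i ∩ E j).indicator (1 : Ω → ℝ) ω := by
    simp only [sq, Finset.sum_mul_sum, inter_indicator_one, Pi.mul_apply]
  have := sq_integral_le_integral_sq_mul_measureReal (μ := μ)
    (X := fun ω => ∑ i ∈ s, (E i).indicator 1 ω) (Finset.measurableSet_biUnion s fun i _ => hE i)
    (integrable_finsetSum _ fun i _ => integrable_indicator (hE i))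
    (by
      simp_rw [sq_sum]
      exact integrable_finsetSum _ fun i _ => integrable_finsetSum _ fun j _ =>
        integrable_indicator (hEE i j))
    (fun ω hω => Finset.sum_eq_zero fun i hi =>
      indicator_of_notMem (fun h => hω (mem_biUnion (Finset.mem_coe.2 hi) h)) _)
  simp_rw [sq_sum] at this
  rw [integral_finsetSum _ fun i _ => integrable_indicator (hE i),
    integral_finsetSum _ fun i _ => integrable_finsetSum _ fun j _ =>
      integrable_indicator (hEE i j)] at this
  simp_rw [integral_finsetSum _ fun j _ => integrable_indicator (hEE _ j),
    integral_indicator_one (hE _), integral_indicator_one (hEE _ _)] at this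
  exact this

lemma sum_Ico_natDist_le {f : ℕ → ℝ} (hf : ∀ i, 0 ≤ f i) {N j : ℕ}
    (hj : j ∈ Finset.Ico N (2 * N)) :
    ∑ j' ∈ Finset.Ico N (2 * N), f (Nat.dist j j') ≤ 2 * ∑ i ∈ Finset.range N, f i := by
  rw [Finset.mem_Ico] at hj
  have sum_le {s : Finset ℕ} (hs : ∀ j' ∈ s, Nat.dist j j' < N)
      (inj : InjOn (Nat.dist j) s) : ∑ j' ∈ s, f (Nat.dist j j') ≤ ∑ i ∈ Finset.range N, f i := by
    rw [← Finset.sum_image inj]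
    exact Finset.sum_le_sum_of_subset_of_nonneg
      (Finset.image_subset_iff.2 fun j' hj' => Finset.mem_range.2 (hs j' hj')) fun i _ _ => hf i
  rw [← Finset.sum_Ico_consecutive _ hj.1 hj.2.le, two_mul (Finset.sum _ _)]
  refine add_le_add (sum_le ?_ ?_) (sum_le ?_ ?_) <;>
    simp only [Finset.mem_Ico, Finset.coe_Ico, InjOn, mem_Ico, Nat.dist] <;> lia

section

variable {d : ℕ} {Ω : Type*}

/-- The time spent at `y` during `(j, j + 1]`. -/
noncomputable def occupationTime (S : ℝ → Ω → (Fin d → ℤ)) (j : ℕ) (y : Fin d → ℤ) (ω : Ω) :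
    ENNReal :=
  volume.restrict (Ioc (j : ℝ) (j + 1)) {u | S u ω = y}

/-- The event that the walk is at `y` at time `j` and spends at least the time `κ` there during
`(j, j + 1]`. -/
def stayEvent (S : ℝ → Ω → (Fin d → ℤ)) (κ : ℝ) (j : ℕ) (y : Fin d → ℤ) : Set Ω :=
  {ω | S j ω = y ∧ ENNReal.ofReal κ ≤ occupationTime S j y ω}

lemma occupationTime_le_one (S : ℝ → Ω → (Fin d → ℤ)) (j : ℕ) (y : Fin d → ℤ) (ω : Ω) :
    occupationTime S j y ω ≤ 1 :=
  (measure_mono (subset_univ _)).trans_eq (by simp)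

variable [MeasurableSpace Ω] {P : (Fin d → ℤ) → Measure Ω} {S : ℝ → Ω → (Fin d → ℤ)}

namespace IsCTSRW

lemma measurableSet_prod_eq (hS : IsCTSRW d P S) (y : Fin d → ℤ) :
    MeasurableSet {q : Ω × ℝ | S q.2 q.1 = y} :=
  hS.meas.comp measurable_swap (measurableSet_singleton y)

lemma measurable_occupationTime (hS : IsCTSRW d P S) (j : ℕ) (y : Fin d → ℤ) :
    Measurable (occupationTime S j y) :=
  measurable_measure_prodMk_left (hS.measurableSet_prod_eq y)

lemma measurableSet_stayEvent (hS : IsCTSRW d P S) (κ : ℝ) (j : ℕ) (y : Fin d → ℤ) :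
    MeasurableSet (stayEvent S κ j y) :=
  (hS.measurableSet_eq j y).inter
    (measurableSet_le measurable_const (hS.measurable_occupationTime j y))

lemma setLIntegral_occupationTime (hS : IsCTSRW d P S) (x : Fin d → ℤ) (F : Set Ω) (j : ℕ)
    (y : Fin d → ℤ) :
    ∫⁻ ω in F, occupationTime S j y ω ∂(P x) =
      ∫⁻ u in Ioc (j : ℝ) (j + 1), P x ({ω | S u ω = y} ∩ F) := by
  have := hS.prob x
  calc ∫⁻ ω in F, occupationTime S j y ω ∂(P x)
      = (((P x).restrict F).prod (volume.restrict (Ioc (j : ℝ) (j + 1))))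
          {q | S q.2 q.1 = y} := (Measure.prod_apply (hS.measurableSet_prod_eq y)).symm
    _ = _ := by
        rw [Measure.prod_apply_symm (hS.measurableSet_prod_eq y)]
        exact lintegral_congr fun u => Measure.restrict_apply (hS.measurableSet_eq u y)

end IsCTSRW

/-- During the time window `[N, 2 * N)` the walk started at the origin spreads, on the event `B`,
over the set `Λ`: it is found at any given point of `Λ` with probability at least about `p`, and
its two-point probabilities are at most `q` times those of a walk with a given first point. -/
structure SpreadsOn (P : (Fin d → ℤ) → Measure Ω) (S : ℝ → Ω → (Fin d → ℤ)) (B : Set Ω) (N : ℕ)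
    (Λ : Finset (Fin d → ℤ)) (p q : ℝ) : Prop where
  measurableSet : MeasurableSet B
  le_measure : ∀ j ∈ Finset.Ico N (2 * N), ∀ u ∈ Ioc (j : ℝ) (j + 1), ∀ y ∈ Λ,
    p ≤ (P 0).real ({ω | S j ω = y} ∩ {ω | S u ω = y} ∩ B)
  measure_le : ∀ j ∈ Finset.Ico N (2 * N), ∀ j' ∈ Finset.Ico N (2 * N), j ≤ j' → ∀ y y',
    (P 0).real ({ω | S j ω = y} ∩ {ω | S j' ω = y'} ∩ B) ≤
      q * heatKernel d (j' - j : ℕ) y y'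

namespace SpreadsOn

variable {B : Set Ω} {N : ℕ} {Λ : Finset (Fin d → ℤ)} {p q : ℝ}

lemma measure_eq_inter_le (h : SpreadsOn P S B N Λ p q) (hq : 0 ≤ q) {j : ℕ}
    (hj : j ∈ Finset.Ico N (2 * N)) (y : Fin d → ℤ) :
    (P 0).real ({ω | S j ω = y} ∩ B) ≤ q := by
  have := h.measure_le j hj j hj le_rfl y y
  rw [inter_self] at this
  exact this.trans (mul_le_of_le_one_right hq (heatKernel_le_one (Nat.cast_nonneg _) y y))

lemma half_le_measure_stayEvent_inter (h : SpreadsOn P S B N Λ p q) (hS : IsCTSRW d P S)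
    (hp : 0 ≤ p) (hq : 0 < q) {j : ℕ} (hj : j ∈ Finset.Ico N (2 * N)) {y : Fin d → ℤ}
    (hy : y ∈ Λ) : p / 2 ≤ (P 0).real (stayEvent S (p / (2 * q)) j y ∩ B) := by
  have := hS.prob 0
  set κ := p / (2 * q)
  set F := {ω | S j ω = y} ∩ B
  set D := {ω | ENNReal.ofReal κ ≤ occupationTime S j y ω}
  have measurableSet_D : MeasurableSet D :=
    measurableSet_le measurable_const (hS.measurable_occupationTime j y)
  have mean_ge : ENNReal.ofReal p ≤ ∫⁻ ω in F, occupationTime S j y ω ∂(P 0) := by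
    rw [hS.setLIntegral_occupationTime]
    calc ENNReal.ofReal p = ∫⁻ _ in Ioc (j : ℝ) (j + 1), ENNReal.ofReal p := by simp
      _ ≤ _ := setLIntegral_mono' measurableSet_Ioc fun u hu => by
          rw [← inter_assoc, inter_comm {ω | S u ω = y}]
          exact ENNReal.ofReal_le_of_le_toReal (h.le_measure j hj u hu y hy)
  have mean_le : ∫⁻ ω in F, occupationTime S j y ω ∂(P 0) ≤
      P 0 (stayEvent S κ j y ∩ B) + ENNReal.ofReal κ * P 0 F := by
    calc _ ≤ ∫⁻ ω in F, (D.indicator 1 ω + ENNReal.ofReal κ) ∂(P 0) := by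
          refine lintegral_mono fun ω => ?_
          by_cases hω : ω ∈ D
          · rw [indicator_of_mem hω]
            exact (occupationTime_le_one S j y ω).trans le_self_add
          · exact (not_le.1 hω).le.trans le_add_self
      _ = P 0 (D ∩ F) + ENNReal.ofReal κ * P 0 F := by
          rw [lintegral_add_right _ measurable_const, lintegral_indicator_one measurableSet_D,
            Measure.restrict_apply measurableSet_D, setLIntegral_const]
      _ = _ := by
          congr 2
          rw [← inter_assoc, inter_comm D]
          rfl
  have le_add : p ≤ (P 0).real (stayEvent S κ j y ∩ B) + κ * (P 0).real F := by
    rw [← ENNReal.ofReal_le_ofReal_iff (by positivity),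
      ENNReal.ofReal_add measureReal_nonneg (by positivity), ENNReal.ofReal_mul (by positivity),
      ofReal_measureReal, ofReal_measureReal]
    exact mean_ge.trans mean_le
  have : κ * (P 0).real F ≤ p / 2 := by
    calc κ * (P 0).real F ≤ κ * q := by gcongr; exact h.measure_eq_inter_le hq.le hj y
      _ = p / 2 := by simp only [κ]; field_simp
  linarith

lemma measure_stayEvent_inter_stayEvent_le (h : SpreadsOn P S B N Λ p q) (hS : IsCTSRW d P S)
    (κ : ℝ) {j j' : ℕ} (hj : j ∈ Finset.Ico N (2 * N)) (hj' : j' ∈ Finset.Ico N (2 * N))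
    (y y' : Fin d → ℤ) :
    (P 0).real ((stayEvent S κ j y ∩ B) ∩ (stayEvent S κ j' y' ∩ B)) ≤
      q * heatKernel d (Nat.dist j j') y y' := by
  have := hS.prob 0
  wlog hjj' : j ≤ j' generalizing j j' y y'
  · rw [inter_comm, Nat.dist_comm, heatKernel_symm]
    exact this hj' hj y' y (le_of_not_ge hjj')
  rw [Nat.dist_eq_sub_of_le hjj']
  refine (measureReal_mono ?_).trans (h.measure_le j hj j' hj' hjj' y y')
  exact fun ω hω => ⟨⟨hω.1.1.1, hω.2.1.1⟩, hω.1.2⟩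

lemma sum_measure_stayEvent_inter_stayEvent_le (h : SpreadsOn P S B N Λ p q) (hS : IsCTSRW d P S)
    (hq : 0 ≤ q) (κ : ℝ) (H : Finset (Fin d → ℤ)) :
    ∑ i ∈ Finset.Ico N (2 * N) ×ˢ H, ∑ i' ∈ Finset.Ico N (2 * N) ×ˢ H,
        (P 0).real ((stayEvent S κ i.1 i.2 ∩ B) ∩ (stayEvent S κ i'.1 i'.2 ∩ B)) ≤
      N * (2 * q * greenEnergy d N H) := by
  have card_Ico : ((Finset.Ico N (2 * N)).card : ℝ) = N := by simp [two_mul]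
  have row_le (j) (hj : j ∈ Finset.Ico N (2 * N)) (y y') : ∑ j' ∈ Finset.Ico N (2 * N),
      (P 0).real ((stayEvent S κ j y ∩ B) ∩ (stayEvent S κ j' y' ∩ B)) ≤
        2 * q * ∑ i ∈ Finset.range N, heatKernel d i y y' := by
    calc _ ≤ ∑ j' ∈ Finset.Ico N (2 * N), q * heatKernel d (Nat.dist j j') y y' :=
          Finset.sum_le_sum fun j' hj' =>
            h.measure_stayEvent_inter_stayEvent_le hS κ hj hj' y y'
      _ ≤ q * (2 * ∑ i ∈ Finset.range N, heatKernel d i y y') := by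
          rw [← Finset.mul_sum]
          gcongr
          exact sum_Ico_natDist_le (f := fun i => heatKernel d i y y')
            (fun i => heatKernel_nonneg i.cast_nonneg y y') hj
      _ = _ := by ring
  rw [Finset.sum_product]
  calc _ ≤ (Finset.Ico N (2 * N)).card • (2 * q * greenEnergy d N H) := by
        refine Finset.sum_le_card_nsmul _ _ _ fun j hj => ?_
        rw [greenEnergy, Finset.mul_sum]
        refine Finset.sum_le_sum fun y _ => ?_
        rw [Finset.sum_product_right, Finset.mul_sum]
        exact Finset.sum_le_sum fun y' _ => row_le j hj y y'
    _ = _ := by rw [nsmul_eq_mul, card_Ico]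

theorem mul_sq_card_le_greenEnergy_mul (h : SpreadsOn P S B N Λ p q) (hS : IsCTSRW d P S)
    (hp : 0 ≤ p) (hq : 0 < q) {H : Finset (Fin d → ℤ)} (hH : H ⊆ Λ) :
    N * (p ^ 2 / (8 * q)) * (H.card : ℝ) ^ 2 ≤ greenEnergy d N H *
      (P 0).real (⋃ i ∈ Finset.Ico N (2 * N) ×ˢ H, stayEvent S (p / (2 * q)) i.1 i.2 ∩ B) := by
  have := hS.prob 0
  rcases N.eq_zero_or_pos with rfl | hN
  · simp [greenEnergy]
  have : (0 : ℝ) < N := by exact_mod_cast hN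
  set E : ℕ × (Fin d → ℤ) → Set Ω := fun i => stayEvent S (p / (2 * q)) i.1 i.2 ∩ B
  set I := Finset.Ico N (2 * N) ×ˢ H
  have card_I : (I.card : ℝ) = N * H.card := by simp [I, two_mul]
  have first_moment : N * H.card * (p / 2) ≤ ∑ i ∈ I, (P 0).real (E i) := by
    rw [← card_I, ← nsmul_eq_mul]
    refine Finset.card_nsmul_le_sum _ _ _ fun i hi => ?_
    rw [Finset.mem_product] at hi
    exact h.half_le_measure_stayEvent_inter hS hp hq hi.1 (hH hi.2)
  have second_moment : ∑ i ∈ I, ∑ i' ∈ I, (P 0).real (E i ∩ E i') ≤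
      N * (2 * q * greenEnergy d N H) :=
    h.sum_measure_stayEvent_inter_stayEvent_le hS hq.le _ H
  rw [← mul_le_mul_iff_right₀ (show 0 < N * (2 * q) by positivity)]
  calc _ = (N * H.card * (p / 2)) ^ 2 := by field_simp; ring
    _ ≤ (∑ i ∈ I, (P 0).real (E i)) ^ 2 := by gcongr
    _ ≤ (∑ i ∈ I, ∑ i' ∈ I, (P 0).real (E i ∩ E i')) * (P 0).real (⋃ i ∈ I, E i) :=
        sq_sum_measureReal_le (P 0) _ fun i =>
          (hS.measurableSet_stayEvent _ i.1 i.2).inter h.measurableSet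
    _ ≤ N * (2 * q * greenEnergy d N H) * (P 0).real (⋃ i ∈ I, E i) := by gcongr
    _ = _ := by ring

end SpreadsOn

end

/-! ### The lower bound -/

/-- Uniform bounds at scale `N` on the heat kernel: `up` bounds it at all times after `N`, and `lo`
bounds from below its values between the origin and the points of `Λ` at times in `[N, 8 * N]`. -/
structure HeatKernelWindow (d : ℕ) (Λ : Finset (Fin d → ℤ)) (N lo up : ℝ) : Prop where
  le_up : ∀ s, N ≤ s → ∀ x y, heatKernel d s x y ≤ up
  lo_le : ∀ s ∈ Icc N (8 * N), ∀ y ∈ Λ, lo ≤ heatKernel d s 0 y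

theorem exists_heatKernelWindow (d : ℕ) : ∃ ρ > 0, ∃ a > 0, ∃ b > 0, ∀ N : ℝ, 1 ≤ N →
    HeatKernelWindow d (latticeBox d (ρ * √N)) N (a * N ^ (-((d : ℝ) / 2)))
      (b * N ^ (-((d : ℝ) / 2))) := by
  obtain ⟨C, hC, heatKernel_le⟩ := exists_heatKernel_le d
  obtain ⟨c, hc, ρ, hρ, le_heatKernel⟩ := exists_le_heatKernel d
  refine ⟨ρ, hρ, c * 8 ^ (-((d : ℝ) / 2)), by positivity, C, hC, fun N hN => ?_⟩
  have neg_exponent : -((d : ℝ) / 2) ≤ 0 := by simp only [Left.neg_nonpos_iff]; positivity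
  refine ⟨fun s hs x y => (heatKernel_le s (by linarith) x y).trans ?_, fun s hs y hy => ?_⟩
  · gcongr C * ?_
    exact Real.rpow_le_rpow_of_nonpos (by linarith) hs neg_exponent
  · have near (i) : |(((0 : Fin d → ℤ) i - y i : ℤ) : ℝ)| ≤ ρ * √s := by
      rw [Pi.zero_apply, zero_sub, Int.cast_neg, abs_neg]
      exact (abs_le_of_mem_latticeBox hy i).trans (by gcongr; exact hs.1)
    refine le_trans ?_ (le_heatKernel s (hN.trans hs.1) 0 y near)
    rw [mul_assoc, ← Real.mul_rpow (by norm_num) (by linarith)]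
    gcongr c * ?_
    exact Real.rpow_le_rpow_of_nonpos (by linarith [hs.1]) hs.2 neg_exponent

lemma exp_neg_le_heatKernel_sub_self {d : ℕ} {j u : ℝ} (hu : u ∈ Ioc j (j + 1))
    (y : Fin d → ℤ) : Real.exp (-(2 * d)) ≤ heatKernel d (u - j) y y := by
  refine le_trans (Real.exp_le_exp.2 ?_) (exp_neg_le_heatKernel_self (by linarith [hu.1]) y)
  rw [neg_mul, neg_le_neg_iff]
  exact mul_le_of_le_one_right (by positivity) (by linarith [hu.2])

section

variable {d : ℕ} {Ω : Type*} [MeasurableSpace Ω] {P : (Fin d → ℤ) → Measure Ω}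
  {S : ℝ → Ω → (Fin d → ℤ)} {Λ : Finset (Fin d → ℤ)} {lo up : ℝ} {N : ℕ}

namespace IsCTSRW

lemma measureReal_inter_eq (hS : IsCTSRW d P S) (x : Fin d → ℤ) {F : Set Ω} {s u : ℝ}
    {y : Fin d → ℤ} (hF : IsCylinder S F s y) (hu : s ≤ u) (v : Fin d → ℤ) :
    (P x).real (F ∩ {ω | S u ω = v}) = (P x).real F * heatKernel d (u - s) y v := by
  rw [measureReal_def, hS.measure_inter_eq x hF hu, ENNReal.toReal_mul,
    ENNReal.toReal_ofReal (heatKernel_nonneg (sub_nonneg.2 hu) y v), measureReal_def]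

lemma measureReal_eq_inter_eq (hS : IsCTSRW d P S) (x y w : Fin d → ℤ) {s u : ℝ} (hs : 0 ≤ s)
    (hu : s ≤ u) : (P x).real ({ω | S s ω = y} ∩ {ω | S u ω = w}) =
      heatKernel d s x y * heatKernel d (u - s) y w := by
  rw [hS.measureReal_inter_eq x (isCylinder_setOf_eq hs y) hu, measureReal_def,
    hS.measure_eq x y hs, ENNReal.toReal_ofReal (heatKernel_nonneg hs x y)]

lemma measureReal_eq_inter_eq_inter_eq (hS : IsCTSRW d P S) (x y w v : Fin d → ℤ) {s u t : ℝ}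
    (hs : 0 ≤ s) (hu : s ≤ u) (ht : u ≤ t) :
    (P x).real ({ω | S s ω = y} ∩ {ω | S u ω = w} ∩ {ω | S t ω = v}) =
      heatKernel d s x y * heatKernel d (u - s) y w * heatKernel d (t - u) w v := by
  rw [hS.measureReal_inter_eq x ((isCylinder_setOf_eq hs y).inter hu w) ht,
    hS.measureReal_eq_inter_eq x y w hs hu]

end IsCTSRW

namespace HeatKernelWindow

lemma spreadsOn_univ (h : HeatKernelWindow d Λ N lo up) (hS : IsCTSRW d P S) :
    SpreadsOn P S univ N Λ (Real.exp (-(2 * d)) * lo) up where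
  measurableSet := MeasurableSet.univ
  le_measure j hj u hu y hy := by
    obtain ⟨hNj, hjN⟩ := Finset.mem_Ico.1 hj
    have hNj : (N : ℝ) ≤ j := by exact_mod_cast hNj
    have hjN : (j : ℝ) ≤ 2 * N := by exact_mod_cast hjN.le
    rw [inter_univ, hS.measureReal_eq_inter_eq 0 y y j.cast_nonneg hu.1.le, mul_comm]
    exact mul_le_mul (h.lo_le j ⟨hNj, by linarith⟩ y hy) (exp_neg_le_heatKernel_sub_self hu y)
      (Real.exp_pos _).le (heatKernel_nonneg j.cast_nonneg 0 y)
  measure_le j hj j' _ hjj' y y' := by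
    have hNj : (N : ℝ) ≤ j := by exact_mod_cast (Finset.mem_Ico.1 hj).1
    rw [inter_univ, hS.measureReal_eq_inter_eq 0 y y' j.cast_nonneg (Nat.cast_le.2 hjj'),
      ← Nat.cast_sub hjj']
    exact mul_le_mul_of_nonneg_right (h.le_up j hNj 0 y)
      (heatKernel_nonneg (Nat.cast_nonneg _) y y')

lemma spreadsOn_eq_zero (h : HeatKernelWindow d Λ N lo up) (hS : IsCTSRW d P S) (hlo : 0 ≤ lo)
    {t : ℝ} (ht : t ∈ Icc (4 * (N : ℝ)) (8 * N)) :
    SpreadsOn P S {ω | S t ω = 0} N Λ (Real.exp (-(2 * d)) * lo ^ 2) (up ^ 2) where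
  measurableSet := hS.measurableSet_eq t 0
  le_measure j hj u hu y hy := by
    obtain ⟨hNj, hjN⟩ := Finset.mem_Ico.1 hj
    have hNj : (N : ℝ) ≤ j := by exact_mod_cast hNj
    have hjN : (j : ℝ) + 1 ≤ 2 * N := by exact_mod_cast hjN
    have huN : u ≤ 2 * N := hu.2.trans hjN
    have start_ge := h.lo_le j ⟨hNj, by linarith⟩ y hy
    have stay_ge := exp_neg_le_heatKernel_sub_self hu y
    have return_ge := h.lo_le (t - u) ⟨by linarith [ht.1], by linarith [ht.2, hu.1]⟩ y hy
    rw [hS.measureReal_eq_inter_eq_inter_eq 0 y y 0 j.cast_nonneg hu.1.le (by linarith [ht.1]),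
      heatKernel_symm (t - u)]
    calc Real.exp (-(2 * d)) * lo ^ 2 = lo * Real.exp (-(2 * d)) * lo := by ring
      _ ≤ _ := by
          have := hlo.trans start_ge
          have := (Real.exp_pos _).le.trans stay_ge
          gcongr
  measure_le j hj j' hj' hjj' y y' := by
    have hNj : (N : ℝ) ≤ j := by exact_mod_cast (Finset.mem_Ico.1 hj).1
    have hjN : (j' : ℝ) ≤ 2 * N := by exact_mod_cast (Finset.mem_Ico.1 hj').2.le
    have step_nonneg : 0 ≤ heatKernel d (j' - j : ℕ) y y' :=
      heatKernel_nonneg (Nat.cast_nonneg _) _ _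
    have return_nonneg : 0 ≤ heatKernel d (t - j') y' 0 :=
      heatKernel_nonneg (by linarith [ht.1]) _ _
    have start_le := h.le_up j hNj 0 y
    have return_le := h.le_up (t - j') (by linarith [ht.1]) y' 0
    rw [hS.measureReal_eq_inter_eq_inter_eq 0 y y' 0 j.cast_nonneg (Nat.cast_le.2 hjj')
      (by linarith [ht.1]), ← Nat.cast_sub hjj']
    have up_nonneg : 0 ≤ up := return_nonneg.trans return_le
    calc _ ≤ up * heatKernel d (j' - j : ℕ) y y' * up := by gcongr
      _ = _ := by ring

end HeatKernelWindow

end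

section

variable {d : ℕ} {α : ℝ} {Ωz Ωw : Type*} [MeasurableSpace Ωz] [MeasurableSpace Ωw]
  {μ : Measure Ωz} {z : (Fin d → ℤ) → Ωz → ℝ} {P : (Fin d → ℤ) → Measure Ωw}
  {S : ℝ → Ωw → (Fin d → ℤ)}

lemma ae_forall_ae_sceneryIntegral_ne_top (hz : IsScenery d α μ z) (hS : IsCTSRW d P S)
    (hα : 1 < α) :
    ∀ᵐ ζ ∂μ, ∀ n : ℕ, ∀ᵐ ω ∂(P 0), sceneryIntegral ENNReal.ofReal z S n ζ ω ≠ ⊤ := by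
  have := hS.prob 0
  rw [ae_all_iff]
  intro n
  have measurable := measurable_sceneryIntegral hz hS ENNReal.measurable_ofReal n
  have mean_ne_top : ∫⁻ ζ, ∫⁻ ω, sceneryIntegral ENNReal.ofReal z S n ζ ω ∂(P 0) ∂μ ≠ ⊤ :=
    ne_top_of_le_ne_top
      (ENNReal.mul_ne_top ENNReal.ofReal_ne_top (hz.integrable hα 0).lintegral_lt_top.ne)
      (lintegral_sceneryIntegral_le hz hS ENNReal.measurable_ofReal
        (fun x => (hz.lintegral_comp x ENNReal.measurable_ofReal).le) n)
  filter_upwards [ae_lt_top measurable.lintegral_prod_right' mean_ne_top] with ζ hζ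
  filter_upwards [ae_lt_top (measurable.comp measurable_prodMk_left) hζ.ne] with ω hω using hω.ne

lemma mul_le_rwrs_of_mem_stayEvent (hz : IsScenery d α μ z) (hS : IsCTSRW d P S) {L κ t : ℝ}
    {j : ℕ} {y : Fin d → ℤ} {ζ : Ωz} {ω : Ωw} (hL : 0 ≤ L) (hLz : L ≤ z y ζ)
    (hjt : (j : ℝ) + 1 ≤ t) (hω : ω ∈ stayEvent S κ j y)
    (hfin : sceneryIntegral ENNReal.ofReal z S t ζ ω ≠ ⊤) : L * κ ≤ rwrs d z S t ζ ω := by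
  have measurable : Measurable fun u => z (S u ω) ζ :=
    (hz.measurable_comp_walk hS).comp (measurable_prodMk_left (x := (ζ, ω)))
  rw [rwrs, integral_eq_lintegral_of_nonneg_ae (Eventually.of_forall fun u => hz.nonneg _ _)
    measurable.aestronglyMeasurable]
  refine (ENNReal.ofReal_le_iff_le_toReal hfin).1 ?_
  calc ENNReal.ofReal (L * κ) = ENNReal.ofReal L * ENNReal.ofReal κ := ENNReal.ofReal_mul hL
    _ ≤ ENNReal.ofReal L * volume.restrict (Ioc (j : ℝ) (j + 1))
          {u | ENNReal.ofReal L ≤ ENNReal.ofReal (z (S u ω) ζ)} := by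
        gcongr
        refine hω.2.trans (measure_mono fun u (hu : S u ω = y) => ?_)
        exact ENNReal.ofReal_le_ofReal (hu ▸ hLz)
    _ ≤ ∫⁻ u in Ioc (j : ℝ) (j + 1), ENNReal.ofReal (z (S u ω) ζ) :=
        mul_meas_ge_le_lintegral measurable.ennreal_ofReal _
    _ ≤ _ := lintegral_mono_set (Ioc_subset_Ioc j.cast_nonneg hjt)

lemma measure_biUnion_stayEvent_le (hz : IsScenery d α μ z) (hS : IsCTSRW d P S) {ζ : Ωz}
    (hfin : ∀ n : ℕ, ∀ᵐ ω ∂(P 0), sceneryIntegral ENNReal.ofReal z S n ζ ω ≠ ⊤) {L κ c t : ℝ}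
    {N : ℕ} (hL : 0 ≤ L) (hcL : c * t ≤ L * κ) (hNt : 2 * N ≤ t) (Λ : Finset (Fin d → ℤ))
    (B : Set Ωw) :
    (P 0).real (⋃ i ∈ Finset.Ico N (2 * N) ×ˢ highSites z Λ L ζ, stayEvent S κ i.1 i.2 ∩ B) ≤
      (P 0).real ({ω | c * t ≤ rwrs d z S t ζ ω} ∩ B) := by
  have := hS.prob 0
  refine ENNReal.toReal_mono (measure_ne_top _ _) (measure_mono_ae ?_)
  filter_upwards [hfin ⌈t⌉₊] with ω hω hmem
  obtain ⟨i, hi, hstay, hB⟩ := mem_iUnion₂.1 hmem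
  obtain ⟨hj, hy⟩ := Finset.mem_product.1 hi
  have hjN : (i.1 : ℝ) + 1 ≤ 2 * N := by exact_mod_cast (Finset.mem_Ico.1 hj).2
  refine ⟨hcL.trans (mul_le_rwrs_of_mem_stayEvent hz hS hL (Finset.mem_filter.1 hy).2.le
    (hjN.trans hNt) hstay (ne_top_of_le_ne_top hω ?_)), hB⟩
  exact sceneryIntegral_mono hz.nonneg (fun _ _ => le_rfl) (Nat.le_ceil t) S ζ ω

theorem SpreadsOn.mul_le_measure_le_rwrs_inter {B : Set Ωw} {N : ℕ} {Λ : Finset (Fin d → ℤ)}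
    {p q : ℝ} (h : SpreadsOn P S B N Λ p q) (hz : IsScenery d α μ z) (hS : IsCTSRW d P S)
    (hp : 0 < p) (hq : 0 < q) {ζ : Ωz}
    (hfin : ∀ n : ℕ, ∀ᵐ ω ∂(P 0), sceneryIntegral ENNReal.ofReal z S n ζ ω ≠ ⊤) {L c t r : ℝ}
    (hL : 0 ≤ L) (hcL : c * t ≤ L * (p / (2 * q))) (hNt : 2 * N ≤ t)
    (hH : (highSites z Λ L ζ).Nonempty)
    (henergy : r * greenEnergy d N (highSites z Λ L ζ) ≤ ((highSites z Λ L ζ).card : ℝ) ^ 2) :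
    N * (p ^ 2 / (8 * q)) * r ≤ (P 0).real ({ω | c * t ≤ rwrs d z S t ζ ω} ∩ B) := by
  rcases N.eq_zero_or_pos with rfl | hN
  · simp
  set H := highSites z Λ L ζ
  have : (0 : ℝ) < N := by exact_mod_cast hN
  have : (0 : ℝ) < H.card := by exact_mod_cast hH.card_pos
  have hHΛ : H ⊆ Λ := Finset.filter_subset _ Λ
  have second_moment := h.mul_sq_card_le_greenEnergy_mul hS hp.le hq hHΛ
  have energy_pos : 0 < greenEnergy d N H :=
    pos_of_mul_pos_left (lt_of_lt_of_le (by positivity) second_moment) measureReal_nonneg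
  refine le_trans ?_ (measure_biUnion_stayEvent_le hz hS hfin hL hcL hNt Λ B)
  rw [← mul_le_mul_iff_right₀ energy_pos]
  calc greenEnergy d N H * (N * (p ^ 2 / (8 * q)) * r)
      = N * (p ^ 2 / (8 * q)) * (r * greenEnergy d N H) := by ring
    _ ≤ N * (p ^ 2 / (8 * q)) * (H.card : ℝ) ^ 2 := by gcongr
    _ ≤ _ := second_moment

lemma eventually_rpow_le_mul_rpow {K e E : ℝ} (hK : 0 < K) (heE : e < E) :
    ∀ᶠ t : ℝ in atTop, ∀ N ∈ Icc (t / 8) (t / 4), t ^ e ≤ K * N ^ E := by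
  filter_upwards [eventually_mul_rpow_le_rpow (2 ^ |E| * 4 ^ E / K) heE,
    eventually_gt_atTop 0] with t ht_rpow ht N hN
  have hN₀ : 0 < N := lt_of_lt_of_le (by positivity) hN.1
  have compare : (t / 4) ^ E ≤ 2 ^ |E| * N ^ E :=
    rpow_le_two_rpow_abs_mul_rpow (by positivity) hN₀ (by linarith [hN.1]) (by linarith [hN.2]) E
  rw [Real.div_rpow ht.le (by norm_num), div_le_iff₀ (by positivity)] at compare
  calc t ^ e = K / (2 ^ |E| * 4 ^ E) * (2 ^ |E| * 4 ^ E / K * t ^ e) := by field_simp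
    _ ≤ K / (2 ^ |E| * 4 ^ E) * (2 ^ |E| * N ^ E * 4 ^ E) :=
        mul_le_mul_of_nonneg_left (ht_rpow.trans compare) (by positivity)
    _ = K * N ^ E := by field_simp

theorem ae_eventually_rpow_le_measure_le_rwrs_inter (hz : IsScenery d α μ z)
    (hS : IsCTSRW d P S) (hα : 1 < α) (hαd : α < d / 2) {B : ℝ → Set Ωw}
    {ρ a b v : ℝ} (hρ : 0 < ρ) (ha : 0 < a) (hb : 0 < b)
    (hB : ∀ N : ℕ, 1 ≤ N → ∀ t ∈ Icc (4 * (N : ℝ)) (8 * N), SpreadsOn P S (B t) N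
      (latticeBox d (ρ * √N)) (a * (N : ℝ) ^ (-v)) (b * (N : ℝ) ^ (-v)))
    {c e : ℝ} (hc : 0 < c) (he : e < d / 2 - α) :
    ∀ᵐ ζ ∂μ, ∀ᶠ t : ℝ in atTop,
      t ^ (1 + e - v) ≤ (P 0).real ({ω | c * t ≤ rwrs d z S t ζ ω} ∩ B t) := by
  obtain ⟨e', hee', he'⟩ := exists_between he
  -- The stay lasts `a / (2 * b)`, so this level makes its contribution at least `c * (8 * N)`
  set C₀ := 16 * b * c / a
  set E := 1 + e' - v
  have hC₀ : 0 < C₀ := by positivity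
  filter_upwards [ae_eventually_rpow_mul_greenEnergy_highSites_le hz hS hα hαd hC₀ hρ he',
    ae_forall_ae_sceneryIntegral_ne_top hz hS hα] with ζ hζ hfin
  have dyadic := (tendsto_id.atTop_div_const (by norm_num : (0 : ℝ) < 4)).eventually
    (eventually_exists_two_pow_near hζ)
  filter_upwards [dyadic, eventually_rpow_le_mul_rpow (K := a ^ 2 / (8 * b)) (by positivity)
    (show 1 + e - v < E by simp only [E]; linarith)] with t ⟨k, ⟨hH, henergy⟩, hkt, htk⟩ le_scale
  simp only [id] at hkt htk
  have hN : (0 : ℝ) < 2 ^ k := by positivity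
  have hNt : 4 * (2 : ℝ) ^ k ≤ t := by linarith
  have htN : t ≤ 8 * 2 ^ k := by linarith
  have spreads := hB (2 ^ k) Nat.one_le_two_pow t (by push_cast; exact ⟨hNt, htN⟩)
  simp only [Nat.cast_pow, Nat.cast_ofNat] at spreads
  have stay_long : c * t ≤ C₀ * 2 ^ k * (a * (2 ^ k) ^ (-v) / (2 * (b * (2 ^ k) ^ (-v)))) := by
    calc c * t ≤ c * (8 * 2 ^ k) := by gcongr
      _ = _ := by simp only [C₀]; field_simp; norm_num
  calc t ^ (1 + e - v) ≤ a ^ 2 / (8 * b) * (2 ^ k) ^ E := le_scale _ ⟨by linarith, by linarith⟩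
    _ = (2 ^ k : ℕ) * ((a * (2 ^ k) ^ (-v)) ^ 2 / (8 * (b * (2 ^ k) ^ (-v)))) * (2 ^ k) ^ e' := by
        rw [show E = 1 + e' + -v by ring, Real.rpow_add hN, Real.rpow_add hN, Real.rpow_one]
        push_cast
        field_simp
    _ ≤ _ := spreads.mul_le_measure_le_rwrs_inter hz hS (by positivity) (by positivity)
        hfin (by positivity) stay_long (by push_cast; linarith) hH henergy

theorem ae_eventually_rpow_le_measure_le_rwrs (hz : IsScenery d α μ z) (hS : IsCTSRW d P S)
    (hα : 1 < α) (hαd : α < d / 2) {c : ℝ} (hc : 0 < c) {ε : ℝ} (hε : 0 < ε) :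
    ∀ᵐ ζ ∂μ, ∀ᶠ t : ℝ in atTop,
      t ^ (-α + 1 - ε) ≤ (P 0).real {ω | c * t ≤ rwrs d z S t ζ ω} ∧
      t ^ (-α + 1 - d / 2 - ε) ≤
        (P 0).real ({ω | c * t ≤ rwrs d z S t ζ ω} ∩ {ω | S t ω = 0}) := by
  obtain ⟨ρ, hρ, a, ha, b, hb, window⟩ := exists_heatKernelWindow d
  have he : d / 2 - α - ε < d / 2 - α := sub_lt_self _ hε
  have window_nat (N : ℕ) (hN : 1 ≤ N) := window N (Nat.one_le_cast.2 hN)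
  have free := ae_eventually_rpow_le_measure_le_rwrs_inter hz hS hα hαd (B := fun _ => univ)
    (a := Real.exp (-(2 * d)) * a) (v := d / 2) hρ (by positivity) hb
    (fun N hN _ _ => by rw [mul_assoc]; exact (window_nat N hN).spreadsOn_univ hS) hc he
  have bridge := ae_eventually_rpow_le_measure_le_rwrs_inter hz hS hα hαd
    (B := fun t => {ω | S t ω = 0}) (a := Real.exp (-(2 * d)) * a ^ 2) (b := b ^ 2) (v := d)
    hρ (by positivity) (by positivity) (fun N hN t ht => by
      have sq_rpow (x : ℝ) : (x * (N : ℝ) ^ (-(d / 2 : ℝ))) ^ 2 = x ^ 2 * (N : ℝ) ^ (-(d : ℝ)) := by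
        rw [mul_pow, ← Real.rpow_mul_natCast N.cast_nonneg]
        ring_nf
      rw [mul_assoc, ← sq_rpow, ← sq_rpow]
      exact (window_nat N hN).spreadsOn_eq_zero hS (by positivity) ht) hc he
  filter_upwards [free, bridge] with ζ hfree hbridge
  filter_upwards [hfree, hbridge] with t ht_free ht_bridge
  rw [inter_univ] at ht_free
  refine ⟨?_, ?_⟩
  · convert ht_free using 2
    ring
  · convert ht_bridge using 2
    ring

end

lemma tendsto_log_div_log_of_rpow_le_of_le_rpow {p : ℝ → ℝ} {e : ℝ}
    (h : ∀ n : ℕ, ∀ᶠ t : ℝ in atTop,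
      t ^ (e - 1 / ((n : ℝ) + 1)) ≤ p t ∧ p t ≤ t ^ (e + 1 / ((n : ℝ) + 1))) :
    Tendsto (fun t => Real.log (p t) / Real.log t) atTop (nhds e) := by
  rw [Metric.tendsto_nhds]
  intro δ hδ
  obtain ⟨n, hn⟩ := exists_nat_one_div_lt hδ
  filter_upwards [h n, eventually_gt_atTop 1] with t ⟨le_p, p_le⟩ ht
  have ht₀ : 0 < t := zero_lt_one.trans ht
  have log_pos : 0 < Real.log t := Real.log_pos ht
  have le_log := Real.log_le_log (by positivity) le_p
  have log_le := Real.log_le_log (lt_of_lt_of_le (by positivity) le_p) p_le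
  rw [Real.log_rpow ht₀, ← le_div_iff₀ log_pos] at le_log
  rw [Real.log_rpow ht₀, ← div_le_iff₀ log_pos] at log_le
  rw [Real.dist_eq, abs_lt]
  constructor <;> linarith

/-- Theorem (upper deviation at the law-of-large-numbers scale, power-law regime):
for `d ≥ 3`, `1 < α < d/2` and `c > 𝔼[z(0)]`, ℙ-a.s.
`P₀(A(t) ≥ ct) = t^{-α+1+o(1)}` and `P₀(A(t) ≥ ct, S_t = 0) = t^{-α+1-d/2+o(1)}`. -/
theorem stmt2 (d : ℕ) (hd : 3 ≤ d) (α : ℝ) (hα : 1 < α) (hαd : α < d / 2)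
    {Ωz Ωw : Type*} [MeasurableSpace Ωz] [MeasurableSpace Ωw]
    (μ : Measure Ωz) (z : (Fin d → ℤ) → Ωz → ℝ) (hz : IsScenery d α μ z)
    (c : ℝ) (hc : (∫ ζ, z 0 ζ ∂ μ) < c)
    (P : (Fin d → ℤ) → Measure Ωw) (S : ℝ → Ωw → (Fin d → ℤ)) (hS : IsCTSRW d P S) :
    ∀ᵐ ζ ∂ μ,
      Tendsto
        (fun t : ℝ => Real.log ((P 0) {ω | c * t ≤ rwrs d z S t ζ ω}).toReal / Real.log t)
        atTop (nhds (-α + 1)) ∧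
      Tendsto
        (fun t : ℝ => Real.log
            ((P 0) {ω | c * t ≤ rwrs d z S t ζ ω ∧ S t ω = 0}).toReal / Real.log t)
        atTop (nhds (-α + 1 - d / 2)) := by
  have hc₀ : 0 < c := (integral_nonneg (hz.nonneg 0)).trans_lt hc
  have upper (n : ℕ) :=
    ae_eventually_measure_le_rwrs_le hz hS hd hα hc (Nat.one_div_pos_of_nat (n := n))
  have lower (n : ℕ) :=
    ae_eventually_rpow_le_measure_le_rwrs hz hS hα hαd hc₀ (Nat.one_div_pos_of_nat (n := n))
  filter_upwards [ae_all_iff.2 upper, ae_all_iff.2 lower] with ζ hupper hlower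
  refine ⟨tendsto_log_div_log_of_rpow_le_of_le_rpow fun n => ?_,
    tendsto_log_div_log_of_rpow_le_of_le_rpow fun n => ?_⟩ <;>
  filter_upwards [hupper n, hlower n, eventually_gt_atTop 0] with t ht_upper ht_lower ht
  · exact ⟨ht_lower.1, ENNReal.toReal_le_of_le_ofReal (by positivity) ht_upper.1⟩
  · exact ⟨ht_lower.2, ENNReal.toReal_le_of_le_ofReal (by positivity) ht_upper.2⟩
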